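/- In G(𝒜): if x ∈ G(𝒜) satisfies u_b(x,f₁) = e and u_b(x,f₂) = e, but x^{p₁} ≠ e and x^{p₂} ≠ e, then x = b. -/

import Mathlib

/-!
Common setup: an `L`-structure `𝒜` for a language whose symbols are enumerated
(`m`-th symbol, `m ≥ 1`, each a function or relation symbol of arity ≥ 1), and the
presented group `G(𝒜)` of Harrison-Trainor and Ho.
-/

/-- A first-order language with symbols enumerated by `ℕ` (the `m`-th symbol, for `m ≥ 1`,
is a function symbol if `isFunc m`, and a relation symbol otherwise, of arity `arity m ≥ 1`),
together with an interpretation on a domain `A`: `funcInterp m` interprets the `m`-th symbol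
when it is a function symbol, and `relInterp m` when it is a relation symbol. -/
structure IndexedStructure where
  A : Type
  arity : ℕ → ℕ
  arity_pos : ∀ m, 1 ≤ m → 1 ≤ arity m
  isFunc : ℕ → Prop
  funcInterp : ∀ m, (Fin (arity m) → A) → A
  relInterp : ∀ m, (Fin (arity m) → A) → Prop

/-- The generating set of `G(𝒜)`: one generator for each element of the domain `A`,
plus five further generators `b`, `c`, `d`, `f₁`, `f₂`. -/
inductive GenSym (A : Type) : Type
  | elt : A → GenSym A
  | b : GenSym A
  | c : GenSym A
  | d : GenSym A
  | f1 : GenSym A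
  | f2 : GenSym A

/-- `chainProd lo x y = x y^{(lo+1)²} x y^{(lo+2)²} ⋯ x y^{(lo+1000)²}`.
So `u_A = chainProd 0`, `u_b = chainProd 1000`, `u_c = chainProd 2000`,
`u_d = chainProd 3000`, and `v = chainProd 4000`. -/
def chainProd {G : Type*} [Group G] (lo : ℕ) (x y : G) : G :=
  ((List.range 1000).map fun k => x * y ^ ((lo + k + 1) ^ 2)).prod

/-- `wProd m xs y = x₁⋯xₙ y^{100m+1} x₁⋯xₙ y^{100m+2} ⋯ x₁⋯xₙ y^{100m+100}`,
i.e. the word `w_m(x₁,…,xₙ,y)`. -/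
def wProd {G : Type*} [Group G] (m : ℕ) {n : ℕ} (xs : Fin n → G) (y : G) : G :=
  ((List.range 100).map fun k => (List.ofFn xs).prod * y ^ (100 * m + k + 1)).prod

/-- The set of relators of the presentation of `G(𝒜)`. -/
def grpRels (S : IndexedStructure) (p₁ p₂ : ℕ) : Set (FreeGroup (GenSym S.A)) :=
  {FreeGroup.of GenSym.f1 ^ p₁, FreeGroup.of GenSym.f2 ^ p₂,
    chainProd 4000 (FreeGroup.of GenSym.f1) (FreeGroup.of GenSym.f2),
    chainProd 4000 (FreeGroup.of GenSym.f2) (FreeGroup.of GenSym.f1),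
    chainProd 1000 (FreeGroup.of GenSym.b) (FreeGroup.of GenSym.f1),
    chainProd 1000 (FreeGroup.of GenSym.b) (FreeGroup.of GenSym.f2),
    chainProd 2000 (FreeGroup.of GenSym.c) (FreeGroup.of GenSym.f1),
    chainProd 2000 (FreeGroup.of GenSym.c) (FreeGroup.of GenSym.f2),
    chainProd 3000 (FreeGroup.of GenSym.d) (FreeGroup.of GenSym.f1),
    chainProd 3000 (FreeGroup.of GenSym.d) (FreeGroup.of GenSym.f2)}
  ∪ {r | ∃ a : S.A,
      r = chainProd 0 (FreeGroup.of (GenSym.elt a)) (FreeGroup.of GenSym.c) ∨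
      r = chainProd 0 (FreeGroup.of (GenSym.elt a)) (FreeGroup.of GenSym.d)}
  ∪ {r | ∃ m, 1 ≤ m ∧ S.isFunc m ∧ ∃ as : Fin (S.arity m) → S.A,
      r = wProd m (fun i => FreeGroup.of (GenSym.elt (as i))) (FreeGroup.of GenSym.b) *
        (FreeGroup.of (GenSym.elt (S.funcInterp m as)))⁻¹}
  ∪ {r | ∃ m, 1 ≤ m ∧ ¬ S.isFunc m ∧ ∃ as : Fin (S.arity m) → S.A,
      S.relInterp m as ∧
      r = wProd m (fun i => FreeGroup.of (GenSym.elt (as i))) (FreeGroup.of GenSym.b)}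

/-- The group `G(𝒜)`, presented on the generators `GenSym A` with relators `grpRels`. -/
abbrev GA (S : IndexedStructure) (p₁ p₂ : ℕ) : Type :=
  PresentedGroup (grpRels S p₁ p₂)

/-- The image in `G(𝒜)` of a generator. -/
def gen (S : IndexedStructure) (p₁ p₂ : ℕ) (g : GenSym S.A) : GA S p₁ p₂ :=
  PresentedGroup.of g

/-!
Work in the Cayley tree of the free group on the generators of `G(𝒜)`. A relator spells a periodic
bi-infinite line on which it acts as a translation; distinct lines overlap in less than `1/20` of
either translation length. The windmill argument then gives a strong form of Greendlinger's lemma: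
the geodesic from `1` to a nontrivial consequence of the relators runs along `17/20` of a period of
some line.

Write `x = f ^ i * z * f ^ j` for a torsion generator `f`, with `z` a shortest word. If `z` is
empty, then `x` is a power of `f`. Otherwise `u_b(x, f)` is a product of copies of `z` separated by
powers of `f` with distinct exponents. By Greendlinger's lemma a relator runs along a long part of
this product, and as `z` is shortest, the relator contains many copies of `z` separated by these
powers. Comparing differences of consecutive exponents, the relator is `u_b(b, f)`, whence `z = b`
and `f ^ j = f ^ (-i)`. Doing this for both `f₁` and `f₂` yields
`f₁ ^ i * b * f₁ ^ (-i) = f₂ ^ j * b * f₂ ^ (-j)`, and a last application of Greendlinger's lemma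
shows that one of the two conjugating powers is trivial.
-/

namespace SmallCancellation

open FreeGroup

/-! ### The Cayley tree of a free group -/

section CommonPrefix

variable {β : Type*} [DecidableEq β]

/-- The length of the longest common prefix of two lists. -/
def commonPrefixLength : List β → List β → ℕ
  | a :: l, b :: l' => if a = b then commonPrefixLength l l' + 1 else 0
  | _, _ => 0

theorem min_commonPrefixLength_le (x y z : List β) :
    min (commonPrefixLength x y) (commonPrefixLength y z) ≤ commonPrefixLength x z := by
  induction x generalizing y z with
  | nil => simp [commonPrefixLength]
  | cons a x ih =>
    cases y with
    | nil => simp [commonPrefixLength]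
    | cons b y =>
      cases z with
      | nil => simp [commonPrefixLength]
      | cons c z =>
        have := ih y z
        simp only [commonPrefixLength]
        split_ifs <;> simp_all

theorem exists_append_commonPrefixLength (x y : List β) :
    ∃ l u v, x = l ++ u ∧ y = l ++ v ∧ l.length = commonPrefixLength x y ∧
      ∀ a ∈ u.head?, ∀ b ∈ v.head?, a ≠ b := by
  induction x generalizing y with
  | nil => exact ⟨[], [], y, by simp [commonPrefixLength]⟩
  | cons a x ih =>
    cases y with
    | nil => exact ⟨[], a :: x, [], by simp [commonPrefixLength]⟩
    | cons b y =>
      by_cases h : a = b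
      · subst h
        obtain ⟨l, u, v, hx, hy, hl, huv⟩ := ih y
        exact ⟨a :: l, u, v, by simp [← hx], by simp [← hy], by simp [commonPrefixLength, hl], huv⟩
      · exact ⟨[], a :: x, b :: y, by simp [commonPrefixLength, h]⟩

end CommonPrefix

section Tree

variable {α : Type*}

theorem isReduced_invRev {u : List (α × Bool)} (hu : IsReduced u) : IsReduced (invRev u) := by
  classical
  rw [isReduced_iff_reduce_eq] at hu ⊢
  rw [reduce_invRev, hu]

theorem isReduced_invRev_append {u v : List (α × Bool)} (hu : IsReduced u) (hv : IsReduced v)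
    (huv : ∀ a ∈ u.head?, ∀ b ∈ v.head?, a ≠ b) : IsReduced (invRev u ++ v) := by
  refine List.isChain_append.2 ⟨isReduced_invRev hu, hv, fun a ha b hb hab => ?_⟩
  have ha' : (a.1, !a.2) ∈ u.head? := by
    cases u with
    | nil => simp [invRev] at ha
    | cons c u =>
      have : (c.1, !c.2) = a := by simpa [invRev] using ha
      simp [← this]
  by_contra hne
  exact huv _ ha' b hb (Prod.ext hab (by simpa using (Bool.eq_not_of_ne hne).symm ▸ rfl))

variable [DecidableEq α]

/-- The distance in the Cayley tree of the free group. -/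
def treeDist (x y : FreeGroup α) : ℕ := (x⁻¹ * y).norm

theorem norm_mk_of_isReduced {w : List (α × Bool)} (hw : IsReduced w) :
    (mk w : FreeGroup α).norm = w.length := by
  rw [FreeGroup.norm, toWord_mk, hw.reduce_eq]

theorem norm_inv_mul_add_two_mul_commonPrefixLength (x y : FreeGroup α) :
    (x⁻¹ * y).norm + 2 * commonPrefixLength x.toWord y.toWord = x.norm + y.norm := by
  obtain ⟨l, u, v, hx, hy, hl, huv⟩ := exists_append_commonPrefixLength x.toWord y.toWord
  have hu : IsReduced u := (isReduced_toWord (x := x)).infix ⟨l, [], by simp [hx]⟩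
  have hv : IsReduced v := (isReduced_toWord (x := y)).infix ⟨l, [], by simp [hy]⟩
  have hxy : x⁻¹ * y = mk (invRev u ++ v) := by
    rw [← mk_toWord (x := x), ← mk_toWord (x := y), hx, hy]
    simp only [← mul_mk, ← inv_mk]
    group
  rw [hxy, norm_mk_of_isReduced (isReduced_invRev_append hu hv huv), ← hl, FreeGroup.norm,
    FreeGroup.norm, hx, hy]
  simp only [List.length_append, invRev_length]
  omega

@[simp]
theorem treeDist_self (x : FreeGroup α) : treeDist x x = 0 := by simp [treeDist]

theorem treeDist_comm (x y : FreeGroup α) : treeDist x y = treeDist y x := by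
  rw [treeDist, ← norm_inv_eq, mul_inv_rev, inv_inv, treeDist]

theorem treeDist_eq_zero {x y : FreeGroup α} : treeDist x y = 0 ↔ x = y := by
  rw [treeDist, FreeGroup.norm_eq_zero, inv_mul_eq_one]

@[simp]
theorem treeDist_mul_left (g x y : FreeGroup α) : treeDist (g * x) (g * y) = treeDist x y := by
  unfold treeDist
  congr 1
  group

theorem treeDist_triangle (x y z : FreeGroup α) : treeDist x z ≤ treeDist x y + treeDist y z := by
  have hxz : x⁻¹ * z = (x⁻¹ * y) * (y⁻¹ * z) := by group
  unfold treeDist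
  rw [hxz]
  exact norm_mul_le _ _

theorem treeDist_add_two_mul_commonPrefixLength (w x y : FreeGroup α) :
    treeDist x y + 2 * commonPrefixLength (w⁻¹ * x).toWord (w⁻¹ * y).toWord =
      treeDist w x + treeDist w y := by
  rw [← treeDist_mul_left w⁻¹ x y]
  exact norm_inv_mul_add_two_mul_commonPrefixLength _ _

theorem treeDist_four_point (x y z w : FreeGroup α) :
    treeDist x z + treeDist w y ≤ treeDist x y + treeDist w z ∨
      treeDist x z + treeDist w y ≤ treeDist y z + treeDist w x := by
  have hxz := treeDist_add_two_mul_commonPrefixLength w x z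
  have hxy := treeDist_add_two_mul_commonPrefixLength w x y
  have hyz := treeDist_add_two_mul_commonPrefixLength w y z
  have hmin := min_commonPrefixLength_le (w⁻¹ * x).toWord (w⁻¹ * y).toWord (w⁻¹ * z).toWord
  rw [min_le_iff] at hmin
  omega

theorem exists_treeDist_eq (x y : FreeGroup α) {k : ℕ} (hk : k ≤ treeDist x y) :
    ∃ m, treeDist x m = k ∧ treeDist m y + k = treeDist x y := by
  have hr := isReduced_toWord (x := x⁻¹ * y)
  have hmul : mk ((x⁻¹ * y).toWord.take k) * mk ((x⁻¹ * y).toWord.drop k) = x⁻¹ * y := by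
    rw [mul_mk, List.take_append_drop, mk_toWord]
  refine ⟨x * mk ((x⁻¹ * y).toWord.take k), ?_, ?_⟩
  · rw [treeDist, inv_mul_cancel_left,
      norm_mk_of_isReduced (hr.infix (List.take_prefix _ _).isInfix), List.length_take]
    exact min_eq_left hk
  · have hdrop : (x * mk ((x⁻¹ * y).toWord.take k))⁻¹ * y = mk ((x⁻¹ * y).toWord.drop k) := by
      rw [mul_inv_rev, mul_assoc, inv_mul_eq_iff_eq_mul, hmul]
    rw [treeDist, hdrop, norm_mk_of_isReduced (hr.infix (List.drop_suffix _ _).isInfix),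
      List.length_drop]
    exact Nat.sub_add_cancel hk

/-- `m` lies on the geodesic of the Cayley tree from `x` to `y`. -/
def IsBetween (x m y : FreeGroup α) : Prop := treeDist x m + treeDist m y = treeDist x y

namespace IsBetween

theorem symm {x m y : FreeGroup α} (h : IsBetween x m y) : IsBetween y m x := by
  unfold IsBetween at *
  rw [treeDist_comm y m, treeDist_comm m x, treeDist_comm y x]
  omega

theorem mul_left_iff (g : FreeGroup α) {x m y : FreeGroup α} :
    IsBetween (g * x) (g * m) (g * y) ↔ IsBetween x m y := by
  simp [IsBetween]

theorem eq_of_treeDist_eq {x m m' y : FreeGroup α} (h : IsBetween x m y) (h' : IsBetween x m' y)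
    (hm : treeDist x m = treeDist x m') : m = m' := by
  rw [← treeDist_eq_zero]
  have := treeDist_four_point x m y m'
  have := treeDist_comm m x
  have := treeDist_comm m' x
  have := treeDist_comm m' m
  unfold IsBetween at h h'
  omega

theorem or_of_isBetween {x m y : FreeGroup α} (h : IsBetween x m y) (u : FreeGroup α) :
    IsBetween x m u ∨ IsBetween u m y := by
  unfold IsBetween at *
  have := treeDist_four_point x m y u
  have := treeDist_four_point x u y m
  have := treeDist_triangle x m u
  have := treeDist_triangle u m y
  have := treeDist_triangle x u y
  have := treeDist_comm m u
  have := treeDist_comm x u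
  omega

theorem of_treeDist_le {x y g u : FreeGroup α} (hy : IsBetween x y u) (hg : IsBetween x g u)
    (hle : treeDist x y ≤ treeDist x g) : IsBetween x y g ∧ IsBetween y g u := by
  unfold IsBetween at *
  have := treeDist_four_point x y u g
  have := treeDist_triangle x y g
  have := treeDist_triangle y g u
  have := treeDist_comm g y
  have := treeDist_comm x g
  omega

end IsBetween

theorem exists_median (x y z : FreeGroup α) :
    ∃ m, IsBetween x m y ∧ IsBetween y m z ∧ IsBetween x m z := by
  have hprefix := treeDist_add_two_mul_commonPrefixLength x y z
  have hxzy := treeDist_triangle x z y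
  have hxyz := treeDist_triangle x y z
  obtain ⟨m, hxm, hmy⟩ := exists_treeDist_eq x y
    (k := commonPrefixLength (x⁻¹ * y).toWord (x⁻¹ * z).toWord)
    (by rw [treeDist_comm z y] at hxzy; omega)
  refine ⟨m, ?_⟩
  unfold IsBetween
  have := treeDist_four_point z x m y
  have := treeDist_four_point z x y m
  have := treeDist_triangle x m z
  have := treeDist_triangle y m z
  simp only [treeDist_comm z, treeDist_comm y m, treeDist_comm y x, treeDist_comm m x] at *
  omega

/-- A set of vertices of the Cayley tree that contains the geodesic between any two of its
points. -/
def IsConvex (S : Set (FreeGroup α)) : Prop :=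
  ∀ ⦃x⦄, x ∈ S → ∀ ⦃y⦄, y ∈ S → ∀ ⦃m⦄, IsBetween x m y → m ∈ S

/-- `g` is the gate of `x` on `S`: the point of `S` through which all geodesics from `x` to `S`
pass. -/
def IsGate (S : Set (FreeGroup α)) (x g : FreeGroup α) : Prop := g ∈ S ∧ ∀ w ∈ S, IsBetween x g w

theorem isGate_of_forall_treeDist_le {S : Set (FreeGroup α)} (hS : IsConvex S) {x g : FreeGroup α}
    (hg : g ∈ S) (hmin : ∀ w ∈ S, treeDist x g ≤ treeDist x w) : IsGate S x g := by
  refine ⟨hg, fun w hw => ?_⟩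
  obtain ⟨m, hxmg, hgmw, hxmw⟩ := exists_median x g w
  have hle := hmin m (hS hg hw hgmw)
  have hmg : m = g := by
    rw [← treeDist_eq_zero]
    unfold IsBetween at hxmg
    omega
  rwa [hmg] at hxmw

theorem exists_isGate {S : Set (FreeGroup α)} (hS : IsConvex S) (hne : S.Nonempty)
    (x : FreeGroup α) : ∃ g, IsGate S x g := by
  classical
  have hex : ∃ n, ∃ g ∈ S, treeDist x g = n := by
    obtain ⟨g, hg⟩ := hne
    exact ⟨_, g, hg, rfl⟩
  obtain ⟨g, hg, hxg⟩ := Nat.find_spec hex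
  exact ⟨g, isGate_of_forall_treeDist_le hS hg fun w hw => hxg ▸ Nat.find_min' hex ⟨w, hw, rfl⟩⟩

theorem treeDist_eq_add_of_isGate {S : Set (FreeGroup α)} {x w g k : FreeGroup α}
    (hg : IsGate S x g) (hk : IsGate S w k) (hne : g ≠ k) :
    treeDist x w = treeDist x g + treeDist g k + treeDist k w := by
  have hxk := hg.2 _ hk.1
  have hwg := hk.2 _ hg.1
  have hgk : treeDist g k ≠ 0 := fun h => hne (treeDist_eq_zero.1 h)
  have := treeDist_four_point x w k g
  have := treeDist_four_point w x g k
  have := treeDist_triangle x g w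
  have := treeDist_triangle g k w
  unfold IsBetween at hxk hwg
  simp only [treeDist_comm k g, treeDist_comm w g, treeDist_comm w k, treeDist_comm g x,
    treeDist_comm k x, treeDist_comm w x] at *
  omega

theorem treeDist_eq_add_of_forall_le {W L : Set (FreeGroup α)} (hW : IsConvex W) (hL : IsConvex L)
    {z y : FreeGroup α} (hz : z ∈ W) (hy : y ∈ L) (hzy : z ≠ y)
    (hmin : ∀ w ∈ W, ∀ l ∈ L, treeDist z y ≤ treeDist w l) {w l : FreeGroup α} (hw : w ∈ W)
    (hl : l ∈ L) : treeDist w l = treeDist w z + treeDist z y + treeDist y l := by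
  have hyzw : IsBetween y z w := (isGate_of_forall_treeDist_le hW hz fun w hw => by
    rw [treeDist_comm y z, treeDist_comm y w]
    exact hmin w hw y hy).2 w hw
  have hzyl : IsBetween z y l := (isGate_of_forall_treeDist_le hL hy (hmin z hz)).2 l hl
  have hzy : treeDist z y ≠ 0 := fun h => hzy (treeDist_eq_zero.1 h)
  have := treeDist_four_point y z w l
  have := treeDist_four_point y l w z
  have := treeDist_triangle w z l
  unfold IsBetween at hyzw hzyl
  simp only [treeDist_comm l, treeDist_comm y z, treeDist_comm y w, treeDist_comm w z] at *
  omega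

end Tree

/-! ### Windmills and Greendlinger's lemma -/

/-- A subset of the Cayley tree, thought of as a line, together with a group element that acts on
it as a translation of the given length. -/
structure Axis (α : Type*) where
  carrier : Set (FreeGroup α)
  translation : FreeGroup α
  length : ℕ

namespace Axis

variable {α : Type*}

/-- The image of an axis under left multiplication by `g`. -/
def translate (g : FreeGroup α) (l : Axis α) : Axis α :=
  ⟨{x | g⁻¹ * x ∈ l.carrier}, g * l.translation * g⁻¹, l.length⟩

/-- Two axes agree up to the direction of the translation. -/
structure Equivalent (l l' : Axis α) : Prop where
  carrier_eq : l.carrier = l'.carrier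
  length_eq : l.length = l'.length
  translation_eq : l'.translation = l.translation ∨ l'.translation = l.translation⁻¹

theorem Equivalent.symm {l l' : Axis α} (h : l.Equivalent l') : l'.Equivalent l := by
  refine ⟨h.carrier_eq.symm, h.length_eq.symm, ?_⟩
  rcases h.translation_eq with hc | hc <;> simp [hc]

/-- The axis has a point in `W`. -/
def Meets (l : Axis α) (W : Set (FreeGroup α)) : Prop := ∃ x ∈ l.carrier, x ∈ W

theorem mem_carrier_translate {g x : FreeGroup α} {l : Axis α} :
    x ∈ (l.translate g).carrier ↔ g⁻¹ * x ∈ l.carrier := Iff.rfl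

theorem mul_mem_carrier_translate {g x : FreeGroup α} {l : Axis α} :
    g * x ∈ (l.translate g).carrier ↔ x ∈ l.carrier := by
  rw [mem_carrier_translate, inv_mul_cancel_left]

theorem translate_translate_inv (l : Axis α) (g : FreeGroup α) :
    (l.translate g).translate g⁻¹ = l := by
  obtain ⟨S, c, n⟩ := l
  simp only [translate, mk.injEq, and_true]
  exact ⟨Set.ext fun x => by simp, by group⟩

variable [DecidableEq α]

/-- The overlap of the axis with `W` has diameter at most a tenth of the translation length. -/
def HasShortOverlap (l : Axis α) (W : Set (FreeGroup α)) : Prop :=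
  ∀ ⦃x⦄, x ∈ l.carrier → ∀ ⦃y⦄, y ∈ l.carrier → x ∈ W → y ∈ W → 20 * treeDist x y ≤ 2 * l.length

/-- `x` lies in the shadow of the axis seen from `W`: its gate on the axis is further than `1/20`
of the translation length from every point of `W` on the axis. -/
def HasInShadow (l : Axis α) (W : Set (FreeGroup α)) (x : FreeGroup α) : Prop :=
  ∃ y, IsGate l.carrier x y ∧ ∀ u ∈ l.carrier, u ∈ W → l.length < 20 * treeDist y u

end Axis

section Windmill

variable {α : Type*} [DecidableEq α]

theorem IsGate.translate {l : Axis α} {x y : FreeGroup α} (h : IsGate l.carrier x y)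
    (g : FreeGroup α) : IsGate (l.translate g).carrier (g * x) (g * y) := by
  refine ⟨Axis.mul_mem_carrier_translate.2 h.1, fun w hw => ?_⟩
  have hb := h.2 _ (Axis.mem_carrier_translate.1 hw)
  rw [← IsBetween.mul_left_iff g] at hb
  simpa using hb

/-- A family of axes, invariant under translation and covering all edges of the Cayley tree, such
that two inequivalent axes overlap in less than `1/20` of either translation length. -/
structure IsSmallCancellationSystem (𝓛 : Set (Axis α)) : Prop where
  isConvex : ∀ l ∈ 𝓛, IsConvex l.carrier
  nonempty : ∀ l ∈ 𝓛, l.carrier.Nonempty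
  length_pos : ∀ l ∈ 𝓛, 0 < l.length
  zpow_mul_mem : ∀ l ∈ 𝓛, ∀ y ∈ l.carrier, ∀ k : ℤ, l.translation ^ k * y ∈ l.carrier
  treeDist_zpow_mul : ∀ l ∈ 𝓛, ∀ y ∈ l.carrier, ∀ k : ℤ,
    treeDist y (l.translation ^ k * y) = k.natAbs * l.length
  equivalent_of_overlap : ∀ l ∈ 𝓛, ∀ l' ∈ 𝓛, ∀ x ∈ l.carrier, ∀ y ∈ l.carrier,
    x ∈ l'.carrier → y ∈ l'.carrier → l.length ≤ 20 * treeDist x y → l.Equivalent l'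
  translate_mem : ∀ l ∈ 𝓛, ∀ g, l.translate g ∈ 𝓛
  exists_edge_mem : ∀ x a, ∃ l ∈ 𝓛, x ∈ l.carrier ∧ x * of a ∈ l.carrier

/-- The conclusion of Greendlinger's lemma for `h`: the geodesic from `1` to `h` runs along an axis
of the family for at least `17/20` of its translation length. -/
def HasLongOverlap (𝓛 : Set (Axis α)) (h : FreeGroup α) : Prop :=
  ∃ l ∈ 𝓛, ∃ e ∈ l.carrier, ∃ e' ∈ l.carrier,
    treeDist 1 e + treeDist e e' + treeDist e' h = treeDist 1 h ∧
      17 * l.length ≤ 20 * treeDist e e'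

/-- A windmill: a convex set `W` invariant under a group `H` all of whose nontrivial elements
satisfy the conclusion of Greendlinger's lemma, such that every axis is either contained in `W`,
with translation in `H`, or has short overlap with `W`. -/
structure IsWindmill (𝓛 : Set (Axis α)) (W : Set (FreeGroup α)) (H : Subgroup (FreeGroup α)) :
    Prop where
  isConvex : IsConvex W
  one_mem : (1 : FreeGroup α) ∈ W
  mul_mem : ∀ h ∈ H, ∀ x ∈ W, h * x ∈ W
  subset_or_hasShortOverlap : ∀ l ∈ 𝓛,
    (l.carrier ⊆ W ∧ l.translation ∈ H) ∨ l.HasShortOverlap W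
  hasLongOverlap : ∀ h ∈ H, h ≠ 1 → HasLongOverlap 𝓛 h

/-- An axis of the family which meets `W`, with short overlap. -/
structure IsTransverse (𝓛 : Set (Axis α)) (W : Set (FreeGroup α)) (l : Axis α) : Prop where
  mem : l ∈ 𝓛
  meets : l.Meets W
  hasShortOverlap : l.HasShortOverlap W

variable {𝓛 : Set (Axis α)} {W : Set (FreeGroup α)} {H : Subgroup (FreeGroup α)}

theorem IsWindmill.subset (hW : IsWindmill 𝓛 W H) : (H : Set (FreeGroup α)) ⊆ W :=
  fun h hh => by simpa using hW.mul_mem h hh 1 hW.one_mem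

theorem Axis.Meets.translate {l : Axis α} (h : l.Meets W) (hW : IsWindmill 𝓛 W H)
    {g : FreeGroup α} (hg : g ∈ H) : (l.translate g).Meets W := by
  obtain ⟨x, hx, hxW⟩ := h
  exact ⟨g * x, mul_mem_carrier_translate.2 hx, hW.mul_mem _ hg _ hxW⟩

theorem Axis.HasInShadow.translate {l : Axis α} {x : FreeGroup α} (h : l.HasInShadow W x)
    (hW : IsWindmill 𝓛 W H) {g : FreeGroup α} (hg : g ∈ H) :
    (l.translate g).HasInShadow W (g * x) := by
  obtain ⟨y, hy, hfar⟩ := h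
  refine ⟨g * y, hy.translate g, fun u hu huW => ?_⟩
  have hlt := hfar _ hu (hW.mul_mem _ (H.inv_mem hg) _ huW)
  rw [← treeDist_mul_left g] at hlt
  simpa [Axis.translate] using hlt

theorem IsTransverse.translate (h𝓛 : IsSmallCancellationSystem 𝓛) {l : Axis α}
    (h : IsTransverse 𝓛 W l) (hW : IsWindmill 𝓛 W H) {g : FreeGroup α} (hg : g ∈ H) :
    IsTransverse 𝓛 W (l.translate g) := by
  refine ⟨h𝓛.translate_mem _ h.mem _, h.meets.translate hW hg, fun x hx y hy hxW hyW => ?_⟩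
  have hle := h.hasShortOverlap hx hy (hW.mul_mem _ (H.inv_mem hg) _ hxW)
    (hW.mul_mem _ (H.inv_mem hg) _ hyW)
  rwa [treeDist_mul_left] at hle

theorem mem_carrier_of_isGate_of_far (h𝓛 : IsSmallCancellationSystem 𝓛) (hW : IsConvex W)
    {l : Axis α} (hl : l ∈ 𝓛) (hm : l.Meets W) {x y g : FreeGroup α} (hy : IsGate l.carrier x y)
    (hfar : ∀ u ∈ l.carrier, u ∈ W → l.length < 20 * treeDist y u) (hg : IsGate W x g) :
    g ∈ l.carrier ∧ IsBetween x y g := by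
  obtain ⟨u, hu, huW⟩ := hm
  rcases le_total (treeDist x y) (treeDist x g) with hle | hle
  · obtain ⟨hxyg, hygu⟩ := (hy.2 u hu).of_treeDist_le (hg.2 u huW) hle
    exact ⟨h𝓛.isConvex l hl hy.1 hu hygu, hxyg⟩
  · obtain ⟨-, hgyu⟩ := (hg.2 u huW).of_treeDist_le (hy.2 u hu) hle
    have hlt := hfar y hy.1 (hW hg.1 huW hgyu)
    rw [treeDist_self] at hlt
    omega

theorem Axis.HasInShadow.equivalent (h𝓛 : IsSmallCancellationSystem 𝓛) (hW : IsWindmill 𝓛 W H)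
    {l l' : Axis α} (hl : l ∈ 𝓛) (hm : l.Meets W) (hl' : l' ∈ 𝓛) (hm' : l'.Meets W)
    {x : FreeGroup α} (h : l.HasInShadow W x) (h' : l'.HasInShadow W x) : l.Equivalent l' := by
  obtain ⟨y, hy, hfar⟩ := h
  obtain ⟨y', hy', hfar'⟩ := h'
  obtain ⟨g, hg⟩ := exists_isGate hW.isConvex ⟨_, hW.one_mem⟩ x
  obtain ⟨hgl, hb⟩ := mem_carrier_of_isGate_of_far h𝓛 hW.isConvex hl hm hy hfar hg
  obtain ⟨hgl', hb'⟩ := mem_carrier_of_isGate_of_far h𝓛 hW.isConvex hl' hm' hy' hfar' hg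
  rcases le_total (treeDist x y) (treeDist x y') with hle | hle
  · exact (h𝓛.equivalent_of_overlap l' hl' l hl y' hy'.1 g hgl'
      (h𝓛.isConvex l hl hy.1 hgl (hb.of_treeDist_le hb' hle).2) hgl (hfar' g hgl' hg.1).le).symm
  · exact h𝓛.equivalent_of_overlap l hl l' hl' y hy.1 g hgl
      (h𝓛.isConvex l' hl' hy'.1 hgl' (hb'.of_treeDist_le hb hle).2) hgl' (hfar g hgl hg.1).le

theorem Axis.Meets.not_hasInShadow (hW : IsConvex W) {l : Axis α} (hm : l.Meets W)
    {x : FreeGroup α} (hx : x ∈ W) : ¬ l.HasInShadow W x := by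
  rintro ⟨y, hy, hfar⟩
  obtain ⟨u, hu, huW⟩ := hm
  have hlt := hfar y hy.1 (hW hx huW (hy.2 u hu))
  rw [treeDist_self] at hlt
  omega

theorem Axis.HasInShadow.carrier_eq (h𝓛 : IsSmallCancellationSystem 𝓛) (hW : IsWindmill 𝓛 W H)
    {l l' : Axis α} (hl : l ∈ 𝓛) (hm : l.Meets W) (hl' : l' ∈ 𝓛) (hm' : l'.Meets W)
    {x : FreeGroup α} (h : l.HasInShadow W x) (hx : x ∈ l'.carrier) : l.carrier = l'.carrier := by
  obtain ⟨y, hy, hfar⟩ := h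
  obtain ⟨u, hu, huW⟩ := hm'
  obtain ⟨g, hg⟩ := exists_isGate hW.isConvex ⟨_, hW.one_mem⟩ x
  obtain ⟨hgl, hb⟩ := mem_carrier_of_isGate_of_far h𝓛 hW.isConvex hl hm hy hfar hg
  have hg' : g ∈ l'.carrier := h𝓛.isConvex l' hl' hx hu (hg.2 u huW)
  exact (h𝓛.equivalent_of_overlap l hl l' hl' y hy.1 g hgl (h𝓛.isConvex l' hl' hx hg' hb) hg'
    (hfar g hgl hg.1).le).carrier_eq

theorem IsGate.zpow_mul (h𝓛 : IsSmallCancellationSystem 𝓛) {l : Axis α} (hl : l ∈ 𝓛)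
    {q e : FreeGroup α} (he : IsGate l.carrier q e) (k : ℤ) :
    IsGate l.carrier (l.translation ^ k * q) (l.translation ^ k * e) := by
  refine ⟨h𝓛.zpow_mul_mem l hl _ he.1 k, fun w hw => ?_⟩
  have hb := he.2 _ (h𝓛.zpow_mul_mem l hl _ hw (-k))
  rw [← IsBetween.mul_left_iff (l.translation ^ k)] at hb
  simpa using hb

/-- A translation along a transverse axis throws a point outside the shadow at least
`1 - 1/20 - 2/20` of a period away from `W`. -/
theorem IsTransverse.exists_isGate_far (h𝓛 : IsSmallCancellationSystem 𝓛) {l : Axis α}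
    (h : IsTransverse 𝓛 W l) {k : ℤ} (hk : k ≠ 0) {q : FreeGroup α} (hq : ¬ l.HasInShadow W q) :
    ∃ e, IsGate l.carrier q e ∧ IsGate l.carrier (l.translation ^ k * q) (l.translation ^ k * e) ∧
      ∀ u ∈ l.carrier, u ∈ W →
        20 * treeDist e u ≤ 3 * l.length ∧
          17 * l.length ≤ 20 * treeDist (l.translation ^ k * e) u := by
  obtain ⟨e, he⟩ := exists_isGate (h𝓛.isConvex l h.mem) (h𝓛.nonempty l h.mem) q
  refine ⟨e, he, he.zpow_mul h𝓛 h.mem k, fun u hu huW => ?_⟩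
  obtain ⟨v, hv, hvW, hev⟩ : ∃ v ∈ l.carrier, v ∈ W ∧ 20 * treeDist e v ≤ l.length := by
    by_contra! hc
    exact hq ⟨e, he, hc⟩
  have hvu := h.hasShortOverlap hv hu hvW huW
  have hek := h𝓛.treeDist_zpow_mul l h.mem e he.1 k
  have hn : l.length ≤ k.natAbs * l.length := Nat.le_mul_of_pos_left _ (by omega)
  have := treeDist_triangle e v u
  have := treeDist_triangle e u (l.translation ^ k * e)
  have := treeDist_comm u (l.translation ^ k * e)
  omega

theorem IsTransverse.hasInShadow_zpow_mul (h𝓛 : IsSmallCancellationSystem 𝓛) {l : Axis α}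
    (h : IsTransverse 𝓛 W l) {k : ℤ} (hk : k ≠ 0) {q : FreeGroup α} (hq : ¬ l.HasInShadow W q) :
    l.HasInShadow W (l.translation ^ k * q) := by
  obtain ⟨e, -, he, hfar⟩ := h.exists_isGate_far h𝓛 hk hq
  refine ⟨_, he, fun u hu huW => ?_⟩
  have := hfar u hu huW
  have := h𝓛.length_pos l h.mem
  omega

/-- The points obtained from points of `B` by repeatedly translating along transverse axes, each
time from outside the shadow of the axis. -/
inductive IsLeapReachable (𝓛 : Set (Axis α)) (W B : Set (FreeGroup α)) : FreeGroup α → Prop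
  | base {p} : p ∈ B → IsLeapReachable 𝓛 W B p
  | leap {l : Axis α} {k : ℤ} {q} : IsTransverse 𝓛 W l → k ≠ 0 → IsLeapReachable 𝓛 W B q →
      ¬ l.HasInShadow W q → IsLeapReachable 𝓛 W B (l.translation ^ k * q)

/-- The condition on `B` which makes the points reachable from `B` invariant under `H` and under
the translations along transverse axes. -/
structure IsLeapBase (𝓛 : Set (Axis α)) (W : Set (FreeGroup α)) (H : Subgroup (FreeGroup α))
    (B : Set (FreeGroup α)) : Prop where
  zpow_mul_mem : ∀ l, IsTransverse 𝓛 W l → ∀ p ∈ B, l.HasInShadow W p →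
    ∀ j : ℤ, l.translation ^ j * p ∈ B
  mul_mem : ∀ h ∈ H, ∀ p ∈ B, h * p ∈ B

variable {B : Set (FreeGroup α)}

theorem IsLeapReachable.zpow_mul (h𝓛 : IsSmallCancellationSystem 𝓛) (hW : IsWindmill 𝓛 W H)
    (hB : IsLeapBase 𝓛 W H B) {p : FreeGroup α} (hp : IsLeapReachable 𝓛 W B p) {l : Axis α}
    (hl : IsTransverse 𝓛 W l) (j : ℤ) : IsLeapReachable 𝓛 W B (l.translation ^ j * p) := by
  by_cases hs : l.HasInShadow W p
  · cases hp with
    | base h => exact .base (hB.zpow_mul_mem l hl _ h hs j)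
    | @leap l' k q hl' hk hq hq' =>
      have heq := (hl'.hasInShadow_zpow_mul h𝓛 hk hq').equivalent h𝓛 hW hl'.mem hl'.meets hl.mem
        hl.meets hs
      obtain ⟨i, hi⟩ : ∃ i : ℤ,
          l.translation ^ j * (l'.translation ^ k * q) = l'.translation ^ i * q := by
        rcases heq.translation_eq with hc | hc
        · exact ⟨j + k, by rw [hc, zpow_add, mul_assoc]⟩
        · exact ⟨-j + k, by rw [hc, zpow_add, mul_assoc, inv_zpow, zpow_neg]⟩
      rw [hi]
      by_cases h0 : i = 0
      · simpa [h0] using hq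
      · exact .leap hl' h0 hq hq'
  · by_cases h0 : j = 0
    · simpa [h0] using hp
    · exact .leap hl h0 hp hs

theorem IsLeapReachable.mul_of_mem (h𝓛 : IsSmallCancellationSystem 𝓛) (hW : IsWindmill 𝓛 W H)
    (hB : IsLeapBase 𝓛 W H B) {p : FreeGroup α} (hp : IsLeapReachable 𝓛 W B p) {h : FreeGroup α}
    (hh : h ∈ H) : IsLeapReachable 𝓛 W B (h * p) := by
  induction hp with
  | base hp => exact .base (hB.mul_mem h hh _ hp)
  | @leap l k q hl hk _ hq' ih =>
    have hconj : h * (l.translation ^ k * q) = (l.translate h).translation ^ k * (h * q) := by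
      simp only [Axis.translate, conj_zpow]
      group
    rw [hconj]
    refine .leap (hl.translate h𝓛 hW hh) hk ih fun hs => hq' ?_
    have hs' := hs.translate hW (H.inv_mem hh)
    rw [Axis.translate_translate_inv] at hs'
    simpa using hs'

/-- The group generated by `H` and the translations along the axes that meet `W`. -/
def enlargedGroup (𝓛 : Set (Axis α)) (W : Set (FreeGroup α)) (H : Subgroup (FreeGroup α)) :
    Subgroup (FreeGroup α) :=
  Subgroup.closure ((H : Set (FreeGroup α)) ∪ {g | ∃ l ∈ 𝓛, l.Meets W ∧ l.translation = g})

/-- The union of `W` and of the axes that meet `W`. -/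
def star (𝓛 : Set (Axis α)) (W : Set (FreeGroup α)) : Set (FreeGroup α) :=
  {x | x ∈ W ∨ ∃ l ∈ 𝓛, l.Meets W ∧ x ∈ l.carrier}

/-- The orbit of the star of `W` under the enlarged group: the next windmill. -/
def enlargedSet (𝓛 : Set (Axis α)) (W : Set (FreeGroup α)) (H : Subgroup (FreeGroup α)) :
    Set (FreeGroup α) :=
  {x | ∃ h ∈ enlargedGroup 𝓛 W H, ∃ y ∈ star 𝓛 W, x = h * y}

theorem IsLeapReachable.mul_of_mem_enlargedGroup (h𝓛 : IsSmallCancellationSystem 𝓛)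
    (hW : IsWindmill 𝓛 W H) (hB : IsLeapBase 𝓛 W H B) {h : FreeGroup α}
    (hh : h ∈ enlargedGroup 𝓛 W H) {p : FreeGroup α} (hp : IsLeapReachable 𝓛 W B p) :
    IsLeapReachable 𝓛 W B (h * p) := by
  suffices hboth : ∀ p, IsLeapReachable 𝓛 W B p →
      IsLeapReachable 𝓛 W B (h * p) ∧ IsLeapReachable 𝓛 W B (h⁻¹ * p) from (hboth p hp).1
  unfold enlargedGroup at hh
  induction hh using Subgroup.closure_induction with
  | mem x hx =>
    intro p hp
    have of_mem (hx : x ∈ H) :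
        IsLeapReachable 𝓛 W B (x * p) ∧ IsLeapReachable 𝓛 W B (x⁻¹ * p) :=
      ⟨hp.mul_of_mem h𝓛 hW hB hx, hp.mul_of_mem h𝓛 hW hB (H.inv_mem hx)⟩
    rcases hx with hx | ⟨l, hl, hm, rfl⟩
    · exact of_mem hx
    · rcases hW.subset_or_hasShortOverlap l hl with h | h
      · exact of_mem h.2
      · have hmul := hp.zpow_mul h𝓛 hW hB ⟨hl, hm, h⟩
        exact ⟨by simpa using hmul 1, by simpa using hmul (-1)⟩
  | one => intro p hp; simpa using hp
  | mul x y _ _ hx hy =>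
    intro p hp
    rw [mul_inv_rev, mul_assoc, mul_assoc]
    exact ⟨(hx _ (hy _ hp).1).1, (hy _ (hx _ hp).2).2⟩
  | inv x _ hx => intro p hp; simpa using (hx p hp).symm

end Windmill

section EnlargedWindmill

variable {α : Type*} {𝓛 : Set (Axis α)} {W : Set (FreeGroup α)}
  {H : Subgroup (FreeGroup α)}

theorem star_subset_enlargedSet : star 𝓛 W ⊆ enlargedSet 𝓛 W H :=
  fun x hx => ⟨1, one_mem _, x, hx, by simp⟩

theorem subset_enlargedSet : W ⊆ enlargedSet 𝓛 W H :=
  fun _ hx => star_subset_enlargedSet (.inl hx)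

theorem mul_mem_enlargedSet {h x : FreeGroup α} (hh : h ∈ enlargedGroup 𝓛 W H)
    (hx : x ∈ enlargedSet 𝓛 W H) : h * x ∈ enlargedSet 𝓛 W H := by
  obtain ⟨g, hg, y, hy, rfl⟩ := hx
  exact ⟨h * g, mul_mem hh hg, y, hy, by rw [mul_assoc]⟩

theorem le_enlargedGroup : H ≤ enlargedGroup 𝓛 W H :=
  fun _ h => Subgroup.subset_closure (.inl h)

theorem translation_mem_enlargedGroup {l : Axis α} (hl : l ∈ 𝓛) (hm : l.Meets W) :
    l.translation ∈ enlargedGroup 𝓛 W H :=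
  Subgroup.subset_closure (.inr ⟨l, hl, hm, rfl⟩)

variable [DecidableEq α]

/-- The geodesic from `x` to `y` is contained in `V`. -/
def IsGeodesicIn (V : Set (FreeGroup α)) (x y : FreeGroup α) : Prop :=
  ∀ ⦃m⦄, IsBetween x m y → m ∈ V

namespace IsGeodesicIn

variable {V : Set (FreeGroup α)} {x y z : FreeGroup α}

theorem symm (h : IsGeodesicIn V x y) : IsGeodesicIn V y x := fun _ hm => h hm.symm

theorem trans (h : IsGeodesicIn V x y) (h' : IsGeodesicIn V y z) : IsGeodesicIn V x z :=
  fun _ hm => (hm.or_of_isBetween y).elim (@h _) (@h' _)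

theorem mul {h : FreeGroup α} (hh : h ∈ enlargedGroup 𝓛 W H)
    (hs : IsGeodesicIn (enlargedSet 𝓛 W H) x y) :
    IsGeodesicIn (enlargedSet 𝓛 W H) (h * x) (h * y) := by
  intro m hm
  have hb : IsBetween x (h⁻¹ * m) y := by
    rw [← IsBetween.mul_left_iff h]
    simpa using hm
  simpa using mul_mem_enlargedSet hh (hs hb)

end IsGeodesicIn

theorem IsWindmill.isGeodesicIn (hW : IsWindmill 𝓛 W H) {x y : FreeGroup α} (hx : x ∈ W)
    (hy : y ∈ W) : IsGeodesicIn (enlargedSet 𝓛 W H) x y :=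
  fun _ hm => subset_enlargedSet (hW.isConvex hx hy hm)

theorem Axis.Meets.isGeodesicIn (h𝓛 : IsSmallCancellationSystem 𝓛) {l : Axis α} (hl : l ∈ 𝓛)
    (hm : l.Meets W) {x y : FreeGroup α} (hx : x ∈ l.carrier) (hy : y ∈ l.carrier) :
    IsGeodesicIn (enlargedSet 𝓛 W H) x y :=
  fun _ h => star_subset_enlargedSet (.inr ⟨l, hl, hm, h𝓛.isConvex l hl hx hy h⟩)

theorem isGeodesicIn_one_of_mem_star (h𝓛 : IsSmallCancellationSystem 𝓛) (hW : IsWindmill 𝓛 W H)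
    {x : FreeGroup α} (hx : x ∈ star 𝓛 W) : IsGeodesicIn (enlargedSet 𝓛 W H) 1 x := by
  rcases hx with hx | ⟨l, hl, hm, hx⟩
  · exact hW.isGeodesicIn hW.one_mem hx
  · have ⟨u, hu, huW⟩ := hm
    exact (hW.isGeodesicIn hW.one_mem huW).trans (hm.isGeodesicIn h𝓛 hl hu hx)

theorem isGeodesicIn_one_of_mem_enlargedGroup (h𝓛 : IsSmallCancellationSystem 𝓛)
    (hW : IsWindmill 𝓛 W H) {h : FreeGroup α} (hh : h ∈ enlargedGroup 𝓛 W H) :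
    IsGeodesicIn (enlargedSet 𝓛 W H) 1 h := by
  have hh' := hh
  unfold enlargedGroup at hh
  induction hh using Subgroup.closure_induction with
  | mem x hx =>
    rcases hx with hx | ⟨l, hl, hm, rfl⟩
    · exact hW.isGeodesicIn hW.one_mem (hW.subset hx)
    · have ⟨u, hu, huW⟩ := hm
      have h1u : IsGeodesicIn (enlargedSet 𝓛 W H) 1 u := hW.isGeodesicIn hW.one_mem huW
      have hback := h1u.symm.mul (translation_mem_enlargedGroup hl hm)
      rw [mul_one] at hback
      exact (h1u.trans (hm.isGeodesicIn h𝓛 hl hu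
        (by simpa using h𝓛.zpow_mul_mem l hl u hu 1))).trans hback
  | one => exact hW.isGeodesicIn hW.one_mem hW.one_mem
  | mul x y hx' hy' hx hy =>
    have hmul := (hy hy').mul hx'
    rw [mul_one] at hmul
    exact (hx hx').trans hmul
  | inv x hx' hx =>
    have hmul := (hx hx').mul (inv_mem hx')
    rw [mul_one, inv_mul_cancel] at hmul
    exact hmul.symm

theorem isConvex_enlargedSet (h𝓛 : IsSmallCancellationSystem 𝓛) (hW : IsWindmill 𝓛 W H) :
    IsConvex (enlargedSet 𝓛 W H) := by
  have hone : ∀ x ∈ enlargedSet 𝓛 W H, IsGeodesicIn (enlargedSet 𝓛 W H) 1 x := by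
    rintro x ⟨h, hh, y, hy, rfl⟩
    have hmul := (isGeodesicIn_one_of_mem_star h𝓛 hW hy).mul hh
    rw [mul_one] at hmul
    exact (isGeodesicIn_one_of_mem_enlargedGroup h𝓛 hW hh).trans hmul
  exact fun x hx y hy => (hone x hx).symm.trans (hone y hy)

theorem isLeapBase_star (h𝓛 : IsSmallCancellationSystem 𝓛) (hW : IsWindmill 𝓛 W H) :
    IsLeapBase 𝓛 W H (star 𝓛 W) where
  zpow_mul_mem := by
    rintro l hl p (hp | ⟨l', hl', hm', hp⟩) hs j
    · exact absurd hs (hl.meets.not_hasInShadow hW.isConvex hp)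
    · have heq := hs.carrier_eq h𝓛 hW hl.mem hl.meets hl' hm' hp
      exact .inr ⟨l, hl.mem, hl.meets, h𝓛.zpow_mul_mem l hl.mem _ (heq ▸ hp) j⟩
  mul_mem := by
    rintro h hh p (hp | ⟨l, hl, hm, hp⟩)
    · exact .inl (hW.mul_mem h hh p hp)
    · exact .inr ⟨_, h𝓛.translate_mem l hl h, hm.translate hW hh,
        Axis.mul_mem_carrier_translate.2 hp⟩

theorem isLeapBase_subgroup (hW : IsWindmill 𝓛 W H) : IsLeapBase 𝓛 W H H where
  zpow_mul_mem _ hl _ hp hs _ :=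
    absurd hs (hl.meets.not_hasInShadow hW.isConvex (hW.subset hp))
  mul_mem _ hh _ hp := H.mul_mem hh hp

theorem isLeapReachable_of_mem_enlargedSet (h𝓛 : IsSmallCancellationSystem 𝓛)
    (hW : IsWindmill 𝓛 W H) {p : FreeGroup α} (hp : p ∈ enlargedSet 𝓛 W H) :
    IsLeapReachable 𝓛 W (star 𝓛 W) p := by
  obtain ⟨g, hg, y, hy, rfl⟩ := hp
  exact (IsLeapReachable.base hy).mul_of_mem_enlargedGroup h𝓛 hW (isLeapBase_star h𝓛 hW) hg

/-- The axis `l` is disjoint from `W`, and the pair `(z, y) ∈ W × l` realizes the distance between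
`l` and the orbit of `W` under the enlarged group. -/
structure IsClosestPair (𝓛 : Set (Axis α)) (W : Set (FreeGroup α)) (H : Subgroup (FreeGroup α))
    (l : Axis α) (z y : FreeGroup α) : Prop where
  not_meets : ¬ l.Meets W
  left_mem : z ∈ W
  right_mem : y ∈ l.carrier
  treeDist_le : ∀ g ∈ enlargedGroup 𝓛 W H, ∀ w ∈ W, ∀ p ∈ l.carrier,
    treeDist z y ≤ treeDist (g * w) p

namespace IsClosestPair

variable {l : Axis α} {y z p : FreeGroup α}

theorem treeDist_eq (h𝓛 : IsSmallCancellationSystem 𝓛) (hW : IsWindmill 𝓛 W H) (hl : l ∈ 𝓛)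
    (h : IsClosestPair 𝓛 W H l z y) {w : FreeGroup α} (hw : w ∈ W) (hp : p ∈ l.carrier) :
    treeDist w p = treeDist w z + treeDist z y + treeDist y p := by
  have hzy : z ≠ y := by
    rintro rfl
    exact h.not_meets ⟨z, h.right_mem, h.left_mem⟩
  exact treeDist_eq_add_of_forall_le hW.isConvex (h𝓛.isConvex l hl) h.left_mem h.right_mem hzy
    (fun w hw p hp => by simpa using h.treeDist_le 1 (one_mem _) w hw p hp) hw hp

theorem isBetween (h𝓛 : IsSmallCancellationSystem 𝓛) (hW : IsWindmill 𝓛 W H) (hl : l ∈ 𝓛)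
    (h : IsClosestPair 𝓛 W H l z y) (hp : p ∈ l.carrier) : IsBetween p y z := by
  have := h.treeDist_eq h𝓛 hW hl h.left_mem hp
  rw [treeDist_self] at this
  exact IsBetween.symm (by unfold IsBetween; omega)

theorem isGate (h𝓛 : IsSmallCancellationSystem 𝓛) (hW : IsWindmill 𝓛 W H) (hl : l ∈ 𝓛)
    (h : IsClosestPair 𝓛 W H l z y) (hp : p ∈ l.carrier) : IsGate W p z := by
  refine ⟨h.left_mem, fun w hw => IsBetween.symm ?_⟩
  have := h.treeDist_eq h𝓛 hW hl hw hp
  have := h.treeDist_eq h𝓛 hW hl h.left_mem hp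
  rw [treeDist_self] at this
  unfold IsBetween
  omega

theorem lt_of_overlap (h𝓛 : IsSmallCancellationSystem 𝓛) (hl : l ∈ 𝓛)
    (h : IsClosestPair 𝓛 W H l z y) {l' : Axis α} (hl' : l' ∈ 𝓛) (hm' : l'.Meets W)
    {q : FreeGroup α} (hq : q ∈ l.carrier) (hq' : q ∈ l'.carrier) (hy' : y ∈ l'.carrier) :
    20 * treeDist y q < l.length ∧ 20 * treeDist q y < l'.length := by
  obtain ⟨u, hu, huW⟩ := hm'
  constructor <;> by_contra! hc
  · have heq := h𝓛.equivalent_of_overlap l hl l' hl' y h.right_mem q hq hy' hq' hc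
    exact h.not_meets ⟨u, heq.carrier_eq ▸ hu, huW⟩
  · have heq := h𝓛.equivalent_of_overlap l' hl' l hl q hq' y hy' hq h.right_mem hc
    exact h.not_meets ⟨u, heq.carrier_eq ▸ hu, huW⟩

theorem lt_of_mem_star (h𝓛 : IsSmallCancellationSystem 𝓛) (hW : IsWindmill 𝓛 W H) (hl : l ∈ 𝓛)
    (h : IsClosestPair 𝓛 W H l z y) (hp : p ∈ l.carrier) (hpW : p ∈ star 𝓛 W) :
    20 * treeDist y p < l.length := by
  rcases hpW with hpW | ⟨l', hl', hm', hp'⟩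
  · exact absurd ⟨p, hp, hpW⟩ h.not_meets
  · have ⟨u, hu, huW⟩ := hm'
    have hy' : y ∈ l'.carrier := by
      refine h𝓛.isConvex l' hl' hu hp' ?_
      have hup := h.treeDist_eq h𝓛 hW hl huW hp
      have huy := h.treeDist_eq h𝓛 hW hl huW h.right_mem
      rw [treeDist_self] at huy
      unfold IsBetween
      omega
    exact (h.lt_of_overlap h𝓛 hl hl' hm' hp hp' hy').1

/-- The gate of such a point on `l'` is within a twentieth of the period from `y` or beyond it, so
the corresponding translate of `W` would be closer to `l` than `W`. -/
theorem zpow_mul_notMem (h𝓛 : IsSmallCancellationSystem 𝓛) (hW : IsWindmill 𝓛 W H) (hl : l ∈ 𝓛)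
    (h : IsClosestPair 𝓛 W H l z y) {l' : Axis α} (hl' : IsTransverse 𝓛 W l') {k : ℤ} (hk : k ≠ 0)
    {q : FreeGroup α} (hq : ¬ l'.HasInShadow W q) : l'.translation ^ k * q ∉ l.carrier := by
  intro hp
  obtain ⟨e, -, he, hfar⟩ := hl'.exists_isGate_far h𝓛 hk hq
  have hpos := h𝓛.length_pos l' hl'.mem
  have hpyz := h.isBetween h𝓛 hW hl hp
  obtain ⟨hzl', hpez⟩ := mem_carrier_of_isGate_of_far h𝓛 hW.isConvex hl'.mem hl'.meets he
    (fun u hu huW => by have := (hfar u hu huW).2; omega) (h.isGate h𝓛 hW hl hp)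
  obtain ⟨hez, hkez⟩ := hfar z hzl' h.left_mem
  have hmin := h.treeDist_le _ (zpow_mem (translation_mem_enlargedGroup hl'.mem hl'.meets) k) z
    h.left_mem y h.right_mem
  have hkz : treeDist (l'.translation ^ k * z) (l'.translation ^ k * e) = treeDist e z := by
    rw [treeDist_mul_left, treeDist_comm]
  have htri := treeDist_triangle (l'.translation ^ k * z) (l'.translation ^ k * e) y
  have := treeDist_comm y z
  have := treeDist_comm y (l'.translation ^ k * e)
  rcases le_total (treeDist (l'.translation ^ k * q) (l'.translation ^ k * e))
    (treeDist (l'.translation ^ k * q) y) with hle | hle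
  · obtain ⟨hpey, heyz⟩ := hpez.of_treeDist_le hpyz hle
    have hlt := (h.lt_of_overlap h𝓛 hl hl'.mem hl'.meets (h𝓛.isConvex l hl hp h.right_mem hpey)
      he.1 (h𝓛.isConvex l' hl'.mem he.1 hzl' heyz)).2
    unfold IsBetween at heyz
    omega
  · have hyez := (hpyz.of_treeDist_le hpez hle).2
    unfold IsBetween at hyez
    omega

theorem hasShortOverlap (h𝓛 : IsSmallCancellationSystem 𝓛) (hW : IsWindmill 𝓛 W H) (hl : l ∈ 𝓛)
    (h : IsClosestPair 𝓛 W H l z y) : l.HasShortOverlap (enlargedSet 𝓛 W H) := by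
  have hlt : ∀ p ∈ l.carrier, p ∈ enlargedSet 𝓛 W H → 20 * treeDist y p < l.length := by
    intro p hp hpW
    cases isLeapReachable_of_mem_enlargedSet h𝓛 hW hpW with
    | base hb => exact h.lt_of_mem_star h𝓛 hW hl hp hb
    | leap hl' hk _ hq => exact absurd hp (h.zpow_mul_notMem h𝓛 hW hl hl' hk hq)
  intro x hx x' hx' hxW hxW'
  have := hlt x hx hxW
  have := hlt x' hx' hxW'
  have := treeDist_triangle x y x'
  have := treeDist_comm x y
  omega

end IsClosestPair

theorem Axis.HasShortOverlap.of_translate {l : Axis α} {h : FreeGroup α}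
    (hh : h ∈ enlargedGroup 𝓛 W H) (hs : (l.translate h).HasShortOverlap (enlargedSet 𝓛 W H)) :
    l.HasShortOverlap (enlargedSet 𝓛 W H) := by
  intro x hx y hy hxW hyW
  have := hs (mul_mem_carrier_translate.2 hx) (mul_mem_carrier_translate.2 hy)
    (mul_mem_enlargedSet hh hxW) (mul_mem_enlargedSet hh hyW)
  rwa [treeDist_mul_left] at this

theorem exists_isClosestPair (hW : IsWindmill 𝓛 W H) {l : Axis α} (hne : l.carrier.Nonempty)
    (hmeet : ∀ h ∈ enlargedGroup 𝓛 W H, ¬ (l.translate h).Meets W) :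
    ∃ h ∈ enlargedGroup 𝓛 W H, ∃ z y, IsClosestPair 𝓛 W H (l.translate h) z y := by
  have hex : ∃ n, ∃ h ∈ enlargedGroup 𝓛 W H, ∃ w ∈ W, ∃ y ∈ (l.translate h).carrier,
      treeDist w y = n := by
    obtain ⟨y, hy⟩ := hne
    exact ⟨_, 1, one_mem _, 1, hW.one_mem, y, by simpa [Axis.mem_carrier_translate] using hy, rfl⟩
  classical
  obtain ⟨h, hh, z, hz, y, hy, hd⟩ := Nat.find_spec hex
  refine ⟨h, hh, z, y, hmeet h hh, hz, hy, fun g hg w hw p hp => ?_⟩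
  rw [hd]
  refine Nat.find_min' hex ⟨g⁻¹ * h, mul_mem (inv_mem hg) hh, w, hw, g⁻¹ * p, ?_, ?_⟩
  · rw [Axis.mem_carrier_translate] at hp ⊢
    simpa [mul_assoc] using hp
  · rw [← treeDist_mul_left g, mul_inv_cancel_left]

theorem IsWindmill.subset_or_hasShortOverlap_enlarged (h𝓛 : IsSmallCancellationSystem 𝓛)
    (hW : IsWindmill 𝓛 W H) {l : Axis α} (hl : l ∈ 𝓛) :
    (l.carrier ⊆ enlargedSet 𝓛 W H ∧ l.translation ∈ enlargedGroup 𝓛 W H) ∨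
      l.HasShortOverlap (enlargedSet 𝓛 W H) := by
  by_cases hmeet : ∃ h ∈ enlargedGroup 𝓛 W H, (l.translate h).Meets W
  · left
    obtain ⟨h, hh, hm⟩ := hmeet
    have hlh := h𝓛.translate_mem l hl h
    refine ⟨fun x hx => ?_, ?_⟩
    · simpa using mul_mem_enlargedSet (inv_mem hh) (star_subset_enlargedSet
        (.inr ⟨_, hlh, hm, Axis.mul_mem_carrier_translate.2 hx⟩))
    · have hconj := Subgroup.mul_mem _ (Subgroup.mul_mem _ (inv_mem hh)
        (translation_mem_enlargedGroup hlh hm)) hh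
      simpa [Axis.translate, mul_assoc] using hconj
  · push Not at hmeet
    obtain ⟨h, hh, z, y, hzy⟩ := exists_isClosestPair hW (h𝓛.nonempty l hl) hmeet
    exact .inr ((hzy.hasShortOverlap h𝓛 hW (h𝓛.translate_mem l hl h)).of_translate hh)

theorem IsWindmill.hasLongOverlap_enlarged (h𝓛 : IsSmallCancellationSystem 𝓛)
    (hW : IsWindmill 𝓛 W H) {h : FreeGroup α} (hh : h ∈ enlargedGroup 𝓛 W H) (hne : h ≠ 1) :
    HasLongOverlap 𝓛 h := by
  have hreach : IsLeapReachable 𝓛 W H h := by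
    simpa using (IsLeapReachable.base H.one_mem).mul_of_mem_enlargedGroup h𝓛 hW
      (isLeapBase_subgroup hW) hh
  cases hreach with
  | base hb => exact hW.hasLongOverlap h hb hne
  | @leap l k q hl hk _ hq' =>
    obtain ⟨e, -, he, hfar⟩ := hl.exists_isGate_far h𝓛 hk hq'
    obtain ⟨i, hi⟩ := exists_isGate (h𝓛.isConvex l hl.mem) (h𝓛.nonempty l hl.mem) 1
    obtain ⟨u, hu, huW⟩ := hl.meets
    have hlong := (hfar i hi.1 (hW.isConvex hW.one_mem huW (hi.2 u hu))).2
    have hpos := h𝓛.length_pos l hl.mem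
    have hie : i ≠ l.translation ^ k * e := by
      rintro heq
      rw [← heq, treeDist_self] at hlong
      omega
    exact ⟨l, hl.mem, i, hi.1, _, he.1, (treeDist_eq_add_of_isGate hi he hie).symm,
      treeDist_comm i _ ▸ hlong⟩

theorem IsWindmill.enlarge (h𝓛 : IsSmallCancellationSystem 𝓛) (hW : IsWindmill 𝓛 W H) :
    IsWindmill 𝓛 (enlargedSet 𝓛 W H) (enlargedGroup 𝓛 W H) where
  isConvex := isConvex_enlargedSet h𝓛 hW
  one_mem := subset_enlargedSet hW.one_mem
  mul_mem _ hh _ hx := mul_mem_enlargedSet hh hx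
  subset_or_hasShortOverlap _ hl := hW.subset_or_hasShortOverlap_enlarged h𝓛 hl
  hasLongOverlap _ hh hne := hW.hasLongOverlap_enlarged h𝓛 hh hne

end EnlargedWindmill

section Greendlinger

variable {α : Type*} [DecidableEq α] {𝓛 : Set (Axis α)}

/-- The windmills obtained by iterated enlargement of `({1}, ⊥)`. -/
def windmill (𝓛 : Set (Axis α)) : ℕ → Set (FreeGroup α) × Subgroup (FreeGroup α)
  | 0 => ({1}, ⊥)
  | k + 1 =>
    (enlargedSet 𝓛 (windmill 𝓛 k).1 (windmill 𝓛 k).2,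
      enlargedGroup 𝓛 (windmill 𝓛 k).1 (windmill 𝓛 k).2)

theorem isWindmill_one_bot : IsWindmill 𝓛 {1} ⊥ where
  isConvex := by
    rintro x rfl y rfl m hm
    unfold IsBetween at hm
    rw [treeDist_self] at hm
    exact (treeDist_eq_zero.1 (by omega)).symm
  one_mem := rfl
  mul_mem := by
    rintro h hh x hx
    rw [Subgroup.mem_bot.1 hh, one_mul]
    exact hx
  subset_or_hasShortOverlap l _ := .inr <| by
    rintro x - y - rfl rfl
    simp
  hasLongOverlap _ hh hne := absurd hh hne

theorem isWindmill_windmill (h𝓛 : IsSmallCancellationSystem 𝓛) (k : ℕ) :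
    IsWindmill 𝓛 (windmill 𝓛 k).1 (windmill 𝓛 k).2 := by
  induction k with
  | zero => exact isWindmill_one_bot
  | succ k ih => exact ih.enlarge h𝓛

theorem exists_mul_mem_windmill (h𝓛 : IsSmallCancellationSystem 𝓛) (g : FreeGroup α)
    {x : FreeGroup α} (hx : ∃ k, x ∈ (windmill 𝓛 k).1) : ∃ k, x * g ∈ (windmill 𝓛 k).1 := by
  induction g using FreeGroup.induction_on generalizing x with
  | C1 => simpa using hx
  | of a =>
    obtain ⟨k, hk⟩ := hx
    obtain ⟨l, hl, hxl, hxal⟩ := h𝓛.exists_edge_mem x a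
    exact ⟨k + 1, star_subset_enlargedSet (.inr ⟨l, hl, ⟨x, hxl, hk⟩, hxal⟩)⟩
  | inv_of a _ =>
    obtain ⟨k, hk⟩ := hx
    obtain ⟨l, hl, hxal, hxl⟩ := h𝓛.exists_edge_mem (x * (of a)⁻¹) a
    rw [inv_mul_cancel_right] at hxl
    exact ⟨k + 1, star_subset_enlargedSet (.inr ⟨l, hl, ⟨x, hxl, hk⟩, hxal⟩)⟩
  | mul g g' hg hg' =>
    rw [← mul_assoc]
    exact hg' (hg hx)

theorem greendlinger (h𝓛 : IsSmallCancellationSystem 𝓛) {h : FreeGroup α}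
    (hh : h ∈ Subgroup.closure {g | ∃ l ∈ 𝓛, l.translation = g}) (hne : h ≠ 1) :
    HasLongOverlap 𝓛 h := by
  have hcover (x : FreeGroup α) : ∃ k, x ∈ (windmill 𝓛 k).1 := by
    simpa using exists_mul_mem_windmill h𝓛 x (x := 1) ⟨0, rfl⟩
  have hmono : Monotone fun k => (windmill 𝓛 k).2 :=
    monotone_nat_of_le_succ fun _ => le_enlargedGroup
  have hle : Subgroup.closure {g | ∃ l ∈ 𝓛, l.translation = g} ≤ ⨆ k, (windmill 𝓛 k).2 := by
    rw [Subgroup.closure_le]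
    rintro _ ⟨l, hl, rfl⟩
    obtain ⟨x, hx⟩ := h𝓛.nonempty l hl
    obtain ⟨k, hk⟩ := hcover x
    exact Subgroup.mem_iSup_of_mem (k + 1) (translation_mem_enlargedGroup hl ⟨x, hx, hk⟩)
  obtain ⟨k, hk⟩ := (Subgroup.mem_iSup_of_directed hmono.directed_le).1 (hle hh)
  exact (isWindmill_windmill h𝓛 k).hasLongOverlap h hk hne

end Greendlinger

/-! ### Axes with periodic labels -/

section Label

variable {α : Type*}

/-- The inverse of a letter of a free group. -/
def invLetter (a : α × Bool) : α × Bool := (a.1, !a.2)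

@[simp]
theorem invLetter_invLetter (a : α × Bool) : invLetter (invLetter a) = a := by simp [invLetter]

theorem invLetter_injective : Function.Injective (invLetter (α := α)) :=
  Function.LeftInverse.injective invLetter_invLetter

theorem mk_invLetter (a : α × Bool) : mk [invLetter a] = (mk [a])⁻¹ := by
  simp [inv_mk, invRev, invLetter]

/-- The word of length `m` read along the bi-infinite label `σ` from position `t`. -/
def window (σ : ℤ → α × Bool) (t : ℤ) (m : ℕ) : List (α × Bool) :=
  (List.range m).map fun i : ℕ => σ (t + i)

@[simp]
theorem length_window (σ : ℤ → α × Bool) (t : ℤ) (m : ℕ) : (window σ t m).length = m := by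
  simp [window]

@[simp]
theorem getElem_window (σ : ℤ → α × Bool) (t : ℤ) (m i : ℕ) (h : i < (window σ t m).length) :
    (window σ t m)[i] = σ (t + i) := by
  simp [window]

theorem window_zero (σ : ℤ → α × Bool) (t : ℤ) : window σ t 0 = [] := rfl

theorem window_one (σ : ℤ → α × Bool) (t : ℤ) : window σ t 1 = [σ t] := by simp [window]

theorem window_add (σ : ℤ → α × Bool) (t : ℤ) (m k : ℕ) :
    window σ t (m + k) = window σ t m ++ window σ (t + m) k := by
  simp [window, List.range_add, Function.comp_def, add_assoc]

/-- No letter of the label is followed by its inverse. -/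
def IsReducedLabel (σ : ℤ → α × Bool) : Prop := ∀ t, σ (t + 1) ≠ invLetter (σ t)

theorem IsReducedLabel.isReduced_window {σ : ℤ → α × Bool} (h : IsReducedLabel σ) (t : ℤ) (m : ℕ) :
    IsReduced (window σ t m) := by
  refine List.isChain_iff_getElem.2 fun i hi he => ?_
  rw [getElem_window, getElem_window] at *
  by_contra hne
  refine h (t + i) ?_
  rw [add_assoc]
  push_cast at he hne
  exact Prod.ext he.symm (Bool.eq_not_of_ne (Ne.symm hne))

/-- The point of the Cayley tree reached from `1` by following the label `σ` up to position `t`. -/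
def pathPoint (σ : ℤ → α × Bool) : ℤ → FreeGroup α
  | Int.ofNat k => mk (window σ 0 k)
  | Int.negSucc k => (mk (window σ (Int.negSucc k) (k + 1)))⁻¹

@[simp]
theorem pathPoint_zero (σ : ℤ → α × Bool) : pathPoint σ 0 = 1 := rfl

theorem pathPoint_add_one (σ : ℤ → α × Bool) (t : ℤ) :
    pathPoint σ (t + 1) = pathPoint σ t * mk [σ t] := by
  cases t with
  | ofNat k =>
    change mk (window σ 0 (k + 1)) = mk (window σ 0 k) * _
    rw [window_add, window_one, ← mul_mk, zero_add]
    rfl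
  | negSucc k =>
    have hsucc : pathPoint σ (Int.negSucc k + 1) = (mk (window σ (Int.negSucc k + 1) k))⁻¹ := by
      cases k with
      | zero => exact inv_one.symm
      | succ k => rfl
    rw [hsucc]
    change _ = (mk (window σ (Int.negSucc k) (k + 1)))⁻¹ * _
    rw [add_comm k 1, window_add, window_one, ← mul_mk, mul_inv_rev, inv_mul_cancel_right]
    rfl

theorem eq_pathPoint {σ : ℤ → α × Bool} {P : ℤ → FreeGroup α} (h0 : P 0 = 1)
    (h : ∀ t, P (t + 1) = P t * mk [σ t]) (t : ℤ) : P t = pathPoint σ t := by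
  induction t using Int.induction_on with
  | zero => rw [h0, pathPoint_zero]
  | succ i ih => rw [h, pathPoint_add_one, ih]
  | pred i ih =>
    have hP := h (-i - 1)
    have hσ := pathPoint_add_one σ (-i - 1)
    rw [sub_add_cancel] at hP hσ
    rw [hP, hσ] at ih
    exact mul_right_cancel ih

theorem pathPoint_shift (σ : ℤ → α × Bool) (s t : ℤ) :
    pathPoint (fun i => σ (s + i)) t = (pathPoint σ s)⁻¹ * pathPoint σ (s + t) := by
  refine (eq_pathPoint (P := fun t => (pathPoint σ s)⁻¹ * pathPoint σ (s + t)) ?_ ?_ t).symm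
  · simp
  · intro t
    rw [← add_assoc, pathPoint_add_one, mul_assoc]

theorem pathPoint_reverse (σ : ℤ → α × Bool) (t : ℤ) :
    pathPoint (fun i => invLetter (σ (-1 - i))) t = pathPoint σ (-t) := by
  refine (eq_pathPoint (P := fun t => pathPoint σ (-t)) ?_ ?_ t).symm
  · simp
  · intro t
    have hσ := pathPoint_add_one σ (-(t + 1))
    rw [show -(t + 1) + 1 = -t by ring] at hσ
    rw [hσ, mk_invLetter, show -1 - t = -(t + 1) by ring, mul_inv_cancel_right]

theorem pathPoint_add_natCast (σ : ℤ → α × Bool) (t : ℤ) (m : ℕ) :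
    pathPoint σ (t + m) = pathPoint σ t * mk (window σ t m) := by
  induction m with
  | zero => simp [window_zero, ← one_eq_mk]
  | succ m ih =>
    rw [window_add, ← mul_mk, ← mul_assoc, ← ih, window_one, ← pathPoint_add_one, add_assoc]
    push_cast
    rfl

theorem pathPoint_natCast_add {σ : ℤ → α × Bool} {n : ℕ} (h : ∀ t, σ (n + t) = σ t) (t : ℤ) :
    pathPoint σ (n + t) = pathPoint σ n * pathPoint σ t := by
  have hshift := pathPoint_shift σ n t
  rw [show (fun i => σ (n + i)) = σ from funext h] at hshift
  rw [hshift, mul_inv_cancel_left]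

theorem pathPoint_zpow_mul {σ : ℤ → α × Bool} {n : ℕ} (h : ∀ t, σ (n + t) = σ t) (k t : ℤ) :
    pathPoint σ n ^ k * pathPoint σ t = pathPoint σ (k * n + t) := by
  induction k using Int.induction_on generalizing t with
  | zero => simp
  | succ k ih =>
    rw [zpow_add_one, mul_assoc, ← pathPoint_natCast_add h, ih]
    congr 1
    ring
  | pred k ih =>
    have hσ := pathPoint_natCast_add h (-n + t)
    rw [add_neg_cancel_left] at hσ
    rw [zpow_sub_one, mul_assoc, hσ, inv_mul_cancel_left, ih]
    congr 1
    ring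

/-- The axis through `g` with label `σ`, on which translation by `n` along the label acts. -/
def labelAxis (g : FreeGroup α) (σ : ℤ → α × Bool) (n : ℕ) : Axis α :=
  ⟨{x | ∃ t, x = g * pathPoint σ t}, g * pathPoint σ n * g⁻¹, n⟩

theorem labelAxis_translate (g h : FreeGroup α) (σ : ℤ → α × Bool) (n : ℕ) :
    (labelAxis g σ n).translate h = labelAxis (h * g) σ n := by
  simp only [labelAxis, Axis.translate, Axis.mk.injEq, and_true]
  refine ⟨Set.ext fun x => exists_congr fun t => ?_, by group⟩
  rw [inv_mul_eq_iff_eq_mul, mul_assoc]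

theorem labelAxis_shift (g : FreeGroup α) {σ : ℤ → α × Bool} {n : ℕ} (h : ∀ t, σ (n + t) = σ t)
    (s : ℤ) : labelAxis (g * pathPoint σ s) (fun i => σ (s + i)) n = labelAxis g σ n := by
  simp only [labelAxis, Axis.mk.injEq, and_true]
  refine ⟨Set.ext fun x => ⟨?_, ?_⟩, ?_⟩
  · rintro ⟨t, rfl⟩
    exact ⟨s + t, by rw [pathPoint_shift]; group⟩
  · rintro ⟨t, rfl⟩
    exact ⟨t - s, by rw [pathPoint_shift]; simp [mul_assoc]⟩
  · rw [pathPoint_shift, add_comm, pathPoint_natCast_add h]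
    group

theorem labelAxis_reverse_equivalent (g : FreeGroup α) {σ : ℤ → α × Bool} {n : ℕ}
    (h : ∀ t, σ (n + t) = σ t) :
    (labelAxis g (fun i => invLetter (σ (-1 - i))) n).Equivalent (labelAxis g σ n) := by
  refine ⟨Set.ext fun x => ⟨?_, ?_⟩, rfl, .inr ?_⟩
  · rintro ⟨t, rfl⟩
    exact ⟨-t, by rw [pathPoint_reverse]⟩
  · rintro ⟨t, rfl⟩
    exact ⟨-t, by rw [pathPoint_reverse, neg_neg]⟩
  · have hone := pathPoint_natCast_add h (-n)
    rw [add_neg_cancel, pathPoint_zero] at hone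
    simp only [labelAxis, pathPoint_reverse, mul_inv_rev, inv_inv, mul_assoc,
      eq_inv_of_mul_eq_one_left hone.symm]

theorem labelAxis_zpow_mul (g : FreeGroup α) {σ : ℤ → α × Bool} {n : ℕ}
    (h : ∀ t, σ (n + t) = σ t) (k t : ℤ) :
    (labelAxis g σ n).translation ^ k * (g * pathPoint σ t) = g * pathPoint σ (k * n + t) := by
  rw [← pathPoint_zpow_mul h, labelAxis, conj_zpow]
  group

/-- A family of pairs `(σ, n)`, where `σ` is a reduced label of period `n`, closed under shifts and
reversal, satisfying the small cancellation condition `C'(1/20)`, in which each generator occurs. -/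
structure IsLabelSystem (R : (ℤ → α × Bool) → ℕ → Prop) : Prop where
  period_pos : ∀ σ n, R σ n → 0 < n
  apply_add : ∀ σ n, R σ n → ∀ t, σ (n + t) = σ t
  isReducedLabel : ∀ σ n, R σ n → IsReducedLabel σ
  shift : ∀ σ n, R σ n → ∀ s, R (fun i => σ (s + i)) n
  reverse : ∀ σ n, R σ n → R (fun i => invLetter (σ (-1 - i))) n
  eq_of_overlap : ∀ σ n, R σ n → ∀ σ' n', R σ' n' → ∀ m : ℕ, n ≤ 20 * m →
    (∀ i : ℕ, i < m → σ i = σ' i) → σ = σ' ∧ n = n'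
  exists_apply_zero_eq : ∀ a, ∃ σ n, R σ n ∧ σ 0 = (a, true)

/-- The axes with a label in the family `R`. -/
def labelAxes (R : (ℤ → α × Bool) → ℕ → Prop) : Set (Axis α) :=
  {l | ∃ g σ n, R σ n ∧ l = labelAxis g σ n}

variable [DecidableEq α]

theorem IsReducedLabel.toWord_pathPoint {σ : ℤ → α × Bool} (h : IsReducedLabel σ) (m : ℕ) :
    (pathPoint σ m).toWord = window σ 0 m :=
  (toWord_mk.trans (h.isReduced_window 0 m).reduce_eq :)

theorem IsReducedLabel.treeDist_pathPoint {σ : ℤ → α × Bool} (h : IsReducedLabel σ) (t s : ℤ) :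
    treeDist (pathPoint σ t) (pathPoint σ s) = (s - t).natAbs := by
  have hnat (t : ℤ) (m : ℕ) : treeDist (pathPoint σ t) (pathPoint σ (t + m)) = m := by
    rw [pathPoint_add_natCast, treeDist, inv_mul_cancel_left,
      norm_mk_of_isReduced (h.isReduced_window t m), length_window]
  rcases le_total t s with hts | hts <;> obtain ⟨m, rfl⟩ := Int.le.dest hts
  · simp [hnat]
  · rw [treeDist_comm, hnat]
    simp

theorem IsReducedLabel.treeDist_mul_pathPoint {σ : ℤ → α × Bool} (h : IsReducedLabel σ)
    (x : FreeGroup α) (m : ℕ) : treeDist x (x * pathPoint σ m) = m := by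
  simpa using (treeDist_mul_left x 1 (pathPoint σ m)).trans (h.treeDist_pathPoint 0 m)

variable {R : (ℤ → α × Bool) → ℕ → Prop}

theorem IsLabelSystem.exists_labelAxis_equivalent (hR : IsLabelSystem R) {g : FreeGroup α}
    {σ : ℤ → α × Bool} {n : ℕ} (h : R σ n) {x y : FreeGroup α}
    (hx : x ∈ (labelAxis g σ n).carrier) (hy : y ∈ (labelAxis g σ n).carrier) :
    ∃ σ', R σ' n ∧ (labelAxis x σ' n).Equivalent (labelAxis g σ n) ∧
      y = x * pathPoint σ' (treeDist x y) := by
  obtain ⟨t, rfl⟩ := hx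
  obtain ⟨s, rfl⟩ := hy
  have haxis := labelAxis_shift g (hR.apply_add _ _ h) t
  have hshift := hR.shift _ _ h t
  rw [treeDist_mul_left, (hR.isReducedLabel _ _ h).treeDist_pathPoint]
  rcases le_total t s with hts | hts
  · refine ⟨_, hshift, haxis ▸ ⟨rfl, rfl, .inl rfl⟩, ?_⟩
    rw [pathPoint_shift, Int.natAbs_of_nonneg (by omega)]
    simp [mul_assoc]
  · refine ⟨_, hR.reverse _ _ hshift,
      haxis ▸ labelAxis_reverse_equivalent _ (hR.apply_add _ _ hshift), ?_⟩
    rw [pathPoint_reverse (σ := fun i => σ (t + i)), pathPoint_shift,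
      show (((s - t).natAbs : ℕ) : ℤ) = t - s by omega]
    simp [mul_assoc]

theorem IsLabelSystem.isConvex_labelAxis (hR : IsLabelSystem R) {g : FreeGroup α}
    {σ : ℤ → α × Bool} {n : ℕ} (h : R σ n) : IsConvex (labelAxis g σ n).carrier := by
  intro x hx y hy m hm
  obtain ⟨σ', h', heq, hy'⟩ := hR.exists_labelAxis_equivalent h hx hy
  have hred := hR.isReducedLabel _ _ h'
  have hmem := hred.treeDist_mul_pathPoint x (treeDist x m)
  rw [← heq.carrier_eq]
  refine ⟨treeDist x m, hm.eq_of_treeDist_eq ?_ hmem.symm⟩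
  have hlast : treeDist (x * pathPoint σ' (treeDist x m)) y = treeDist x y - treeDist x m := by
    rw [congrArg (treeDist _) hy', treeDist_mul_left, hred.treeDist_pathPoint]
    unfold IsBetween at hm
    omega
  unfold IsBetween at hm ⊢
  omega

theorem IsLabelSystem.equivalent_of_overlap (hR : IsLabelSystem R) {g g' : FreeGroup α}
    {σ τ : ℤ → α × Bool} {n n' : ℕ} (h : R σ n) (h' : R τ n') {x y : FreeGroup α}
    (hx : x ∈ (labelAxis g σ n).carrier) (hy : y ∈ (labelAxis g σ n).carrier)
    (hx' : x ∈ (labelAxis g' τ n').carrier) (hy' : y ∈ (labelAxis g' τ n').carrier)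
    (hle : n ≤ 20 * treeDist x y) : (labelAxis g σ n).Equivalent (labelAxis g' τ n') := by
  obtain ⟨σ', hσ', heq, hσy⟩ := hR.exists_labelAxis_equivalent h hx hy
  obtain ⟨τ', hτ', heq', hτy⟩ := hR.exists_labelAxis_equivalent h' hx' hy'
  have hwindow : window σ' 0 (treeDist x y) = window τ' 0 (treeDist x y) := by
    rw [← (hR.isReducedLabel _ _ hσ').toWord_pathPoint,
      ← (hR.isReducedLabel _ _ hτ').toWord_pathPoint, mul_left_cancel (hσy.symm.trans hτy)]
  obtain ⟨rfl, rfl⟩ := hR.eq_of_overlap _ _ hσ' _ _ hτ' _ hle fun i hi => by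
    simpa [hi] using congrArg (·[i]?) hwindow
  refine ⟨heq.carrier_eq.symm.trans heq'.carrier_eq, rfl, ?_⟩
  rcases heq.translation_eq with hc | hc <;> rcases heq'.translation_eq with hc' | hc' <;>
    simp [hc, hc']

theorem IsLabelSystem.isSmallCancellationSystem (hR : IsLabelSystem R) :
    IsSmallCancellationSystem (labelAxes R) where
  isConvex := by
    rintro l ⟨g, σ, n, h, rfl⟩
    exact hR.isConvex_labelAxis h
  nonempty := by
    rintro l ⟨g, σ, n, -, rfl⟩
    exact ⟨g, 0, by simp⟩
  length_pos := by
    rintro l ⟨g, σ, n, h, rfl⟩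
    exact hR.period_pos _ _ h
  zpow_mul_mem := by
    rintro l ⟨g, σ, n, h, rfl⟩ y ⟨t, rfl⟩ k
    exact ⟨k * n + t, labelAxis_zpow_mul g (hR.apply_add _ _ h) k t⟩
  treeDist_zpow_mul := by
    rintro l ⟨g, σ, n, h, rfl⟩ y ⟨t, rfl⟩ k
    rw [labelAxis_zpow_mul g (hR.apply_add _ _ h), treeDist_mul_left,
      (hR.isReducedLabel _ _ h).treeDist_pathPoint]
    simp [labelAxis, Int.natAbs_mul]
  equivalent_of_overlap := by
    rintro l ⟨g, σ, n, h, rfl⟩ l' ⟨g', τ, n', h', rfl⟩ x hx y hy hx' hy' hle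
    exact hR.equivalent_of_overlap h h' hx hy hx' hy' hle
  translate_mem := by
    rintro l ⟨g, σ, n, h, rfl⟩ k
    exact ⟨k * g, σ, n, h, labelAxis_translate g k σ n⟩
  exists_edge_mem := by
    intro x a
    obtain ⟨σ, n, h, h0⟩ := hR.exists_apply_zero_eq a
    refine ⟨_, ⟨x, σ, n, h, rfl⟩, ⟨0, by simp⟩, ⟨1, ?_⟩⟩
    have hone := pathPoint_add_one σ 0
    rw [zero_add, pathPoint_zero, one_mul, h0] at hone
    rw [hone]
    rfl

theorem toWord_mul_mul_of_norm_eq {x y z : FreeGroup α}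
    (h : (x * y * z).norm = x.norm + y.norm + z.norm) :
    (x * y * z).toWord = x.toWord ++ y.toWord ++ z.toWord := by
  have heq : (x * y * z).toWord = reduce (x.toWord ++ y.toWord ++ z.toWord) := by
    rw [← toWord_mk, ← mul_mk, ← mul_mk, mk_toWord, mk_toWord, mk_toWord]
  rw [heq]
  refine reduce.red.sublist.eq_of_length ?_
  rw [← heq]
  simpa [FreeGroup.norm, add_assoc] using h

theorem IsLabelSystem.exists_window_isInfix (hR : IsLabelSystem R) {h : FreeGroup α}
    (hh : h ∈ Subgroup.closure {x | ∃ g σ n, R σ n ∧ x = g * pathPoint σ n * g⁻¹})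
    (hne : h ≠ 1) :
    ∃ σ n, R σ n ∧ ∃ m, 17 * n ≤ 20 * m ∧ window σ 0 m <:+: h.toWord := by
  have hh' : h ∈ Subgroup.closure {g | ∃ l ∈ labelAxes R, l.translation = g} := by
    refine Subgroup.closure_mono ?_ hh
    rintro x ⟨g, σ, n, h, rfl⟩
    exact ⟨_, ⟨g, σ, n, h, rfl⟩, rfl⟩
  obtain ⟨l, ⟨g, σ, n, hr, rfl⟩, e, he, e', he', hd, hn⟩ :=
    greendlinger hR.isSmallCancellationSystem hh' hne
  obtain ⟨σ', hσ', -, hee'⟩ := hR.exists_labelAxis_equivalent hr he he'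
  refine ⟨σ', n, hσ', treeDist e e', hn, e.toWord, (e'⁻¹ * h).toWord, ?_⟩
  have hmul : e * (e⁻¹ * e') * (e'⁻¹ * h) = h := by group
  have hword := toWord_mul_mul_of_norm_eq (x := e) (y := e⁻¹ * e') (z := e'⁻¹ * h)
    (by simpa [hmul, treeDist] using hd.symm)
  rw [hmul] at hword
  rw [hword, ← (hR.isReducedLabel _ _ hσ').toWord_pathPoint, eq_inv_mul_of_mul_eq hee'.symm]

end Label

/-! ### Labels made of blocks -/

section Block

theorem exists_le_lt_of_lt_add_one {S : ℤ → ℤ} (h : ∀ k, S k < S (k + 1)) (t : ℤ) :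
    ∃ k, S k ≤ t ∧ t < S (k + 1) := by
  have hmono : Monotone fun k => S k - k :=
    monotone_int_of_le_succ fun k => by have := h k; omega
  have hbdd : ∀ k, S k ≤ t → k ≤ max 0 (t - S 0) := by
    intro k hk
    by_contra! hlt
    have : S 0 - 0 ≤ S k - k := hmono (by omega)
    omega
  have hex : S (min 0 (t - S 0)) ≤ t := by
    have : S (min 0 (t - S 0)) - min 0 (t - S 0) ≤ S 0 - 0 := hmono (min_le_left _ _)
    omega
  obtain ⟨k, hk, hmax⟩ := Int.exists_greatest_of_bdd ⟨_, hbdd⟩ ⟨_, hex⟩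
  refine ⟨k, hk, ?_⟩
  by_contra! hlt
  have := hmax _ hlt
  omega

theorem eq_of_le_lt_of_lt_add_one {S : ℤ → ℤ} (h : ∀ k, S k < S (k + 1)) {t k j : ℤ}
    (hk : S k ≤ t) (hk' : t < S (k + 1)) (hj : S j ≤ t) (hj' : t < S (j + 1)) : k = j := by
  have hS := strictMono_int_of_lt_succ h
  have hkj := hS.lt_iff_lt.1 (hk.trans_lt hj')
  have hjk := hS.lt_iff_lt.1 (hj.trans_lt hk')
  omega

variable {β : Type*}

/-- The position at which the `k`-th block of the concatenation of the words `B k` starts; the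
block with index `0` starts at position `0`. -/
def blockStart (B : ℤ → List β) : ℤ → ℤ
  | Int.ofNat k => ∑ i ∈ Finset.range k, ((B i).length : ℤ)
  | Int.negSucc k => -∑ i ∈ Finset.range (k + 1), ((B (-1 - i)).length : ℤ)

@[simp]
theorem blockStart_zero (B : ℤ → List β) : blockStart B 0 = 0 := rfl

theorem blockStart_add_one (B : ℤ → List β) (k : ℤ) :
    blockStart B (k + 1) = blockStart B k + (B k).length := by
  cases k with
  | ofNat k => exact Finset.sum_range_succ (fun i : ℕ => ((B i).length : ℤ)) k
  | negSucc k =>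
    have hsucc : blockStart B (Int.negSucc k + 1) =
        -∑ i ∈ Finset.range k, ((B (-1 - i)).length : ℤ) := by
      cases k with
      | zero => exact blockStart_zero B
      | succ k => rfl
    rw [hsucc]
    change _ = -∑ i ∈ Finset.range (k + 1), ((B (-1 - i)).length : ℤ) + _
    rw [Finset.sum_range_succ, Int.negSucc_eq, show -((k : ℤ) + 1) = -1 - k by ring]
    ring

theorem blockStart_lt_add_one {B : ℤ → List β} (hB : ∀ k, B k ≠ []) (k : ℤ) :
    blockStart B k < blockStart B (k + 1) := by
  have := List.length_pos_iff.2 (hB k)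
  rw [blockStart_add_one]
  omega

theorem blockStart_period_add {B : ℤ → List β} {M : ℤ} (hM : ∀ k, B (M + k) = B k) (k : ℤ) :
    blockStart B (M + k) = blockStart B M + blockStart B k := by
  induction k using Int.induction_on with
  | zero => simp
  | succ k ih => rw [← add_assoc, blockStart_add_one, ih, blockStart_add_one, hM, add_assoc]
  | pred k ih =>
    have hleft := blockStart_add_one B (M + (-k - 1))
    have hright := blockStart_add_one B (-k - 1)
    rw [show M + (-(k : ℤ) - 1) + 1 = M + -k by ring, hM] at hleft
    rw [sub_add_cancel] at hright
    omega

theorem blockStart_mul_period_add {B : ℤ → List β} {M : ℤ} (hM : ∀ k, B (M + k) = B k)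
    (q k : ℤ) : blockStart B (q * M + k) = q * blockStart B M + blockStart B k := by
  induction q using Int.induction_on with
  | zero => simp
  | succ q ih =>
    rw [show ((q : ℤ) + 1) * M + k = M + (q * M + k) by ring, blockStart_period_add hM, ih]
    ring
  | pred q ih =>
    have hstep := blockStart_period_add hM ((-(q : ℤ) - 1) * M + k)
    rw [show M + ((-(q : ℤ) - 1) * M + k) = -q * M + k by ring, ih] at hstep
    linarith

/-- The bi-infinite concatenation of the nonempty words `B k`. -/
noncomputable def blockLabel [Nonempty β] (B : ℤ → List β) (t : ℤ) : β :=
  let k := Classical.epsilon fun k => blockStart B k ≤ t ∧ t < blockStart B (k + 1)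
  (B k).getD (t - blockStart B k).toNat (Classical.arbitrary β)

section BlockLabel

variable [Nonempty β] {B : ℤ → List β} (hB : ∀ k, B k ≠ [])
include hB

theorem blockLabel_blockStart_add (k : ℤ) (i : ℕ) (h : i < (B k).length) :
    blockLabel B (blockStart B k + i) = (B k)[i] := by
  have hk : blockStart B k ≤ blockStart B k + i ∧ blockStart B k + i < blockStart B (k + 1) := by
    rw [blockStart_add_one]
    omega
  have heps := Classical.epsilon_spec (p := fun j : ℤ =>
    blockStart B j ≤ blockStart B k + i ∧ blockStart B k + i < blockStart B (j + 1)) ⟨k, hk⟩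
  simp only [blockLabel]
  rw [eq_of_le_lt_of_lt_add_one (blockStart_lt_add_one hB) heps.1 heps.2 hk.1 hk.2,
    add_sub_cancel_left, Int.toNat_natCast, List.getD_eq_getElem _ _ h]

theorem blockLabel_period_add {M : ℤ} (hM : ∀ k, B (M + k) = B k) (t : ℤ) :
    blockLabel B (blockStart B M + t) = blockLabel B t := by
  obtain ⟨k, hk, hk'⟩ := exists_le_lt_of_lt_add_one (blockStart_lt_add_one hB) t
  obtain ⟨i, rfl⟩ := Int.le.dest hk
  rw [blockStart_add_one] at hk'
  have hi : i < (B k).length := by omega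
  have hshift := blockLabel_blockStart_add hB (M + k) i (by rwa [hM])
  rw [blockLabel_blockStart_add hB k i hi, ← add_assoc, ← blockStart_period_add hM, hshift]
  simp only [hM]

end BlockLabel

/-- The label `σ` is the concatenation of the blocks `Z k ++ y ^ E k`, the `k`-th of which starts
at position `S k`; the separating letter `y` does not occur in the words `Z k`, which may be
empty. -/
structure IsBlockDecomposition (σ : ℤ → β) (S : ℤ → ℤ) (Z : ℤ → List β) (E : ℤ → ℕ) (y : β) :
    Prop where
  start_add_one : ∀ k, S (k + 1) = S k + (Z k).length + E k
  apply_word : ∀ k (i : ℕ) (h : i < (Z k).length), σ (S k + i) = (Z k)[i]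
  apply_run : ∀ k (i : ℕ), i < E k → σ (S k + (Z k).length + i) = y
  notMem : ∀ k, y ∉ Z k
  run_pos : ∀ k, 0 < E k

theorem isBlockDecomposition_blockLabel [Nonempty β] {Z : ℤ → List β} {E : ℤ → ℕ} {y : β}
    (hy : ∀ k, y ∉ Z k) (hE : ∀ k, 0 < E k) :
    IsBlockDecomposition (blockLabel fun k => Z k ++ List.replicate (E k) y)
      (blockStart fun k => Z k ++ List.replicate (E k) y) Z E y := by
  have hB (k) : Z k ++ List.replicate (E k) y ≠ [] :=
    List.append_ne_nil_of_right_ne_nil _ (by simpa using (hE k).ne')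
  refine ⟨fun k => ?_, fun k i h => ?_, fun k i h => ?_, hy, hE⟩
  · rw [blockStart_add_one, List.length_append, List.length_replicate, Nat.cast_add, add_assoc]
  · rw [blockLabel_blockStart_add hB k i (by simp; omega), List.getElem_append_left h]
  · have := blockLabel_blockStart_add hB k ((Z k).length + i) (by simp; omega)
    rwa [List.getElem_append_right (by omega), List.getElem_replicate, Nat.cast_add,
      ← add_assoc] at this

namespace IsBlockDecomposition

variable {σ σ' : ℤ → β} {S S' : ℤ → ℤ} {Z Z' : ℤ → List β} {E E' : ℤ → ℕ} {y : β}

theorem start_lt_add_one (h : IsBlockDecomposition σ S Z E y) (k : ℤ) : S k < S (k + 1) := by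
  have := h.run_pos k
  rw [h.start_add_one]
  omega

theorem exists_eq_start_add (h : IsBlockDecomposition σ S Z E y) (t : ℤ) :
    ∃ k, (∃ i : ℕ, i < (Z k).length ∧ t = S k + i) ∨
      ∃ i : ℕ, i < E k ∧ t = S k + (Z k).length + i := by
  obtain ⟨k, hk, hk'⟩ := exists_le_lt_of_lt_add_one h.start_lt_add_one t
  obtain ⟨i, rfl⟩ := Int.le.dest hk
  rw [h.start_add_one] at hk'
  refine ⟨k, (lt_or_ge i (Z k).length).imp (fun hi => ⟨i, hi, rfl⟩) fun hi => ?_⟩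
  exact ⟨i - (Z k).length, by omega, by omega⟩

theorem apply_word_mem (h : IsBlockDecomposition σ S Z E y) {k : ℤ} {i : ℕ}
    (hi : i < (Z k).length) : σ (S k + i) ∈ Z k :=
  h.apply_word k i hi ▸ List.getElem_mem hi

theorem apply_word_ne (h : IsBlockDecomposition σ S Z E y) {k : ℤ} {i : ℕ}
    (hi : i < (Z k).length) : σ (S k + i) ≠ y :=
  fun he => h.notMem k (he ▸ h.apply_word_mem hi)

theorem apply_eq_or_mem (h : IsBlockDecomposition σ S Z E y) (t : ℤ) :
    σ t = y ∨ ∃ k, σ t ∈ Z k := by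
  obtain ⟨k, ⟨i, hi, rfl⟩ | ⟨i, hi, rfl⟩⟩ := h.exists_eq_start_add t
  · exact .inr ⟨k, h.apply_word_mem hi⟩
  · exact .inl (h.apply_run k i hi)

theorem apply_start_ne (h : IsBlockDecomposition σ S Z E y) {k : ℤ} (hk : Z k ≠ []) :
    σ (S k) ≠ y := by
  simpa using h.apply_word_ne (List.length_pos_iff.2 hk)

theorem apply_start_sub_one (h : IsBlockDecomposition σ S Z E y) (k : ℤ) : σ (S k - 1) = y := by
  have hpos := h.run_pos (k - 1)
  have hstart := h.start_add_one (k - 1)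
  rw [sub_add_cancel] at hstart
  rw [← h.apply_run (k - 1) (E (k - 1) - 1) (by omega)]
  congr 1
  omega

theorem apply_start_add_length (h : IsBlockDecomposition σ S Z E y) (k : ℤ) :
    σ (S k + (Z k).length) = y := by
  simpa using h.apply_run k 0 (h.run_pos k)

theorem exists_start_eq (h : IsBlockDecomposition σ S Z E y) {t : ℤ} (hprev : σ (t - 1) = y)
    (ht : σ t ≠ y) : ∃ k, S k = t := by
  obtain ⟨k, ⟨i, hi, rfl⟩ | ⟨i, hi, rfl⟩⟩ := h.exists_eq_start_add t
  · cases i with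
    | zero => exact ⟨k, by simp⟩
    | succ i =>
      refine absurd ?_ (h.apply_word_ne (k := k) (i := i) (by omega))
      rw [← hprev]
      congr 1
      push_cast
      ring
  · exact absurd (h.apply_run k i hi) ht

theorem length_word_le_of_overlap (h : IsBlockDecomposition σ S Z E y)
    (h' : IsBlockDecomposition σ' S' Z' E' y) {k k' : ℤ}
    (hoverlap : σ (S k + (Z k).length) = σ' (S' k' + (Z k).length)) :
    (Z' k').length ≤ (Z k).length := by
  by_contra! hlt
  exact h'.apply_word_ne hlt (hoverlap ▸ h.apply_start_add_length k)

theorem word_eq_of_overlap (h : IsBlockDecomposition σ S Z E y)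
    (h' : IsBlockDecomposition σ' S' Z' E' y) {k k' : ℤ}
    (hoverlap : ∀ i : ℕ, i ≤ (Z k).length → σ (S k + i) = σ' (S' k' + i)) : Z' k' = Z k := by
  have hle := h.length_word_le_of_overlap h' (hoverlap _ le_rfl)
  have hge := h'.length_word_le_of_overlap h (hoverlap _ hle).symm
  refine List.ext_getElem (le_antisymm hle hge) fun i hi' hi => ?_
  rw [← h'.apply_word k' i hi', ← h.apply_word k i hi, hoverlap i hi.le]

/-- In the second case the run of `y` in `σ'` continues across an empty word. -/
theorem run_eq_of_overlap (h : IsBlockDecomposition σ S Z E y)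
    (h' : IsBlockDecomposition σ' S' Z' E' y) {k k' : ℤ} (hZ : Z' k' = Z k)
    (hoverlap : ∀ i : ℕ, i ≤ (Z k).length + E k → σ (S k + i) = σ' (S' k' + i))
    (hk : Z (k + 1) ≠ []) :
    E k = E' k' ∨ Z' (k' + 1) = [] ∧ (Z' (k' + 2) ≠ [] → E k = E' k' + E' (k' + 1)) := by
  have hrun (i : ℕ) (hi : i < E k) : σ' (S' k' + (Z k).length + i) = y := by
    have := hoverlap ((Z k).length + i) (by omega)
    rw [Nat.cast_add, ← add_assoc, ← add_assoc, h.apply_run k i hi] at this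
    exact this.symm
  have hend : σ' (S' k' + (Z k).length + E k) ≠ y := by
    have := hoverlap ((Z k).length + E k) le_rfl
    rw [Nat.cast_add, ← add_assoc, ← add_assoc, ← h.start_add_one] at this
    exact this ▸ h.apply_start_ne hk
  have hstart := h'.start_add_one k'
  rw [hZ] at hstart
  have hle : E' k' ≤ E k := by
    by_contra! hlt
    exact hend (hZ ▸ h'.apply_run k' (E k) hlt)
  refine hle.eq_or_lt.imp Eq.symm fun hlt => ?_
  have hnil : Z' (k' + 1) = [] := by
    by_contra hne
    exact h'.apply_start_ne hne (hstart ▸ hrun _ hlt)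
  refine ⟨hnil, fun hne => ?_⟩
  have hstart' := h'.start_add_one (k' + 1)
  have happly := h'.apply_run (k' + 1)
  rw [hnil, List.length_nil, Nat.cast_zero, add_zero, hstart] at hstart' happly
  apply le_antisymm
  · by_contra! hgt
    refine h'.apply_start_ne hne ?_
    rw [show k' + 2 = k' + 1 + 1 by ring, hstart', ← hrun _ hgt, Nat.cast_add]
    ring_nf
  · by_contra! hgt
    refine hend ?_
    rw [← happly (E k - E' k') (by omega)]
    congr 1
    omega

theorem exists_block_eq_of_overlap (h : IsBlockDecomposition σ S Z E y)
    (h' : IsBlockDecomposition σ' S' Z' E' y) {k t : ℤ}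
    (hoverlap : ∀ i : ℤ, -1 ≤ i → i ≤ (Z k).length + E k → σ (S k + i) = σ' (t + i))
    (hk : Z k ≠ []) (hk' : Z (k + 1) ≠ []) :
    ∃ k', t = S' k' ∧ Z' k' = Z k ∧
      (E k = E' k' ∨ Z' (k' + 1) = [] ∧ (Z' (k' + 2) ≠ [] → E k = E' k' + E' (k' + 1))) := by
  obtain ⟨k', rfl⟩ : ∃ k', S' k' = t := by
    refine h'.exists_start_eq ?_ ?_
    · rw [sub_eq_add_neg, ← hoverlap (-1) le_rfl (by omega)]
      exact h.apply_start_sub_one k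
    · have := hoverlap 0 (by omega) (by omega)
      rw [add_zero, add_zero] at this
      exact this ▸ h.apply_start_ne hk
  have hZ := h.word_eq_of_overlap h' (k' := k') fun i hi => hoverlap i (by omega) (by omega)
  exact ⟨k', rfl, hZ,
    h.run_eq_of_overlap h' hZ (fun i hi => hoverlap i (by omega) (by omega)) hk'⟩

end IsBlockDecomposition

end Block

/-! ### Labels of the chain relators -/

theorem apply_mul_add_of_apply_add {β : Type*} {σ : ℤ → β} {n : ℤ} (h : ∀ t, σ (n + t) = σ t)
    (q t : ℤ) : σ (q * n + t) = σ t := by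
  have hper : Function.Periodic σ n := fun t => by rw [add_comm, h]
  rw [add_comm]
  exact hper.int_mul q t

section Chain

noncomputable instance (A : Type) : DecidableEq (GenSym A) := Classical.decEq _

instance (A : Type) : Nonempty (GenSym A × Bool) := ⟨(GenSym.b, true)⟩

/-- `chainProd lo x y` is one of the relators of `G(𝒜)`. -/
inductive IsChainPair {A : Type} : GenSym A → GenSym A → ℕ → Prop
  | elt_c (a : A) : IsChainPair (.elt a) .c 0
  | elt_d (a : A) : IsChainPair (.elt a) .d 0
  | b_f1 : IsChainPair .b .f1 1000
  | b_f2 : IsChainPair .b .f2 1000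
  | c_f1 : IsChainPair .c .f1 2000
  | c_f2 : IsChainPair .c .f2 2000
  | d_f1 : IsChainPair .d .f1 3000
  | d_f2 : IsChainPair .d .f2 3000
  | f1_f2 : IsChainPair .f1 .f2 4000
  | f2_f1 : IsChainPair .f2 .f1 4000

namespace IsChainPair

variable {A : Type} {x y : GenSym A} {lo lo' : ℕ}

theorem ne (h : IsChainPair x y lo) : x ≠ y := by cases h <;> simp

theorem le_4000 (h : IsChainPair x y lo) : lo ≤ 4000 := by cases h <;> simp

theorem eq_of_same (h : IsChainPair x y lo) (h' : IsChainPair x y lo') : lo = lo' := by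
  cases h <;> cases h' <;> rfl

theorem eq_4000_of_swap (h : IsChainPair x y lo) (h' : IsChainPair y x lo') : lo = 4000 := by
  cases h <;> cases h' <;> rfl

end IsChainPair

/-- The exponent of `y` in the `k`-th factor of `chainProd lo x y`, extended periodically. -/
def chainExponent (lo : ℕ) (k : ℤ) : ℕ := (lo + (k % 1000).toNat + 1) ^ 2

theorem chainExponent_pos (lo : ℕ) (k : ℤ) : 0 < chainExponent lo k := by
  unfold chainExponent
  positivity

theorem chainExponent_le (lo : ℕ) (k : ℤ) : chainExponent lo k ≤ (lo + 1000) ^ 2 :=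
  Nat.pow_le_pow_left (by omega) 2

theorem emod_eq_of_chainExponent_eq {lo : ℕ} {k k' : ℤ}
    (h : chainExponent lo k = chainExponent lo k') : k % 1000 = k' % 1000 := by
  have := Nat.pow_left_injective two_ne_zero h
  omega

/-- The length of `chainProd lo x y` as a word: `∑ k ∈ [1, 1000], (1 + (lo + k) ^ 2)`. -/
def chainLength (lo : ℕ) : ℕ := 1000 * lo ^ 2 + 1001000 * lo + 333834500

variable {A : Type}

/-- The `k`-th factor of the word `chainProd lo x y`, extended periodically. -/
def chainBlock (x y : GenSym A) (lo : ℕ) (k : ℤ) : List (GenSym A × Bool) :=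
  [(x, true)] ++ List.replicate (chainExponent lo k) (y, true)

/-- The bi-infinite periodic label which repeats the word `chainProd lo x y`. -/
noncomputable def chainLabel (x y : GenSym A) (lo : ℕ) : ℤ → GenSym A × Bool :=
  blockLabel (chainBlock x y lo)

variable {x y : GenSym A} {lo : ℕ}

theorem chainBlock_ne_nil (k : ℤ) : chainBlock x y lo k ≠ [] := List.cons_ne_nil _ _

theorem chainBlock_add (k : ℤ) : chainBlock x y lo (1000 + k) = chainBlock x y lo k := by
  rw [chainBlock, chainBlock, chainExponent, chainExponent, Int.add_emod_left]

theorem blockStart_chainBlock_natCast (j : ℕ) (hj : j ≤ 1000) :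
    6 * blockStart (chainBlock x y lo) j =
      6 * j + 6 * j * lo ^ 2 + 6 * lo * j * (j + 1) + j * (j + 1) * (2 * j + 1) := by
  induction j with
  | zero => simp
  | succ j ih =>
    have hexp : chainExponent lo j = (lo + j + 1) ^ 2 := by
      rw [chainExponent, Int.emod_eq_of_lt (by omega) (by omega), Int.toNat_natCast]
    rw [Nat.cast_add_one, blockStart_add_one, mul_add, ih (by omega), chainBlock, hexp,
      List.length_append, List.length_replicate, List.length_singleton]
    push_cast
    ring

theorem blockStart_chainBlock_period : blockStart (chainBlock x y lo) 1000 = chainLength lo := by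
  have := blockStart_chainBlock_natCast (x := x) (y := y) (lo := lo) 1000 le_rfl
  unfold chainLength
  push_cast at this ⊢
  linarith

theorem blockStart_chainBlock_mul_add (q k : ℤ) :
    blockStart (chainBlock x y lo) (q * 1000 + k) =
      q * chainLength lo + blockStart (chainBlock x y lo) k := by
  rw [← blockStart_chainBlock_period (x := x) (y := y)]
  exact blockStart_mul_period_add chainBlock_add q k

theorem chainLabel_add (t : ℤ) : chainLabel x y lo (chainLength lo + t) = chainLabel x y lo t := by
  rw [← blockStart_chainBlock_period (x := x) (y := y)]
  exact blockLabel_period_add chainBlock_ne_nil chainBlock_add t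

theorem isBlockDecomposition_chainLabel (h : x ≠ y) :
    IsBlockDecomposition (chainLabel x y lo) (blockStart (chainBlock x y lo))
      (fun _ => [(x, true)]) (chainExponent lo) (y, true) :=
  isBlockDecomposition_blockLabel (fun _ => by simp [h.symm]) (chainExponent_pos lo)

theorem chainLabel_eq_or_eq (h : x ≠ y) (t : ℤ) :
    chainLabel x y lo t = (x, true) ∨ chainLabel x y lo t = (y, true) := by
  rcases (isBlockDecomposition_chainLabel h).apply_eq_or_mem t with ht | ⟨_, hk⟩
  · exact .inr ht
  · exact .inl (List.mem_singleton.1 hk)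

theorem chainLabel_blockStart (h : x ≠ y) (k : ℤ) :
    chainLabel x y lo (blockStart (chainBlock x y lo) k) = (x, true) := by
  simpa using (isBlockDecomposition_chainLabel (lo := lo) h).apply_word k 0 (by simp)

theorem chainLabel_blockStart_add_one_add (h : x ≠ y) {k : ℤ} {i : ℕ}
    (hi : i < chainExponent lo k) :
    chainLabel x y lo (blockStart (chainBlock x y lo) k + 1 + i) = (y, true) :=
  (isBlockDecomposition_chainLabel (lo := lo) h).apply_run k i hi

theorem chainLabel_add_one_of_eq_left (h : x ≠ y) {t : ℤ} (ht : chainLabel x y lo t = (x, true)) :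
    chainLabel x y lo (t + 1) = (y, true) := by
  have hdecomp := isBlockDecomposition_chainLabel (lo := lo) h
  obtain ⟨k, ⟨i, hi, rfl⟩ | ⟨i, hi, rfl⟩⟩ := hdecomp.exists_eq_start_add t
  · obtain rfl := Nat.lt_one_iff.1 hi
    simpa using chainLabel_blockStart_add_one_add h (chainExponent_pos lo k)
  · rw [hdecomp.apply_run k i hi] at ht
    exact absurd (congrArg Prod.fst ht).symm h

theorem exists_chainBlock_in_window (h : x ≠ y) (s : ℤ) :
    ∃ k, s < blockStart (chainBlock x y lo) k ∧
      blockStart (chainBlock x y lo) k + 1 + chainExponent lo k ≤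
        s + 2 * (lo + 1000) ^ 2 + 2 := by
  have hdecomp := isBlockDecomposition_chainLabel (lo := lo) h
  obtain ⟨k, hk, hk'⟩ := exists_le_lt_of_lt_add_one hdecomp.start_lt_add_one s
  refine ⟨k + 1, hk', ?_⟩
  have hstart := hdecomp.start_add_one k
  have hle := chainExponent_le lo k
  have hle' := chainExponent_le lo (k + 1)
  simp only [List.length_singleton] at hstart
  zify at hstart hle hle' ⊢
  linarith

theorem exists_chainLabel_eq_left (h : x ≠ y) (s : ℤ) :
    ∃ i : ℕ, (i : ℤ) ≤ 2 * (lo + 1000) ^ 2 + 2 ∧ chainLabel x y lo (s + i) = (x, true) := by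
  obtain ⟨k, hk, hk'⟩ := exists_chainBlock_in_window (lo := lo) h s
  obtain ⟨i, hi⟩ := Int.le.dest hk.le
  exact ⟨i, by omega, hi ▸ chainLabel_blockStart h k⟩

theorem exists_chainLabel_eq_right (h : x ≠ y) (s : ℤ) :
    ∃ i : ℕ, (i : ℤ) ≤ 2 * (lo + 1000) ^ 2 + 2 ∧ chainLabel x y lo (s + i) = (y, true) := by
  obtain ⟨k, hk, hk'⟩ := exists_chainBlock_in_window (lo := lo) h s
  obtain ⟨i, hi⟩ := Int.le.dest hk.le
  have hpos := chainExponent_pos lo k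
  refine ⟨i + 1, by omega, ?_⟩
  simpa [← hi, add_assoc] using chainLabel_blockStart_add_one_add h hpos

theorem le_of_chainLength_le {m : ℕ} (hm : chainLength lo ≤ 100 * m) :
    2 * ((lo : ℤ) + 1000) ^ 2 + 4 ≤ m := by
  unfold chainLength at hm
  zify at hm
  nlinarith

theorem not_overlap_chainLabel_swap {lo' : ℕ} (h : IsChainPair x y lo) (h' : IsChainPair y x lo')
    {s s' : ℤ} {m : ℕ} (hm : chainLength lo ≤ 100 * m) :
    ¬ ∀ i : ℕ, i < m → chainLabel x y lo (s + i) = chainLabel y x lo' (s' + i) := by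
  intro hoverlap
  have hlen := le_of_chainLength_le hm
  obtain rfl := h.eq_4000_of_swap h'
  obtain ⟨k, hk, hk'⟩ := exists_chainBlock_in_window (lo := 4000) h.ne s
  obtain ⟨i, hi⟩ := Int.le.dest hk.le
  have hexp : 1 < chainExponent 4000 k := Nat.one_lt_pow two_ne_zero (by omega)
  have hfst := hoverlap (i + 1) (by omega)
  have hsnd := hoverlap (i + 2) (by omega)
  rw [show s + ((i + 1 : ℕ) : ℤ) = blockStart (chainBlock x y 4000) k + 1 + (0 : ℕ) by grind,
    chainLabel_blockStart_add_one_add h.ne (by omega)] at hfst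
  rw [show s + ((i + 2 : ℕ) : ℤ) = blockStart (chainBlock x y 4000) k + 1 + (1 : ℕ) by grind,
    chainLabel_blockStart_add_one_add h.ne hexp,
    show s' + ((i + 2 : ℕ) : ℤ) = s' + (i + 1 : ℕ) + 1 by push_cast; ring,
    chainLabel_add_one_of_eq_left h'.ne hfst.symm] at hsnd
  exact h.ne (congrArg Prod.fst hsnd).symm

theorem IsChainPair.eq_of_overlap {x' y' : GenSym A} {lo' : ℕ} (h : IsChainPair x y lo)
    (h' : IsChainPair x' y' lo') {s s' : ℤ} {m : ℕ} (hm : chainLength lo ≤ 100 * m)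
    (hoverlap : ∀ i : ℕ, i < m → chainLabel x y lo (s + i) = chainLabel x' y' lo' (s' + i)) :
    x = x' ∧ y = y' ∧ lo = lo' := by
  have hlen := le_of_chainLength_le hm
  obtain ⟨i, hi, hx⟩ := exists_chainLabel_eq_left (lo := lo) h.ne s
  obtain ⟨j, hj, hy⟩ := exists_chainLabel_eq_right (lo := lo) h.ne s
  rw [hoverlap _ (by omega)] at hx hy
  rcases chainLabel_eq_or_eq (lo := lo') h'.ne (s' + i) with hi' | hi' <;>
    rcases chainLabel_eq_or_eq (lo := lo') h'.ne (s' + j) with hj' | hj' <;>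
    obtain rfl := congrArg Prod.fst (hx.symm.trans hi') <;>
    obtain rfl := congrArg Prod.fst (hy.symm.trans hj')
  · exact absurd rfl h.ne
  · exact ⟨rfl, rfl, h.eq_of_same h'⟩
  · exact absurd hoverlap (not_overlap_chainLabel_swap h h' hm)
  · exact absurd rfl h.ne

theorem dvd_sub_of_chainLabel_overlap (h : x ≠ y) {s s' : ℤ} {m : ℕ}
    (hm : chainLength lo ≤ 100 * m)
    (hoverlap : ∀ i : ℕ, i < m → chainLabel x y lo (s + i) = chainLabel x y lo (s' + i)) :
    (chainLength lo : ℤ) ∣ s' - s := by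
  have hdecomp := isBlockDecomposition_chainLabel (lo := lo) h
  have hlen := le_of_chainLength_le hm
  obtain ⟨k, hk, hk'⟩ := exists_chainBlock_in_window (lo := lo) h s
  obtain ⟨i, hi⟩ := Int.le.dest hk.le
  have hblock (j : ℤ) (hj : -1 ≤ j) (hj' : j ≤ ([(x, true)].length : ℤ) + chainExponent lo k) :
      chainLabel x y lo (blockStart (chainBlock x y lo) k + j) =
        chainLabel x y lo (s' + i + j) := by
    simp only [List.length_singleton] at hj'
    have := hoverlap (i + j).toNat (by omega)
    rwa [Int.toNat_of_nonneg (by omega), ← add_assoc, ← add_assoc, hi] at this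
  obtain ⟨k', hstart, -, hexp⟩ := hdecomp.exists_block_eq_of_overlap hdecomp hblock
    (List.cons_ne_nil _ _) (List.cons_ne_nil _ _)
  have hmod := emod_eq_of_chainExponent_eq (hexp.resolve_right (by simp))
  obtain ⟨q, rfl⟩ : ∃ q, k' = q * 1000 + k := ⟨(k' - k) / 1000, by omega⟩
  rw [blockStart_chainBlock_mul_add] at hstart
  exact ⟨q, by linarith⟩

end Chain

/-! ### Labels of the relators of function and relation symbols -/

section Symbol

variable {S : IndexedStructure} {m : ℕ}

/-- The word `a₁ ⋯ aₙ`. -/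
def argWord (as : Fin (S.arity m) → S.A) : List (GenSym S.A × Bool) :=
  List.ofFn fun i => (GenSym.elt (as i), true)

open Classical in
/-- The word with which the cyclically reduced relator of the `m`-th symbol starts: it differs from
`argWord as` when the symbol is a function symbol, as the relator then ends with the inverse of the
value of the function, which is to be moved to the front and may cancel. -/
noncomputable def headWord (as : Fin (S.arity m) → S.A) : List (GenSym S.A × Bool) :=
  if S.isFunc m then
    if (argWord as).head? = some (GenSym.elt (S.funcInterp m as), true) then (argWord as).tail
    else (GenSym.elt (S.funcInterp m as), false) :: argWord as
  else argWord as

/-- The word between two powers of `b` in the relator of the `m`-th symbol, extended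
periodically. -/
noncomputable def symbolWord (as : Fin (S.arity m) → S.A) (k : ℤ) : List (GenSym S.A × Bool) :=
  if k % 100 = 0 then headWord as else argWord as

/-- The exponents of `b` in the relator of the `m`-th symbol, extended periodically. -/
def symbolExponent (m : ℕ) (k : ℤ) : ℕ := 100 * m + 1 + (k % 100).toNat

/-- The `k`-th factor of the relator of the `m`-th symbol, extended periodically. -/
noncomputable def symbolBlock (as : Fin (S.arity m) → S.A) (k : ℤ) : List (GenSym S.A × Bool) :=
  symbolWord as k ++ List.replicate (symbolExponent m k) (GenSym.b, true)

/-- The bi-infinite periodic label which repeats the cyclically reduced relator of the `m`-th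
symbol. -/
noncomputable def symbolLabel (as : Fin (S.arity m) → S.A) : ℤ → GenSym S.A × Bool :=
  blockLabel (symbolBlock as)

/-- The length of the cyclically reduced relator of the `m`-th symbol. -/
noncomputable def symbolLength (as : Fin (S.arity m) → S.A) : ℕ :=
  (headWord as).length + 99 * S.arity m + 10000 * m + 5050

theorem symbolExponent_add (k : ℤ) : symbolExponent m (100 + k) = symbolExponent m k := by
  rw [symbolExponent, symbolExponent, Int.add_emod_left]

theorem natCast_symbolExponent (k : ℤ) :
    (symbolExponent m k : ℤ) = 100 * m + 1 + k % 100 := by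
  unfold symbolExponent
  omega

theorem symbolExponent_pos (k : ℤ) : 0 < symbolExponent m k := by
  unfold symbolExponent
  omega

variable {as : Fin (S.arity m) → S.A}

@[simp]
theorem length_argWord : (argWord as).length = S.arity m := by simp [argWord]

theorem argWord_ne_nil (hm : 1 ≤ m) : argWord as ≠ [] :=
  List.ne_nil_of_length_pos (length_argWord (as := as) ▸ S.arity_pos m hm)

theorem exists_eq_of_mem_argWord {c : GenSym S.A × Bool} (h : c ∈ argWord as) :
    ∃ a, c = (GenSym.elt a, true) := by
  obtain ⟨i, rfl⟩ := List.mem_ofFn.1 h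
  exact ⟨_, rfl⟩

theorem headWord_cases (as : Fin (S.arity m) → S.A) :
    headWord as = argWord as ∨ headWord as = (argWord as).tail ∨
      headWord as = (GenSym.elt (S.funcInterp m as), false) :: argWord as ∧
        (argWord as).head? ≠ some (GenSym.elt (S.funcInterp m as), true) := by
  unfold headWord
  split_ifs with hfunc hhead
  · exact .inr (.inl rfl)
  · exact .inr (.inr ⟨rfl, hhead⟩)
  · exact .inl rfl

theorem length_headWord_le : (headWord as).length ≤ S.arity m + 1 := by
  rcases headWord_cases as with h | h | ⟨h, -⟩ <;> rw [h] <;> simp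
  omega

theorem arity_le_length_headWord : S.arity m ≤ (headWord as).length + 1 := by
  rcases headWord_cases as with h | h | ⟨h, -⟩ <;> rw [h] <;> simp <;> omega

theorem symbolWord_of_emod_eq {k : ℤ} (hk : k % 100 = 0) : symbolWord as k = headWord as :=
  if_pos hk

theorem symbolWord_of_emod_ne {k : ℤ} (hk : k % 100 ≠ 0) : symbolWord as k = argWord as :=
  if_neg hk

theorem exists_eq_of_mem_symbolWord {c : GenSym S.A × Bool} {k : ℤ} (h : c ∈ symbolWord as k) :
    ∃ a e, c = (GenSym.elt a, e) := by
  have harg (hc : c ∈ argWord as) : ∃ a e, c = (GenSym.elt a, e) :=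
    (exists_eq_of_mem_argWord hc).imp fun _ ha => ⟨_, ha⟩
  unfold symbolWord at h
  split_ifs at h
  · rcases headWord_cases as with hhead | hhead | ⟨hhead, -⟩ <;> rw [hhead] at h
    · exact harg h
    · exact harg (List.mem_of_mem_tail h)
    · exact (List.mem_cons.1 h).elim (fun he => ⟨_, _, he⟩) harg
  · exact harg h

theorem symbolBlock_add (k : ℤ) : symbolBlock as (100 + k) = symbolBlock as k := by
  rw [symbolBlock, symbolBlock, symbolExponent_add, symbolWord, symbolWord, Int.add_emod_left]

theorem symbolBlock_ne_nil (k : ℤ) : symbolBlock as k ≠ [] :=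
  List.append_ne_nil_of_right_ne_nil _ (by simpa using (symbolExponent_pos k).ne')

theorem isBlockDecomposition_symbolLabel (as : Fin (S.arity m) → S.A) :
    IsBlockDecomposition (symbolLabel as) (blockStart (symbolBlock as)) (symbolWord as)
      (symbolExponent m) (GenSym.b, true) := by
  refine isBlockDecomposition_blockLabel (fun k hk => ?_) symbolExponent_pos
  obtain ⟨a, e, h⟩ := exists_eq_of_mem_symbolWord hk
  simp at h

theorem blockStart_symbolBlock_natCast (j : ℕ) (hj : j ≤ 99) :
    2 * blockStart (symbolBlock as) (j + 1) =
      2 * (headWord as).length + 2 * j * S.arity m + 200 * (j + 1) * m + (j + 1) * (j + 2) := by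
  have hstep := (isBlockDecomposition_symbolLabel as).start_add_one
  induction j with
  | zero =>
    rw [Nat.cast_zero, hstep, natCast_symbolExponent, symbolWord_of_emod_eq rfl, blockStart_zero]
    ring
  | succ j ih =>
    have hmod : ((j : ℤ) + 1) % 100 = j + 1 := Int.emod_eq_of_lt (by omega) (by omega)
    rw [Nat.cast_add_one, hstep, mul_add, mul_add, ih (by omega), natCast_symbolExponent,
      symbolWord_of_emod_ne (by omega), length_argWord, hmod]
    ring

theorem blockStart_symbolBlock_period : blockStart (symbolBlock as) 100 = symbolLength as := by
  have := blockStart_symbolBlock_natCast (as := as) 99 le_rfl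
  unfold symbolLength
  push_cast at this ⊢
  linarith

theorem symbolLabel_add (t : ℤ) : symbolLabel as (symbolLength as + t) = symbolLabel as t := by
  rw [← blockStart_symbolBlock_period]
  exact blockLabel_period_add symbolBlock_ne_nil symbolBlock_add t

theorem blockStart_symbolBlock_mul_add (q k : ℤ) :
    blockStart (symbolBlock as) (q * 100 + k) =
      q * symbolLength as + blockStart (symbolBlock as) k := by
  rw [← blockStart_symbolBlock_period]
  exact blockStart_mul_period_add symbolBlock_add q k

theorem symbolLabel_eq_or_exists_eq (as : Fin (S.arity m) → S.A) (t : ℤ) :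
    symbolLabel as t = (.b, true) ∨ ∃ a e, symbolLabel as t = (.elt a, e) :=
  ((isBlockDecomposition_symbolLabel as).apply_eq_or_mem t).imp_right fun ⟨_, hk⟩ =>
    exists_eq_of_mem_symbolWord hk

theorem exists_start_of_symbolLabel_snd_eq_false {t : ℤ} (ht : (symbolLabel as t).2 = false) :
    ∃ q, t = blockStart (symbolBlock as) (q * 100) ∧
      headWord as = (GenSym.elt (S.funcInterp m as), false) :: argWord as ∧
      (argWord as).head? ≠ some (GenSym.elt (S.funcInterp m as), true) := by
  have hdecomp := isBlockDecomposition_symbolLabel as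
  have harg {c} (hc : c ∈ argWord as) : c.2 ≠ false := by
    obtain ⟨a, rfl⟩ := exists_eq_of_mem_argWord hc
    simp
  obtain ⟨k, ⟨i, hi, rfl⟩ | ⟨i, hi, rfl⟩⟩ := hdecomp.exists_eq_start_add t
  · have hmem := hdecomp.apply_word_mem hi
    have hk : k % 100 = 0 := by
      by_contra hk
      exact harg (symbolWord_of_emod_ne (as := as) hk ▸ hmem) ht
    rw [symbolWord_of_emod_eq hk] at hmem
    rcases headWord_cases as with h | h | h
    · exact absurd ht (harg (h ▸ hmem))
    · exact absurd ht (harg (List.mem_of_mem_tail (h ▸ hmem)))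
    refine ⟨k / 100, ?_, h⟩
    rw [Int.ediv_mul_cancel (Int.dvd_of_emod_eq_zero hk)]
    cases i with
    | zero => simp
    | succ i =>
      refine absurd ht (harg ?_)
      rw [hdecomp.apply_word k _ hi]
      simp only [symbolWord_of_emod_eq hk, h.1, List.getElem_cons_succ, List.getElem_mem]
  · rw [hdecomp.apply_run k i hi] at ht
    simp at ht

theorem symbolLength_dvd_of_snd_eq_false {t : ℤ} (ht : (symbolLabel as t).2 = false) :
    (symbolLength as : ℤ) ∣ t := by
  obtain ⟨q, rfl, -⟩ := exists_start_of_symbolLabel_snd_eq_false ht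
  rw [← add_zero (q * 100), blockStart_symbolBlock_mul_add]
  simp

theorem symbolLabel_sub_one_of_snd_eq_false {t : ℤ} (ht : (symbolLabel as t).2 = false) :
    symbolLabel as (t - 1) = (.b, true) := by
  obtain ⟨q, rfl, -⟩ := exists_start_of_symbolLabel_snd_eq_false ht
  exact (isBlockDecomposition_symbolLabel as).apply_start_sub_one _

theorem symbolLabel_add_one_ne_of_snd_eq_false (hm : 1 ≤ m) {t : ℤ}
    (ht : (symbolLabel as t).2 = false) :
    symbolLabel as (t + 1) ≠ invLetter (symbolLabel as t) := by
  obtain ⟨q, rfl, hhead, hne⟩ := exists_start_of_symbolLabel_snd_eq_false ht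
  have hdecomp := isBlockDecomposition_symbolLabel as
  have hword : symbolWord as (q * 100) = _ :=
    (symbolWord_of_emod_eq (Int.mul_emod_left q 100)).trans hhead
  have hlen := List.length_pos_iff.2 (argWord_ne_nil (as := as) hm)
  have hfst := hdecomp.apply_word (q * 100) 0 (by simp [hword])
  have hsnd := hdecomp.apply_word (q * 100) 1 (by simpa [hword] using hlen)
  simp only [hword, List.getElem_cons_zero, List.getElem_cons_succ, Nat.cast_zero, Nat.cast_one,
    add_zero] at hfst hsnd
  intro heq
  rw [hfst, hsnd] at heq
  exact hne (by rw [List.head?_eq_getElem?, List.getElem?_eq_getElem hlen, heq]; rfl)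

theorem exists_symbolBlock_in_window (as : Fin (S.arity m) → S.A) (s : ℤ) :
    ∃ k, s < blockStart (symbolBlock as) k ∧ 1 ≤ k % 100 ∧ k % 100 ≤ 98 ∧
      blockStart (symbolBlock as) k + S.arity m + symbolExponent m k ≤
        s + 4 * S.arity m + 400 * m + 203 := by
  have hdecomp := isBlockDecomposition_symbolLabel as
  obtain ⟨k, hk, hk'⟩ := exists_le_lt_of_lt_add_one hdecomp.start_lt_add_one s
  have hhead := length_headWord_le (as := as)
  have hstep (k : ℤ) : blockStart (symbolBlock as) (k + 1) = blockStart (symbolBlock as) k +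
      (if k % 100 = 0 then ((headWord as).length : ℤ) else S.arity m) +
        (100 * m + 1 + k % 100) := by
    rw [hdecomp.start_add_one, natCast_symbolExponent, symbolWord]
    split_ifs <;> simp
  have hstep₀ := hstep k
  have hstep₁ := hstep (k + 1)
  have hstep₂ := hstep (k + 1 + 1)
  -- The first complete block in the window serves unless its index is `99` or `0` modulo `100`.
  rcases (by omega : k % 100 ≤ 97 ∨ k % 100 = 98 ∨ k % 100 = 99) with hmod | hmod | hmod
  · refine ⟨k + 1, by omega, by omega, by omega, ?_⟩
    rw [natCast_symbolExponent]
    split_ifs at hstep₀ <;> omega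
  · refine ⟨k + 1 + 1 + 1, by omega, by omega, by omega, ?_⟩
    rw [natCast_symbolExponent]
    rw [if_neg (by omega)] at hstep₀ hstep₁
    rw [if_pos (by omega)] at hstep₂
    omega
  · refine ⟨k + 1 + 1, by omega, by omega, by omega, ?_⟩
    rw [natCast_symbolExponent]
    rw [if_neg (by omega)] at hstep₀
    rw [if_pos (by omega)] at hstep₁
    omega

theorem le_of_symbolLength_le {l : ℕ} (hl : symbolLength as ≤ 20 * l) :
    4 * S.arity m + 400 * m + 205 ≤ l := by
  have := arity_le_length_headWord (as := as)
  unfold symbolLength at hl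
  omega

theorem exists_symbolLabel_eq_b (s : ℤ) {l : ℕ} (hl : symbolLength as ≤ 20 * l) :
    ∃ i : ℕ, i < l ∧ symbolLabel as (s + i) = (.b, true) := by
  obtain ⟨k, hk, -, -, hk'⟩ := exists_symbolBlock_in_window as s
  have hl' := le_of_symbolLength_le hl
  obtain ⟨i, hi⟩ := Int.le.dest (show s ≤ blockStart (symbolBlock as) k - 1 by omega)
  exact ⟨i, by omega, hi ▸ (isBlockDecomposition_symbolLabel as).apply_start_sub_one k⟩

theorem exists_symbolLabel_eq_elt (hm : 1 ≤ m) (s : ℤ) {l : ℕ} (hl : symbolLength as ≤ 20 * l) :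
    ∃ i : ℕ, i < l ∧ ∃ a, symbolLabel as (s + i) = (.elt a, true) := by
  obtain ⟨k, hk, hmod, -, hk'⟩ := exists_symbolBlock_in_window as s
  have hl' := le_of_symbolLength_le hl
  obtain ⟨i, hi⟩ := Int.le.dest hk.le
  have hword := symbolWord_of_emod_ne (as := as) (k := k) (by omega)
  have hmem := (isBlockDecomposition_symbolLabel as).apply_word_mem (k := k) (i := 0)
    (hword ▸ List.length_pos_iff.2 (argWord_ne_nil hm))
  rw [Nat.cast_zero, add_zero, hword, ← hi] at hmem
  exact ⟨i, by omega, exists_eq_of_mem_argWord hmem⟩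

section Overlap

variable {m' : ℕ} {as' : Fin (S.arity m') → S.A}

/-- If the head word of `as'` is empty, then two runs of `b` merge, but their total length is `1`
modulo `100`, as is the exponent in a relator only at the multiples of `100`. -/
theorem symbolExponent_eq_of_run_eq (hm' : 1 ≤ m') {k k' : ℤ} (hk : 1 ≤ k % 100)
    (h : symbolExponent m k = symbolExponent m' k' ∨ symbolWord as' (k' + 1) = [] ∧
      (symbolWord as' (k' + 2) ≠ [] →
        symbolExponent m k = symbolExponent m' k' + symbolExponent m' (k' + 1))) :
    symbolExponent m k = symbolExponent m' k' := by
  refine h.resolve_right fun ⟨hnil, hsum⟩ => ?_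
  have hmod : (k' + 1) % 100 = 0 := by
    by_contra hne
    exact argWord_ne_nil hm' (symbolWord_of_emod_ne (as := as') hne ▸ hnil)
  have := hsum (symbolWord_of_emod_ne (as := as') (k := k' + 2) (by omega) ▸ argWord_ne_nil hm')
  unfold symbolExponent at this
  omega

theorem argWord_injective : Function.Injective (argWord : (Fin (S.arity m) → S.A) → _) := by
  intro as as' h
  funext i
  simpa using congrFun (List.ofFn_injective h) i

theorem symbolLabel_eq_of_overlap (hm : 1 ≤ m) (hm' : 1 ≤ m') {s s' : ℤ} {l : ℕ}
    (hl : symbolLength as ≤ 20 * l)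
    (hoverlap : ∀ i : ℕ, i < l → symbolLabel as (s + i) = symbolLabel as' (s' + i)) :
    symbolLength as = symbolLength as' ∧
      ∀ i, symbolLabel as (s + i) = symbolLabel as' (s' + i) := by
  have hl' := le_of_symbolLength_le hl
  obtain ⟨k, hk, hmod, hmod', hk'⟩ := exists_symbolBlock_in_window as s
  obtain ⟨i, hi⟩ := Int.le.dest hk.le
  have hword := symbolWord_of_emod_ne (as := as) (k := k) (by omega)
  have hword₁ := symbolWord_of_emod_ne (as := as) (k := k + 1) (by omega)
  have hblock (j : ℤ) (hj : -1 ≤ j) (hj' : j ≤ (symbolWord as k).length + symbolExponent m k) :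
      symbolLabel as (blockStart (symbolBlock as) k + j) = symbolLabel as' (s' + i + j) := by
    rw [hword, length_argWord] at hj'
    have := hoverlap (i + j).toNat (by omega)
    rwa [Int.toNat_of_nonneg (by omega), ← add_assoc, ← add_assoc, hi] at this
  obtain ⟨k', hstart, hword', hrun⟩ :=
    (isBlockDecomposition_symbolLabel as).exists_block_eq_of_overlap
      (isBlockDecomposition_symbolLabel as') hblock (hword ▸ argWord_ne_nil hm)
      (hword₁ ▸ argWord_ne_nil hm)
  have hexp := symbolExponent_eq_of_run_eq hm' hmod hrun
  obtain ⟨rfl, hmodeq⟩ : m = m' ∧ k % 100 = k' % 100 := by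
    unfold symbolExponent at hexp
    omega
  rw [hword, symbolWord_of_emod_ne (by omega)] at hword'
  obtain rfl := argWord_injective hword'
  obtain ⟨q, rfl⟩ : ∃ q, k' = q * 100 + k := ⟨(k' - k) / 100, by omega⟩
  rw [blockStart_symbolBlock_mul_add] at hstart
  refine ⟨rfl, fun j => ?_⟩
  rw [show s' + j = q * symbolLength as' + (s + j) by linarith,
    apply_mul_add_of_apply_add symbolLabel_add]

end Overlap

end Symbol

/-! ### Labels of all relators -/

section ShiftOrReverse

variable {α : Type*} {σ σ' σ₀ σ₀' : ℤ → α × Bool} {n n' : ℕ}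

/-- The label `σ` reads the line labelled by `σ₀`, from some point on, in one of the two
directions. -/
def IsShiftOrReverse (σ₀ σ : ℤ → α × Bool) : Prop :=
  ∃ s, (∀ i, σ i = σ₀ (s + i)) ∨ ∀ i, σ i = invLetter (σ₀ (s - i))

namespace IsShiftOrReverse

theorem shift (h : IsShiftOrReverse σ₀ σ) (t : ℤ) : IsShiftOrReverse σ₀ fun i => σ (t + i) := by
  obtain ⟨s, hs | hs⟩ := h
  · exact ⟨s + t, .inl fun i => (hs _).trans (by rw [add_assoc])⟩
  · exact ⟨s - t, .inr fun i => (hs _).trans (by rw [sub_sub])⟩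

theorem reverse (h : IsShiftOrReverse σ₀ σ) :
    IsShiftOrReverse σ₀ fun i => invLetter (σ (-1 - i)) := by
  obtain ⟨s, hs | hs⟩ := h
  · exact ⟨s - 1, .inr fun i => by simp only [hs]; congr 2; ring⟩
  · exact ⟨s + 1, .inl fun i => by simp only [hs, invLetter_invLetter]; congr 1; ring⟩

theorem isReducedLabel (h : IsShiftOrReverse σ₀ σ) (hred : IsReducedLabel σ₀) :
    IsReducedLabel σ := by
  intro t heq
  obtain ⟨s, hs | hs⟩ := h
  · rw [hs, hs, ← add_assoc] at heq
    exact hred _ heq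
  · rw [hs, hs, invLetter_invLetter] at heq
    refine hred (s - (t + 1)) ?_
    rw [heq]
    congr 1
    ring

theorem periodic (h : IsShiftOrReverse σ₀ σ) {τ : ℤ} (hτ : ∀ t, σ₀ (τ + t) = σ₀ t) (t : ℤ) :
    σ (τ + t) = σ t := by
  obtain ⟨s, hs | hs⟩ := h
  · rw [hs, hs, ← hτ (s + t), add_left_comm]
  · rw [hs, hs, ← hτ (s - (τ + t))]
    congr 2
    ring

theorem periodic_base (h : IsShiftOrReverse σ₀ σ) {τ : ℤ} (hτ : ∀ t, σ (t + τ) = σ t) (t : ℤ) :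
    σ₀ (t + τ) = σ₀ t := by
  obtain ⟨s, hs | hs⟩ := h
  · have := hτ (t - s)
    rw [hs, hs] at this
    convert this using 2 <;> ring
  · have := invLetter_injective ((hs _).symm.trans ((hτ (s - t - τ)).trans (hs _)))
    convert this.symm using 2 <;> ring

theorem exists_fst_eq (h : IsShiftOrReverse σ₀ σ) (t : ℤ) : ∃ u, (σ t).1 = (σ₀ u).1 := by
  obtain ⟨s, hs | hs⟩ := h
  · exact ⟨s + t, by rw [hs]⟩
  · exact ⟨s - t, by rw [hs, invLetter]⟩

theorem exists_constant_window (h : IsShiftOrReverse σ₀ σ) {t : ℤ} {l : ℕ} {a : α × Bool}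
    (ha : ∀ i : ℕ, i < l → σ (t + i) = a) : ∃ s a', ∀ i : ℕ, i < l → σ₀ (s + i) = a' := by
  obtain ⟨s, hs | hs⟩ := h
  · exact ⟨s + t, a, fun i hi => by rw [add_assoc, ← hs, ha i hi]⟩
  · refine ⟨s - t - (l - 1 : ℕ), invLetter a, fun i hi => ?_⟩
    rw [← ha (l - 1 - i) (by omega), hs, invLetter_invLetter]
    congr 1
    omega

theorem eq_of_overlap (h : IsShiftOrReverse σ₀ σ) (h' : IsShiftOrReverse σ₀' σ') {l : ℕ}
    (hsame : ∀ s s' : ℤ, (∀ i : ℕ, i < l → σ₀ (s + i) = σ₀' (s' + i)) →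
      n = n' ∧ ∀ i, σ₀ (s + i) = σ₀' (s' + i))
    (hopposite : ∀ s s' : ℤ, ¬ ∀ i : ℕ, i < l → σ₀ (s + i) = invLetter (σ₀' (s' - i)))
    (hoverlap : ∀ i : ℕ, i < l → σ i = σ' i) : σ = σ' ∧ n = n' := by
  obtain ⟨s, hs | hs⟩ := h <;> obtain ⟨s', hs' | hs'⟩ := h'
  · obtain ⟨hn, heq⟩ := hsame s s' fun i hi => by rw [← hs, ← hs', hoverlap i hi]
    exact ⟨funext fun i => by rw [hs, hs', heq], hn⟩
  · exact (hopposite s s' fun i hi => by rw [← hs, ← hs', hoverlap i hi]).elim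
  · refine (hopposite (s - (l - 1 : ℕ)) (s' + (l - 1 : ℕ)) fun i hi => ?_).elim
    have := (hs _).symm.trans ((hoverlap (l - 1 - i) (by omega)).trans (hs' _))
    rw [show s' + ((l - 1 : ℕ) : ℤ) - i = s' + (l - 1 - i : ℕ) by omega, ← this,
      invLetter_invLetter]
    congr 1
    omega
  · obtain ⟨hn, heq⟩ := hsame (s - (l - 1 : ℕ)) (s' - (l - 1 : ℕ)) fun i hi => by
      have := invLetter_injective
        ((hs _).symm.trans ((hoverlap (l - 1 - i) (by omega)).trans (hs' _)))
      rw [show s - ((l - 1 : ℕ) : ℤ) + i = s - (l - 1 - i : ℕ) by omega, this]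
      congr 1
      omega
    refine ⟨funext fun i => ?_, hn⟩
    rw [hs, hs']
    have := heq ((l - 1 : ℕ) - i)
    rw [sub_add_sub_cancel, sub_add_sub_cancel] at this
    rw [this]

end IsShiftOrReverse

/-- The closure of a family of labels under shifts and reversal. -/
def labelClosure (R : (ℤ → α × Bool) → ℕ → Prop) (σ : ℤ → α × Bool) (n : ℕ) : Prop :=
  ∃ σ₀, R σ₀ n ∧ IsShiftOrReverse σ₀ σ

end ShiftOrReverse

section RelatorLabel

/-- The torsion generators of `G(𝒜)`, with the orders imposed by the presentation. -/
inductive IsTorsionLetter {A : Type} (p₁ p₂ : ℕ) : GenSym A → ℕ → Prop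
  | f1 : IsTorsionLetter p₁ p₂ .f1 p₁
  | f2 : IsTorsionLetter p₁ p₂ .f2 p₂

/-- The labels, with their periods, spelled by the relators. -/
inductive IsRelatorBase (S : IndexedStructure) (p₁ p₂ : ℕ) :
    (ℤ → GenSym S.A × Bool) → ℕ → Prop
  | torsion {f : GenSym S.A} {p : ℕ} (h : IsTorsionLetter p₁ p₂ f p) :
      IsRelatorBase S p₁ p₂ (fun _ => (f, true)) p
  | chain {x y : GenSym S.A} {lo : ℕ} (h : IsChainPair x y lo) :
      IsRelatorBase S p₁ p₂ (chainLabel x y lo) (chainLength lo)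
  | symbol (m : ℕ) (hm : 1 ≤ m) (as : Fin (S.arity m) → S.A)
      (h : S.isFunc m ∨ S.relInterp m as) :
      IsRelatorBase S p₁ p₂ (symbolLabel as) (symbolLength as)

/-- The labels of the lines spelled by the relators. -/
abbrev IsRelatorLabel (S : IndexedStructure) (p₁ p₂ : ℕ) : (ℤ → GenSym S.A × Bool) → ℕ → Prop :=
  labelClosure (IsRelatorBase S p₁ p₂)

/-- The labels of the lines spelled by the chain relators. -/
def IsChainRelatorLabel {A : Type} (σ : ℤ → GenSym A × Bool) (n : ℕ) : Prop :=
  ∃ x y lo, IsChainPair x y lo ∧ IsShiftOrReverse (chainLabel x y lo) σ ∧ n = chainLength lo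

section Generators

variable {A : Type} {p₁ p₂ p p' lo : ℕ} {x y f : GenSym A}

theorem IsTorsionLetter.lt (h : IsTorsionLetter p₁ p₂ f p) (h₁ : 10 ^ 10 < p₁)
    (h₂ : 10 ^ 10 < p₂) : 10 ^ 10 < p := by
  cases h <;> assumption

theorem IsTorsionLetter.order_unique (h : IsTorsionLetter p₁ p₂ f p)
    (h' : IsTorsionLetter p₁ p₂ f p') : p = p' := by
  cases h <;> cases h' <;> rfl

theorem IsTorsionLetter.eq_f1_or_f2 (h : IsTorsionLetter p₁ p₂ f p) : f = .f1 ∨ f = .f2 := by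
  cases h <;> simp

theorem IsChainPair.right_ne_b (h : IsChainPair x y lo) : y ≠ .b := by cases h <;> simp

theorem IsChainPair.right_ne_elt (h : IsChainPair x y lo) (a : A) : y ≠ .elt a := by
  cases h <;> simp

theorem not_constant_window_chainLabel (h : x ≠ y) {s : ℤ} {l : ℕ} {a : GenSym A × Bool}
    (hl : 2 * ((lo : ℤ) + 1000) ^ 2 + 2 < l) :
    ¬ ∀ i : ℕ, i < l → chainLabel x y lo (s + i) = a := by
  intro hconst
  obtain ⟨i, hi, hx⟩ := exists_chainLabel_eq_left (lo := lo) h s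
  obtain ⟨j, hj, hy⟩ := exists_chainLabel_eq_right (lo := lo) h s
  rw [hconst _ (by omega)] at hx hy
  exact h (congrArg Prod.fst (hx.symm.trans hy))

end Generators

theorem symbolLabel_fst_ne {S : IndexedStructure} {m : ℕ} (as : Fin (S.arity m) → S.A) (t : ℤ)
    {y : GenSym S.A} (hb : y ≠ .b) (helt : ∀ a, y ≠ .elt a) : (symbolLabel as t).1 ≠ y := by
  rcases symbolLabel_eq_or_exists_eq as t with h | ⟨a, _, h⟩ <;> rw [h]
  exacts [hb.symm, (helt a).symm]

variable {S : IndexedStructure} {p₁ p₂ : ℕ} {σ σ' : ℤ → GenSym S.A × Bool} {n n' : ℕ}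

namespace IsRelatorBase

theorem hundred_le (h : IsRelatorBase S p₁ p₂ σ n) (h₁ : 10 ^ 10 < p₁) (h₂ : 10 ^ 10 < p₂) :
    100 ≤ n := by
  rcases h with h | h | ⟨m, hm, as, h⟩
  · have := h.lt h₁ h₂
    omega
  · unfold chainLength
    omega
  · unfold symbolLength
    omega

theorem apply_add (h : IsRelatorBase S p₁ p₂ σ n) (t : ℤ) : σ (n + t) = σ t := by
  rcases h with h | h | ⟨m, hm, as, h⟩
  exacts [rfl, chainLabel_add t, symbolLabel_add t]

theorem eq_of_snd_eq_false (h : IsRelatorBase S p₁ p₂ σ n) (hn : 100 ≤ n) {t u : ℤ}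
    (ht : (σ t).2 = false) (hu : (σ u).2 = false) (htu : |t - u| < 100) : t = u := by
  suffices ∀ {t}, (σ t).2 = false → (n : ℤ) ∣ t from
    sub_eq_zero.1 (Int.eq_zero_of_abs_lt_dvd (dvd_sub (this ht) (this hu)) (by omega))
  intro t ht
  rcases h with h | h | ⟨m, hm, as, h⟩
  · cases ht
  · rcases chainLabel_eq_or_eq h.ne t with h | h <;> rw [h] at ht <;> cases ht
  · exact symbolLength_dvd_of_snd_eq_false ht

theorem isReducedLabel (h : IsRelatorBase S p₁ p₂ σ n) : IsReducedLabel σ := by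
  intro t heq
  have hsnd := congrArg Prod.snd heq
  rcases h with h | h | ⟨m, hm, as, h⟩
  · cases hsnd
  · rcases chainLabel_eq_or_eq h.ne t with ht | ht <;>
      rcases chainLabel_eq_or_eq h.ne (t + 1) with ht' | ht' <;>
      rw [ht, ht', invLetter] at hsnd <;> cases hsnd
  · cases ht : (symbolLabel as t).2
    · exact symbolLabel_add_one_ne_of_snd_eq_false hm ht heq
    · rw [invLetter, ht] at hsnd
      have := symbolLabel_sub_one_of_snd_eq_false hsnd
      rw [add_sub_cancel_right] at this
      rcases symbolLabel_eq_or_exists_eq as (t + 1) with h | ⟨a, _, h⟩ <;>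
        rw [h, this] at heq <;> cases heq

theorem eq_of_overlap_torsion (h' : IsRelatorBase S p₁ p₂ σ' n') {f : GenSym S.A}
    (h : IsTorsionLetter p₁ p₂ f n) {s' : ℤ} {l : ℕ} (hl : 10 ^ 8 < l)
    (hoverlap : ∀ i : ℕ, i < l → σ' (s' + i) = (f, true)) :
    n = n' ∧ ∀ t, σ' t = (f, true) := by
  rcases h' with h' | h' | ⟨m, hm, as, h'⟩
  · obtain rfl := congrArg Prod.fst (hoverlap 0 (by omega))
    exact ⟨h.order_unique h', fun _ => rfl⟩
  · have hlo : ((_ : ℕ) : ℤ) ≤ 4000 := Nat.cast_le.2 h'.le_4000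
    exact absurd hoverlap (not_constant_window_chainLabel h'.ne (by zify at hl; nlinarith))
  · refine absurd (congrArg Prod.fst (hoverlap 0 (by omega))) (symbolLabel_fst_ne as _ ?_ ?_) <;>
      cases h <;> simp

theorem eq_of_overlap_chain (h' : IsRelatorBase S p₁ p₂ σ' n') {x y : GenSym S.A} {lo : ℕ}
    (h : IsChainPair x y lo) {s s' : ℤ} {l : ℕ} (hl : chainLength lo ≤ 100 * l)
    (hoverlap : ∀ i : ℕ, i < l → chainLabel x y lo (s + i) = σ' (s' + i)) :
    chainLength lo = n' ∧ ∀ i, chainLabel x y lo (s + i) = σ' (s' + i) := by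
  have hl' := le_of_chainLength_le hl
  rcases h' with h' | h' | ⟨m, hm, as, h'⟩
  · exact absurd hoverlap (not_constant_window_chainLabel h.ne (by omega))
  · obtain ⟨rfl, rfl, rfl⟩ := h.eq_of_overlap h' hl hoverlap
    obtain ⟨q, hq⟩ := dvd_sub_of_chainLabel_overlap h.ne hl hoverlap
    refine ⟨rfl, fun i => ?_⟩
    rw [show s' + i = q * chainLength lo + (s + i) by linarith,
      apply_mul_add_of_apply_add chainLabel_add]
  · obtain ⟨j, hj, hy⟩ := exists_chainLabel_eq_right (lo := lo) h.ne s
    rw [hoverlap _ (by omega)] at hy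
    exact absurd (congrArg Prod.fst hy) (symbolLabel_fst_ne as _ h.right_ne_b h.right_ne_elt)

theorem eq_of_overlap (h : IsRelatorBase S p₁ p₂ σ n) (h' : IsRelatorBase S p₁ p₂ σ' n')
    (h₁ : 10 ^ 10 < p₁) (h₂ : 10 ^ 10 < p₂) {s s' : ℤ} {l : ℕ} (hl : n ≤ 20 * l)
    (hoverlap : ∀ i : ℕ, i < l → σ (s + i) = σ' (s' + i)) :
    n = n' ∧ ∀ i, σ (s + i) = σ' (s' + i) := by
  rcases h with h | h | ⟨m, hm, as, h⟩
  · have := h.lt h₁ h₂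
    obtain ⟨hn, heq⟩ := h'.eq_of_overlap_torsion h (by omega) fun i hi => (hoverlap i hi).symm
    exact ⟨hn, fun i => (heq _).symm⟩
  · exact h'.eq_of_overlap_chain h (by omega) hoverlap
  obtain ⟨i, hi, hb⟩ := exists_symbolLabel_eq_b (as := as) s hl
  obtain ⟨j, hj, a, helt⟩ := exists_symbolLabel_eq_elt (as := as) hm s hl
  rw [hoverlap _ (by omega)] at hb helt
  rcases h' with h' | @⟨x, y, lo, h'⟩ | ⟨m, hm', as', h'⟩
  · cases hb.symm.trans helt
  · have hx {t : ℤ} {z : GenSym S.A} (ht : chainLabel x y lo t = (z, true)) (hz : y ≠ z) :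
        x = z := by
      rcases chainLabel_eq_or_eq (lo := lo) h'.ne t with h | h <;>
        obtain rfl := congrArg Prod.fst (h.symm.trans ht)
      exacts [rfl, absurd rfl hz]
    cases (hx hb h'.right_ne_b).symm.trans (hx helt (h'.right_ne_elt a))
  · exact symbolLabel_eq_of_overlap hm hm' hl hoverlap

theorem not_opposite_overlap (h : IsRelatorBase S p₁ p₂ σ n) (h' : IsRelatorBase S p₁ p₂ σ' n')
    (h₁ : 10 ^ 10 < p₁) (h₂ : 10 ^ 10 < p₂) {s s' : ℤ} {l : ℕ} (hl : 3 ≤ l) :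
    ¬ ∀ i : ℕ, i < l → σ (s + i) = invLetter (σ' (s' - i)) := by
  intro hoverlap
  obtain ⟨i, j, hij, hsnd⟩ := Fintype.exists_ne_map_eq_of_card_lt
    (fun i : Fin 3 => (σ (s + (i : ℕ))).2) (by simp)
  have hne (i : Fin 3) : (σ (s + (i : ℕ))).2 = !(σ' (s' - (i : ℕ))).2 := by
    rw [hoverlap i (by omega)]
    rfl
  cases hi : (σ (s + (i : ℕ))).2
  · have := h.eq_of_snd_eq_false (h.hundred_le h₁ h₂) hi (hsnd ▸ hi) (abs_lt.2 (by omega))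
    omega
  · have hi' := hsnd.symm.trans hi
    simp only [hne, Bool.not_eq_true'] at hi hi'
    have := h'.eq_of_snd_eq_false (h'.hundred_le h₁ h₂) hi hi' (abs_lt.2 (by omega))
    omega

end IsRelatorBase

theorem IsRelatorLabel.hundred_le (h : IsRelatorLabel S p₁ p₂ σ n) (h₁ : 10 ^ 10 < p₁)
    (h₂ : 10 ^ 10 < p₂) : 100 ≤ n :=
  let ⟨_, hbase, _⟩ := h
  hbase.hundred_le h₁ h₂

theorem IsRelatorLabel.torsion_or_chain (h : IsRelatorLabel S p₁ p₂ σ n) {t : ℤ}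
    (ht : (σ t).1 = .f1 ∨ (σ t).1 = .f2) :
    (∃ f e, IsTorsionLetter p₁ p₂ f n ∧ ∀ t, σ t = (f, e)) ∨ IsChainRelatorLabel σ n := by
  obtain ⟨σ₀, h | h | ⟨m, hm, as, -⟩, hσ⟩ := h
  · obtain ⟨s, hs | hs⟩ := hσ
    exacts [.inl ⟨_, true, h, hs⟩, .inl ⟨_, false, h, hs⟩]
  · exact .inr ⟨_, _, _, h, hσ, rfl⟩
  · obtain ⟨u, hu⟩ := hσ.exists_fst_eq t
    rw [hu] at ht
    rcases ht with ht | ht <;> exact absurd ht (symbolLabel_fst_ne as u (by simp) (by simp))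

namespace IsChainRelatorLabel

theorem isRelatorLabel (h : IsChainRelatorLabel σ n) : IsRelatorLabel S p₁ p₂ σ n := by
  obtain ⟨x, y, lo, hpair, hσ, rfl⟩ := h
  exact ⟨_, .chain hpair, hσ⟩

theorem three_hundred_le (h : IsChainRelatorLabel σ n) : 300 ≤ n := by
  obtain ⟨x, y, lo, -, -, rfl⟩ := h
  unfold chainLength
  omega

theorem eq_of_overlap (h : IsChainRelatorLabel σ n) (h' : IsRelatorLabel S p₁ p₂ σ' n')
    (h₁ : 10 ^ 10 < p₁) (h₂ : 10 ^ 10 < p₂) {l : ℕ} (hl : n ≤ 100 * l)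
    (hoverlap : ∀ i : ℕ, i < l → σ i = σ' i) : σ = σ' ∧ n = n' := by
  have := h.three_hundred_le
  obtain ⟨x, y, lo, hpair, hσ, rfl⟩ := h
  obtain ⟨σ₀', hbase', hσ'⟩ := h'
  exact hσ.eq_of_overlap hσ' (fun _ _ => hbase'.eq_of_overlap_chain hpair hl)
    (fun _ _ => (IsRelatorBase.chain hpair).not_opposite_overlap hbase' h₁ h₂ (by omega)) hoverlap

theorem not_constant_window (h : IsChainRelatorLabel σ n) {t : ℤ} {l : ℕ} {a : GenSym S.A × Bool}
    (hl : n ≤ 100 * l) : ¬ ∀ i : ℕ, i < l → σ (t + i) = a := by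
  intro hconst
  obtain ⟨x, y, lo, hpair, hσ, rfl⟩ := h
  obtain ⟨s, a', hconst'⟩ := hσ.exists_constant_window hconst
  have := le_of_chainLength_le hl
  exact not_constant_window_chainLabel hpair.ne (by omega) hconst'

theorem dvd_of_periodic (h : IsChainRelatorLabel σ n) {τ : ℤ} (hτ : ∀ t, σ (t + τ) = σ t) :
    (n : ℤ) ∣ τ := by
  obtain ⟨x, y, lo, hpair, hσ, rfl⟩ := h
  simpa using dvd_sub_of_chainLabel_overlap hpair.ne (s := 0) (s' := τ) (m := chainLength lo)
    (by omega) fun i _ => by rw [add_comm τ, hσ.periodic_base hτ, zero_add]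

end IsChainRelatorLabel

theorem exists_isRelatorLabel_apply_zero_eq (S : IndexedStructure) (p₁ p₂ : ℕ) (a : GenSym S.A) :
    ∃ σ n, IsRelatorLabel S p₁ p₂ σ n ∧ σ 0 = (a, true) := by
  obtain ⟨y, lo, h⟩ : ∃ y lo, IsChainPair a y lo := by
    cases a
    exacts [⟨_, _, .elt_c _⟩, ⟨_, _, .b_f1⟩, ⟨_, _, .c_f1⟩, ⟨_, _, .d_f1⟩, ⟨_, _, .f1_f2⟩,
      ⟨_, _, .f2_f1⟩]
  refine ⟨_, _, ⟨_, .chain h, 0, .inl fun i => by rw [zero_add]⟩, ?_⟩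
  simpa using chainLabel_blockStart (lo := lo) h.ne 0

theorem isLabelSystem_isRelatorLabel (h₁ : 10 ^ 10 < p₁) (h₂ : 10 ^ 10 < p₂) :
    IsLabelSystem (IsRelatorLabel S p₁ p₂) where
  period_pos _ _ h := by
    have := h.hundred_le h₁ h₂
    omega
  apply_add := fun _ _ ⟨_, hbase, hσ⟩ => hσ.periodic hbase.apply_add
  isReducedLabel := fun _ _ ⟨_, hbase, hσ⟩ => hσ.isReducedLabel hbase.isReducedLabel
  shift := fun _ _ ⟨σ₀, hbase, hσ⟩ s => ⟨σ₀, hbase, hσ.shift s⟩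
  reverse := fun _ _ ⟨σ₀, hbase, hσ⟩ => ⟨σ₀, hbase, hσ.reverse⟩
  eq_of_overlap := by
    rintro σ n ⟨σ₀, hbase, hσ⟩ σ' n' ⟨σ₀', hbase', hσ'⟩ l hl hoverlap
    have := hbase.hundred_le h₁ h₂
    exact hσ.eq_of_overlap hσ' (fun _ _ => hbase.eq_of_overlap hbase' h₁ h₂ hl)
      (fun _ _ => hbase.not_opposite_overlap hbase' h₁ h₂ (by omega)) hoverlap
  exists_apply_zero_eq := exists_isRelatorLabel_apply_zero_eq S p₁ p₂

end RelatorLabel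

/-! ### The relators as path points -/

section PathPoint

variable {α : Type*}

theorem mk_replicate (a : α) (k : ℕ) :
    (mk (List.replicate k (a, true)) : FreeGroup α) = FreeGroup.of a ^ k := by
  classical rw [← toWord_of_pow, mk_toWord]

theorem mk_ofFn {k : ℕ} (a : Fin k → α) :
    (mk (List.ofFn fun i => (a i, true)) : FreeGroup α) =
      (List.ofFn fun i => FreeGroup.of (a i)).prod := by
  induction k with
  | zero => rw [List.ofFn_zero, List.ofFn_zero, List.prod_nil, one_eq_mk]
  | succ k ih =>
    rw [List.ofFn_succ, List.ofFn_succ, List.prod_cons, ← ih, ← List.singleton_append, ← mul_mk]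
    rfl

theorem pathPoint_const (a : α) (k : ℕ) :
    pathPoint (fun _ => (a, true)) k = FreeGroup.of a ^ k := by
  rw [← zero_add (k : ℤ), pathPoint_add_natCast, pathPoint_zero, one_mul, ← mk_replicate]
  simp [window]

theorem pathPoint_blockLabel [Nonempty (α × Bool)] {B : ℤ → List (α × Bool)}
    (hB : ∀ k, B k ≠ []) (k : ℕ) :
    pathPoint (blockLabel B) (blockStart B k) =
      ((List.range k).map fun i : ℕ => mk (B i)).prod := by
  induction k with
  | zero => simp [blockStart_zero, pathPoint_zero]
  | succ k ih =>
    rw [Nat.cast_succ, blockStart_add_one, pathPoint_add_natCast, ih, List.range_succ,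
      List.map_append, List.prod_append, List.map_singleton, List.prod_singleton]
    congr 2
    refine List.ext_getElem (by simp) fun i _ hi => ?_
    rw [getElem_window, blockLabel_blockStart_add hB _ _ hi]

theorem IsShiftOrReverse.pathPoint_mem {N : Subgroup (FreeGroup α)} [N.Normal]
    {σ₀ σ : ℤ → α × Bool} {n : ℕ} (hσ : IsShiftOrReverse σ₀ σ)
    (hper : ∀ t, σ₀ (n + t) = σ₀ t) (hmem : pathPoint σ₀ n ∈ N) : pathPoint σ n ∈ N := by
  obtain ⟨s, hs | hs⟩ := hσ
  · rw [show σ = fun i => σ₀ (s + i) from funext hs, pathPoint_shift, add_comm,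
      pathPoint_natCast_add hper, ← mul_assoc]
    simpa using ‹N.Normal›.conj_mem _ hmem (pathPoint σ₀ s)⁻¹
  · have hσ' : σ = fun i => invLetter ((fun j => σ₀ (s + 1 + j)) (-1 - i)) := by
      funext i
      rw [hs]
      congr 2
      ring
    have hshift := pathPoint_natCast_add hper (s + 1 + -n)
    rw [show (n : ℤ) + (s + 1 + -n) = s + 1 by ring] at hshift
    rw [hσ', pathPoint_reverse (fun j => σ₀ (s + 1 + j)), pathPoint_shift, hshift]
    convert ‹N.Normal›.conj_mem _ (inv_mem hmem) (pathPoint σ₀ (s + 1 + -n))⁻¹ using 1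
    group

theorem normalClosure_pathPoint_le_closure (R : (ℤ → α × Bool) → ℕ → Prop) :
    Subgroup.normalClosure {x | ∃ σ n, R σ n ∧ x = pathPoint σ n} ≤
      Subgroup.closure {x | ∃ g σ n, R σ n ∧ x = g * pathPoint σ n * g⁻¹} := by
  refine Subgroup.closure_mono fun x hx => ?_
  obtain ⟨_, ⟨σ, n, hR, rfl⟩, hconj⟩ := Group.mem_conjugatesOfSet_iff.1 hx
  obtain ⟨g, rfl⟩ := isConj_iff.1 hconj
  exact ⟨g, σ, n, hR, rfl⟩

end PathPoint

section Relator

variable {S : IndexedStructure} {p₁ p₂ m : ℕ}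

theorem pathPoint_chainLabel (x y : GenSym S.A) (lo : ℕ) :
    pathPoint (chainLabel x y lo) (chainLength lo) =
      chainProd lo (FreeGroup.of x) (FreeGroup.of y) := by
  have hprod := pathPoint_blockLabel (chainBlock_ne_nil (x := x) (y := y) (lo := lo)) 1000
  rw [Nat.cast_ofNat, blockStart_chainBlock_period] at hprod
  refine hprod.trans (congrArg List.prod (List.map_congr_left fun k hk => ?_))
  have hexp : chainExponent lo k = (lo + k + 1) ^ 2 := by
    rw [chainExponent, Int.emod_eq_of_lt (by omega) (by simpa using hk), Int.toNat_natCast]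
  rw [chainBlock, ← List.singleton_append, ← mul_mk, hexp, mk_replicate]
  rfl

open Classical in
/-- The inverse of the value of the `m`-th symbol, with which its relator ends; it is trivial for
relation symbols. -/
noncomputable def valueInv (as : Fin (S.arity m) → S.A) : FreeGroup (GenSym S.A) :=
  if S.isFunc m then (FreeGroup.of (GenSym.elt (S.funcInterp m as)))⁻¹ else 1

theorem mk_headWord (as : Fin (S.arity m) → S.A) :
    mk (headWord as) = valueInv as * mk (argWord as) := by
  unfold headWord valueInv
  split_ifs with hfunc hhead
  · conv_rhs => rw [← List.cons_head?_tail hhead, ← List.singleton_append, ← mul_mk]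
    exact (inv_mul_cancel_left _ _).symm
  · rw [← List.singleton_append, ← mul_mk]
    congr 1
  · rw [one_mul]

theorem mk_symbolBlock (as : Fin (S.arity m) → S.A) (k : ℕ) (hk : k < 100) :
    mk (symbolBlock as k) = (if k = 0 then valueInv as else 1) *
      ((List.ofFn fun i => FreeGroup.of (GenSym.elt (as i))).prod *
        FreeGroup.of GenSym.b ^ (100 * m + k + 1)) := by
  have hmod : (k : ℤ) % 100 = k := Int.emod_eq_of_lt (by omega) (by omega)
  have harg : mk (argWord as) = (List.ofFn fun i => FreeGroup.of (GenSym.elt (as i))).prod :=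
    mk_ofFn _
  have hexp : symbolExponent m k = 100 * m + k + 1 := by
    rw [symbolExponent, hmod, Int.toNat_natCast]
    ring
  rw [symbolBlock, symbolWord, hmod, ← mul_mk, mk_replicate, hexp, ← harg, ← mul_assoc]
  congr 1
  split_ifs with h₁ h₂ h₂
  exacts [mk_headWord as, absurd (Nat.cast_eq_zero.1 h₁) h₂, absurd (Nat.cast_eq_zero.2 h₂) h₁,
    (one_mul _).symm]

theorem pathPoint_symbolLabel (as : Fin (S.arity m) → S.A) :
    pathPoint (symbolLabel as) (symbolLength as) =
      valueInv as *
        wProd m (fun i => FreeGroup.of (GenSym.elt (as i))) (FreeGroup.of GenSym.b) := by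
  have hprod := pathPoint_blockLabel (symbolBlock_ne_nil (as := as)) 100
  rw [Nat.cast_ofNat, blockStart_symbolBlock_period] at hprod
  refine hprod.trans ?_
  rw [wProd, List.range_succ_eq_map (n := 99), List.map_cons, List.map_cons, List.prod_cons,
    List.prod_cons, ← mul_assoc, mk_symbolBlock as 0 (by omega), if_pos rfl, List.map_map,
    List.map_map]
  refine congrArg _ (congrArg List.prod (List.map_congr_left fun k hk => ?_))
  rw [Function.comp_apply, mk_symbolBlock as _ (by have := List.mem_range.1 hk; omega),
    if_neg k.succ_ne_zero, one_mul]
  rfl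

theorem mem_grpRels_iff {r : FreeGroup (GenSym S.A)} : r ∈ grpRels S p₁ p₂ ↔
    (∃ f p, IsTorsionLetter p₁ p₂ f p ∧ r = FreeGroup.of f ^ p) ∨
    (∃ x y lo, IsChainPair x y lo ∧ r = chainProd lo (FreeGroup.of x) (FreeGroup.of y)) ∨
    ∃ m, 1 ≤ m ∧ ∃ as, (S.isFunc m ∨ S.relInterp m as) ∧
      r = wProd m (fun i => FreeGroup.of (GenSym.elt (as i))) (FreeGroup.of GenSym.b) *
        valueInv as := by
  constructor
  · rintro (((hr | ⟨a, hr | hr⟩) | ⟨m, hm, hfunc, as, hr⟩) | ⟨m, hm, hfunc, as, hrel, hr⟩)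
    · simp only [Set.mem_insert_iff, Set.mem_singleton_iff] at hr
      rcases hr with hr | hr | hr
      · exact .inl ⟨_, _, .f1, hr⟩
      · exact .inl ⟨_, _, .f2, hr⟩
      · right; left
        rcases hr with hr | hr | hr | hr | hr | hr | hr | hr
        exacts [⟨_, _, _, .f1_f2, hr⟩, ⟨_, _, _, .f2_f1, hr⟩, ⟨_, _, _, .b_f1, hr⟩,
          ⟨_, _, _, .b_f2, hr⟩, ⟨_, _, _, .c_f1, hr⟩, ⟨_, _, _, .c_f2, hr⟩,
          ⟨_, _, _, .d_f1, hr⟩, ⟨_, _, _, .d_f2, hr⟩]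
    · exact .inr (.inl ⟨_, _, _, .elt_c a, hr⟩)
    · exact .inr (.inl ⟨_, _, _, .elt_d a, hr⟩)
    · exact .inr (.inr ⟨m, hm, as, .inl hfunc, by rw [valueInv, if_pos hfunc, hr]⟩)
    · exact .inr (.inr ⟨m, hm, as, .inr hrel, by rw [valueInv, if_neg hfunc, mul_one, hr]⟩)
  · rintro (⟨f, p, h, hr⟩ | ⟨x, y, lo, h, hr⟩ | ⟨m, hm, as, h, hr⟩)
    · left; left; left
      rw [hr]
      cases h <;> simp only [Set.mem_insert_iff, Set.mem_singleton_iff, true_or, or_true]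
    · rw [hr]
      left; left
      cases h with
      | elt_c a => exact .inr ⟨a, .inl rfl⟩
      | elt_d a => exact .inr ⟨a, .inr rfl⟩
      | _ => left; simp only [Set.mem_insert_iff, Set.mem_singleton_iff, true_or, or_true]
    · by_cases hfunc : S.isFunc m
      · exact .inl (.inr ⟨m, hm, hfunc, as, by rw [hr, valueInv, if_pos hfunc]⟩)
      · exact .inr ⟨m, hm, hfunc, as, h.resolve_left hfunc,
          by rw [hr, valueInv, if_neg hfunc, mul_one]⟩

theorem IsRelatorBase.pathPoint_mem {σ : ℤ → GenSym S.A × Bool} {n : ℕ}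
    (h : IsRelatorBase S p₁ p₂ σ n) :
    pathPoint σ n ∈ Subgroup.normalClosure (grpRels S p₁ p₂) := by
  have hsub : grpRels S p₁ p₂ ⊆ _ := Subgroup.subset_normalClosure
  rcases h with h | h | ⟨m, hm, as, h⟩
  · exact hsub (mem_grpRels_iff.2 (.inl ⟨_, _, h, pathPoint_const _ _⟩))
  · exact hsub (mem_grpRels_iff.2 (.inr (.inl ⟨_, _, _, h, pathPoint_chainLabel _ _ _⟩)))
  · rw [pathPoint_symbolLabel]
    exact Subgroup.normalClosure_normal.mem_comm
      (hsub (mem_grpRels_iff.2 (.inr (.inr ⟨m, hm, as, h, rfl⟩))))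

theorem IsRelatorLabel.pathPoint_mem {σ : ℤ → GenSym S.A × Bool} {n : ℕ}
    (h : IsRelatorLabel S p₁ p₂ σ n) :
    pathPoint σ n ∈ Subgroup.normalClosure (grpRels S p₁ p₂) :=
  let ⟨_, hbase, hσ⟩ := h
  hσ.pathPoint_mem hbase.apply_add hbase.pathPoint_mem

theorem normalClosure_grpRels_le : Subgroup.normalClosure (grpRels S p₁ p₂) ≤
    Subgroup.closure {x | ∃ g σ n, IsRelatorLabel S p₁ p₂ σ n ∧ x = g * pathPoint σ n * g⁻¹} := by
  refine (Subgroup.normalClosure_le_normal fun r hr => ?_).trans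
    (normalClosure_pathPoint_le_closure _)
  have hbase {σ n} (h : IsRelatorBase S p₁ p₂ σ n) : pathPoint σ n ∈
      Subgroup.normalClosure {x | ∃ σ n, IsRelatorLabel S p₁ p₂ σ n ∧ x = pathPoint σ n} :=
    Subgroup.subset_normalClosure
      ⟨σ, n, ⟨σ, h, 0, .inl fun i => by rw [zero_add]⟩, rfl⟩
  obtain ⟨f, p, h, hr⟩ | ⟨x, y, lo, h, hr⟩ | ⟨m, hm, as, h, hr⟩ := mem_grpRels_iff.1 hr
  · rw [hr, ← pathPoint_const]
    exact hbase (.torsion h)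
  · rw [hr, ← pathPoint_chainLabel]
    exact hbase (.chain h)
  · have hmem := hbase (.symbol m hm as h)
    rw [pathPoint_symbolLabel] at hmem
    rw [hr]
    exact Subgroup.normalClosure_normal.mem_comm hmem

end Relator

/-! ### Words read along labelled lines -/

section List

variable {β : Type*} {s u Z a b c : List β}

theorem prefix_append_cases (h : s <+: a ++ b) : s <+: a ∨ ∃ q, s = a ++ q ∧ q <+: b := by
  obtain ⟨r, hr⟩ := h
  rcases List.append_eq_append_iff.1 hr with ⟨as, hs, -⟩ | ⟨bs, hs, hb⟩
  exacts [.inl ⟨as, hs.symm⟩, .inr ⟨bs, hs, r, hb.symm⟩]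

theorem suffix_append_cases (h : s <:+ a ++ b) : s <:+ b ∨ ∃ q, s = q ++ b ∧ q <:+ a := by
  obtain ⟨r, hr⟩ := h
  rcases List.append_eq_append_iff.1 hr with ⟨as, ha, hs⟩ | ⟨bs, -, hs⟩
  exacts [.inr ⟨as, hs, r, ha.symm⟩, .inl ⟨bs, hs.symm⟩]

theorem infix_append_append_cases (h : s <:+: a ++ b ++ c) : s <:+: a ∨ s <:+: c ∨
    ∃ u b' u', s = u ++ b' ++ u' ∧ u <:+ a ∧ u' <+: c ∧ b' <:+: b ∧
      (b' = b ∨ u = [] ∨ u' = []) ∧ (b' = [] → b = []) := by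
  rcases eq_or_ne s [] with rfl | hs
  · exact .inl List.nil_infix
  rw [List.append_assoc] at h
  rcases List.infix_append_iff.1 h with h | h | ⟨l₁, l₂, rfl, hl₁, hl₂⟩
  · exact .inl h
  · rcases List.infix_append_iff.1 h with h | h | ⟨l₁, l₂, rfl, hl₁, hl₂⟩
    · exact .inr (.inr ⟨[], s, [], by simp, List.nil_suffix, List.nil_prefix, h, by simp,
        fun h => (hs h).elim⟩)
    · exact .inr (.inl h)
    · rcases eq_or_ne l₁ [] with rfl | hne
      · exact .inr (.inl (by simpa using hl₂.isInfix))
      · exact .inr (.inr ⟨[], l₁, l₂, by simp, List.nil_suffix, hl₂, hl₁.isInfix, by simp,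
          fun h => (hne h).elim⟩)
  · rcases prefix_append_cases hl₂ with hl₂ | ⟨q, rfl, hq⟩
    · rcases eq_or_ne l₂ [] with rfl | hne
      · exact .inl (by simpa using hl₁.isInfix)
      · exact .inr (.inr ⟨l₁, l₂, [], by simp, hl₁, List.nil_prefix, hl₂.isInfix, by simp,
          fun h => (hne h).elim⟩)
    · exact .inr (.inr ⟨l₁, b, q, by simp, hl₁, hq, List.infix_rfl, by simp, id⟩)

theorem getLast?_eq_of_suffix (h : u <:+ Z) (hu : u ≠ []) : u.getLast? = Z.getLast? := by
  obtain ⟨r, rfl⟩ := h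
  rw [List.getLast?_append_of_ne_nil _ hu]

theorem head?_eq_of_prefix (h : u <+: Z) (hu : u ≠ []) : u.head? = Z.head? := by
  obtain ⟨r, rfl⟩ := h
  rw [List.head?_append_of_ne_nil _ hu]

theorem exists_mem_getLast? (hu : u ≠ []) : ∃ x ∈ u.getLast?, x ∈ u :=
  ⟨_, List.getLast?_eq_some_getLast hu, List.getLast_mem hu⟩

theorem exists_mem_head? (hu : u ≠ []) : ∃ x ∈ u.head?, x ∈ u :=
  ⟨_, List.head?_eq_some_head hu, List.head_mem hu⟩

end List

section ReadsAt

variable {α : Type*} {σ σ' : ℤ → α × Bool} {t t' : ℤ} {a : α × Bool} {u v w : List (α × Bool)}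

/-- The word `w` is read along the line labelled by `σ`, starting at position `t`. -/
def ReadsAt (σ : ℤ → α × Bool) (t : ℤ) (w : List (α × Bool)) : Prop := window σ t w.length = w

theorem readsAt_iff : ReadsAt σ t w ↔ ∀ (i : ℕ) (h : i < w.length), σ (t + i) = w[i] := by
  refine ⟨fun h i hi => ?_, fun h => ?_⟩
  · rw [← getElem_window σ t w.length i (by rwa [length_window])]
    exact List.getElem_of_eq h _
  · refine List.ext_getElem (by rw [length_window]) fun i _ hi => ?_
    rw [getElem_window, h i hi]

theorem readsAt_window (m : ℕ) : ReadsAt σ t (window σ t m) := by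
  rw [ReadsAt, length_window]

theorem readsAt_append : ReadsAt σ t (u ++ v) ↔ ReadsAt σ t u ∧ ReadsAt σ (t + u.length) v := by
  unfold ReadsAt
  rw [List.length_append, window_add]
  exact ⟨fun h => List.append_inj h (by rw [length_window]), fun ⟨hu, hv⟩ => by rw [hu, hv]⟩

theorem ReadsAt.exists_of_isInfix (h : ReadsAt σ t v) (hu : u <:+: v) : ∃ t', ReadsAt σ t' u := by
  obtain ⟨a, b, rfl⟩ := hu
  rw [List.append_assoc] at h
  exact ⟨_, (readsAt_append.1 (readsAt_append.1 h).2).1⟩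

theorem ReadsAt.congr (h : ReadsAt σ t w) (hσ : ∀ i, σ (t + i) = σ' (t' + i)) :
    ReadsAt σ' t' w :=
  readsAt_iff.2 fun i hi => by rw [← readsAt_iff.1 h i hi, hσ]

theorem ReadsAt.eq (h : ReadsAt σ t w) (h' : ReadsAt σ t v) (hl : w.length = v.length) :
    w = v := by
  rw [← h, ← h', hl]

theorem ReadsAt.exists_apply_eq (h : ReadsAt σ t w) (ha : a ∈ w) : ∃ t', σ t' = a := by
  obtain ⟨i, hi, rfl⟩ := List.getElem_of_mem ha
  exact ⟨_, readsAt_iff.1 h i hi⟩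

theorem getElem_invRev (w : List (α × Bool)) (i : ℕ) (h : i < (invRev w).length) :
    (invRev w)[i] = invLetter (w[w.length - 1 - i]'(by rw [invRev_length] at h; omega)) := by
  simp only [invRev, List.getElem_reverse, List.getElem_map, List.length_map, invLetter]

theorem ReadsAt.invRev {c : ℤ} (h : ReadsAt σ t w) (hσ : ∀ i, σ' i = invLetter (σ (c - i))) :
    ReadsAt σ' (c - t - w.length + 1) (invRev w) := by
  rw [readsAt_iff] at *
  intro i hi
  have hlt := hi
  rw [invRev_length] at hlt
  rw [getElem_invRev, ← h, hσ]
  congr 2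
  omega

theorem ReadsAt.apply_of_cons (h : ReadsAt σ t (a :: u)) : σ t = a := by
  have hzero := readsAt_iff.1 h 0 (Nat.succ_pos _)
  rwa [Nat.cast_zero, add_zero] at hzero

end ReadsAt

section PowWord

variable {α : Type*} {f : α} {g u v : List (α × Bool)} {m n : ℤ} {a : α × Bool}

/-- The reduced word of `f ^ n`. -/
def powWord (f : α) (n : ℤ) : List (α × Bool) := List.replicate n.natAbs (f, decide (0 < n))

theorem length_powWord (f : α) (n : ℤ) : (powWord f n).length = n.natAbs :=
  List.length_replicate

theorem eq_of_mem_powWord (h : a ∈ powWord f n) : a = (f, decide (0 < n)) :=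
  List.eq_of_mem_replicate h

theorem powWord_ne_nil (h : n ≠ 0) : powWord f n ≠ [] := by
  simpa [powWord] using h

theorem powWord_zero (f : α) : powWord f 0 = [] := rfl

theorem powWord_eq_cons (h : n ≠ 0) : ∃ r, powWord f n = (f, decide (0 < n)) :: r := by
  obtain ⟨a, r, har⟩ := List.exists_cons_of_ne_nil (powWord_ne_nil (f := f) h)
  have ha : a ∈ powWord f n := har ▸ List.mem_cons_self
  exact ⟨r, by rw [har, eq_of_mem_powWord ha]⟩

theorem invRev_powWord (f : α) (n : ℤ) : invRev (powWord f n) = powWord f (-n) := by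
  rcases lt_trichotomy n 0 with h | rfl | h
  · simp [powWord, invRev, h, h.le]
  · rfl
  · simp [powWord, invRev, h, h.le]

theorem mk_powWord (f : α) (n : ℤ) : mk (powWord f n) = FreeGroup.of f ^ n := by
  have hnat (k : ℕ) : mk (powWord f k) = FreeGroup.of f ^ k := by
    rcases k.eq_zero_or_pos with rfl | hk
    · rfl
    · simp [powWord, hk, mk_replicate]
  obtain ⟨k, rfl | rfl⟩ := n.eq_nat_or_neg
  · rw [hnat, zpow_natCast]
  · rw [← invRev_powWord, ← inv_mk, hnat, zpow_neg, zpow_natCast]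

theorem powWord_injective (f : α) : Function.Injective (powWord f) := by
  intro n m h
  have hlen := congrArg List.length h
  rw [length_powWord, length_powWord] at hlen
  rcases eq_or_ne n 0 with rfl | hn
  · omega
  · obtain ⟨a, ha⟩ := List.exists_mem_of_ne_nil _ (powWord_ne_nil (f := f) hn)
    have hsign := (eq_of_mem_powWord ha).symm.trans (eq_of_mem_powWord (h ▸ ha))
    simp only [Prod.mk.injEq, decide_eq_decide, true_and] at hsign
    omega

theorem isReduced_powWord (f : α) (n : ℤ) : IsReduced (powWord f n) :=
  List.isChain_replicate_of_rel _ fun _ => rfl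

theorem isReduced_append_powWord_append (hn : n ≠ 0) (hu : IsReduced u) (hv : IsReduced v)
    (hlast : ∀ a ∈ u.getLast?, a.1 ≠ f) (hhead : ∀ a ∈ v.head?, a.1 ≠ f) :
    IsReduced (u ++ powWord f n ++ v) := by
  have hpow := isReduced_powWord f n
  refine IsReduced.append_overlap ?_ ?_ (powWord_ne_nil hn)
  · refine List.isChain_append.2 ⟨hu, hpow, fun x hx y hy h => (hlast x hx (h.trans ?_)).elim⟩
    rw [eq_of_mem_powWord (List.mem_of_mem_head? hy)]
  · refine List.isChain_append.2
      ⟨hpow, hv, fun x hx y hy h => (hhead y hy (h.symm.trans ?_)).elim⟩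
    rw [eq_of_mem_powWord (List.mem_of_mem_getLast? hx)]

/-- The word of the conjugate `g⁻¹ f ^ n g`, taken to be empty for `n = 0`. -/
def conjWord (f : α) (g : List (α × Bool)) (n : ℤ) : List (α × Bool) :=
  if n = 0 then [] else invRev g ++ powWord f n ++ g

theorem mk_conjWord (f : α) (g : List (α × Bool)) (n : ℤ) :
    mk (conjWord f g n) = (mk g)⁻¹ * FreeGroup.of f ^ n * mk g := by
  unfold conjWord
  split_ifs with h
  · rw [h, zpow_zero, mul_one, inv_mul_cancel, one_eq_mk]
  · rw [← mul_mk, ← mul_mk, inv_mk, mk_powWord]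

theorem conjWord_nil (f : α) (n : ℤ) : conjWord f [] n = powWord f n := by
  unfold conjWord
  split_ifs with h
  · rw [h, powWord_zero]
  · simp [invRev]

theorem conjWord_injective (f : α) (g : List (α × Bool)) : Function.Injective (conjWord f g) := by
  have hnil {n : ℤ} (hn : n ≠ 0) : invRev g ++ powWord f n ++ g ≠ [] := by
    simp [powWord_ne_nil hn]
  intro n m h
  unfold conjWord at h
  split_ifs at h with hn hm hm
  · omega
  · exact (hnil hm h.symm).elim
  · exact (hnil hn h).elim
  · exact powWord_injective f (List.append_cancel_left (List.append_cancel_right h))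

end PowWord

/-! ### Words read along relator lines -/

section RelatorLine

variable {S : IndexedStructure} {p₁ p₂ : ℕ} {σ σ' : ℤ → GenSym S.A × Bool} {N N' : ℕ}
  {t t' : ℤ} {w : List (GenSym S.A × Bool)}

theorem IsRelatorLabel.eq_of_readsAt (h₁ : 10 ^ 10 < p₁) (h₂ : 10 ^ 10 < p₂)
    (hσ : IsRelatorLabel S p₁ p₂ σ N) (hσ' : IsRelatorLabel S p₁ p₂ σ' N') (hw : ReadsAt σ t w)
    (hw' : ReadsAt σ' t' w) (hl : N ≤ 20 * w.length) :
    (∀ i, σ (t + i) = σ' (t' + i)) ∧ N = N' := by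
  have hsys := isLabelSystem_isRelatorLabel (S := S) h₁ h₂
  obtain ⟨heq, hN⟩ := hsys.eq_of_overlap _ _ (hsys.shift _ _ hσ t) _ _ (hsys.shift _ _ hσ' t')
    w.length hl fun i hi => by rw [readsAt_iff.1 hw i hi, readsAt_iff.1 hw' i hi]
  exact ⟨congrFun heq, hN⟩

namespace IsChainRelatorLabel

theorem shift (hσ : IsChainRelatorLabel σ N) (s : ℤ) :
    IsChainRelatorLabel (fun i => σ (s + i)) N :=
  let ⟨x, y, lo, h, hx, hN⟩ := hσ
  ⟨x, y, lo, h, hx.shift s, hN⟩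

theorem length_lt_of_forall_eq (hσ : IsChainRelatorLabel σ N) (hr : ReadsAt σ t w)
    {a : GenSym S.A × Bool} (ha : ∀ x ∈ w, x = a) : 100 * w.length < N := by
  by_contra! h
  refine hσ.not_constant_window (t := t) (a := a) h fun i hi => ?_
  rw [readsAt_iff.1 hr i hi]
  exact ha _ (List.getElem_mem hi)

theorem length_lt_of_isInfix_powWord (hσ : IsChainRelatorLabel σ N) (hr : ReadsAt σ t w)
    {f : GenSym S.A} {n : ℤ} (hw : w <:+: powWord f n) : 100 * w.length < N :=
  hσ.length_lt_of_forall_eq hr fun _ h => eq_of_mem_powWord (hw.subset h)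

theorem length_lt_of_isInfix_conjWord (hσ : IsChainRelatorLabel σ N) (hr : ReadsAt σ t w)
    {f : GenSym S.A} {g : List (GenSym S.A × Bool)} {n : ℤ} (hw : w <:+: conjWord f g n)
    (hg : 100 * g.length < N) : 100 * w.length < 3 * N := by
  unfold conjWord at hw
  split_ifs at hw
  · rw [List.infix_nil.1 hw, List.length_nil]
    omega
  · rcases infix_append_append_cases hw with h | h | ⟨u, b, u', rfl, hu, hu', hb, -⟩
    · have := h.length_le
      rw [invRev_length] at this
      omega
    · have := h.length_le
      omega
    · obtain ⟨t', hrb⟩ := hr.exists_of_isInfix (u := b) ⟨u, u', rfl⟩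
      have := hσ.length_lt_of_isInfix_powWord hrb hb
      have := hu.length_le
      have := hu'.length_le
      rw [invRev_length] at *
      simp only [List.length_append]
      omega

variable (h₁ : 10 ^ 10 < p₁) (h₂ : 10 ^ 10 < p₂)
include h₁ h₂

theorem eq_of_readsAt (hσ : IsChainRelatorLabel σ N) (hσ' : IsRelatorLabel S p₁ p₂ σ' N')
    (hr : ReadsAt σ t w) (hr' : ReadsAt σ' t' w) (hl : N ≤ 100 * w.length) :
    (∀ i, σ (t + i) = σ' (t' + i)) ∧ N = N' := by
  obtain ⟨heq, hN⟩ := (hσ.shift t).eq_of_overlap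
    ((isLabelSystem_isRelatorLabel h₁ h₂).shift _ _ hσ' t') h₁ h₂ hl
    fun i hi => by rw [readsAt_iff.1 hr i hi, readsAt_iff.1 hr' i hi]
  exact ⟨congrFun heq, hN⟩

theorem dvd_sub_of_readsAt (hσ : IsChainRelatorLabel σ N) (hr : ReadsAt σ t w)
    (hr' : ReadsAt σ t' w) (hl : N ≤ 100 * w.length) : (N : ℤ) ∣ t' - t := by
  have hsame := (hσ.eq_of_readsAt h₁ h₂ hσ.isRelatorLabel hr hr' hl).1
  refine hσ.dvd_of_periodic fun i => ?_
  have := hsame (i - t)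
  rw [add_sub_cancel] at this
  rw [this]
  congr 1
  ring

/-- A relator line overlapping its own reversal would read `f ^ n` and `f ^ (-n)` at one place. -/
theorem length_lt_of_readsAt_conj (hσ : IsChainRelatorLabel σ N) {f : GenSym S.A} {n : ℤ}
    (hn : n ≠ 0) (hr : ReadsAt σ t (invRev w ++ powWord f n ++ w)) : 100 * w.length < N := by
  by_contra! hl
  have hrev := hr.invRev (σ' := fun i => invLetter (σ (-1 - i))) fun _ => rfl
  rw [invRev_append, invRev_append, invRev_invRev, invRev_powWord, readsAt_append] at hrev
  rw [List.append_assoc, readsAt_append] at hr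
  have hsame := (hσ.eq_of_readsAt h₁ h₂
    ((isLabelSystem_isRelatorLabel h₁ h₂).reverse _ _ hσ.isRelatorLabel) hr.1 hrev.1
    (by rwa [invRev_length])).1
  obtain ⟨r, hpos⟩ := powWord_eq_cons (f := f) hn
  obtain ⟨r', hneg⟩ := powWord_eq_cons (f := f) (neg_ne_zero.2 hn)
  rw [hpos] at hr
  rw [hneg] at hrev
  have heq := hr.2.apply_of_cons.symm.trans ((hsame _).trans hrev.2.apply_of_cons)
  simp only [Prod.mk.injEq, decide_eq_decide, true_and] at heq
  omega

end IsChainRelatorLabel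

/-- A nonempty reduced word without long relator subwords which neither starts nor ends with a
power of `f`; such a word represents a double coset of `⟨f⟩`. -/
structure IsDoubleCosetReduced (S : IndexedStructure) (p₁ p₂ : ℕ) (f : GenSym S.A)
    (Z : List (GenSym S.A × Bool)) : Prop where
  isReduced : IsReduced Z
  ne_nil : Z ≠ []
  two_mul_length_le : ∀ σ n, IsRelatorLabel S p₁ p₂ σ n →
    ∀ t w, ReadsAt σ t w → w <:+: Z → 2 * w.length ≤ n
  head_ne : ∀ a ∈ Z.head?, a.1 ≠ f
  last_ne : ∀ a ∈ Z.getLast?, a.1 ≠ f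

theorem IsTorsionLetter.torsion_or_chain {f : GenSym S.A} {p : ℕ} (hf : IsTorsionLetter p₁ p₂ f p)
    (hσ : IsRelatorLabel S p₁ p₂ σ N) (hr : ReadsAt σ t w) {a : GenSym S.A × Bool} (ha : a ∈ w)
    (haf : a.1 = f) : (N = p ∧ ∀ t, (σ t).1 = f) ∨ IsChainRelatorLabel σ N := by
  obtain ⟨s, hs⟩ := hr.exists_apply_eq ha
  refine (hσ.torsion_or_chain (t := s) (by rw [hs, haf]; exact hf.eq_f1_or_f2)).imp_left ?_
  rintro ⟨f', e, hf', hconst⟩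
  obtain rfl : f' = f := by rw [← haf, ← hs, hconst]
  exact ⟨hf'.order_unique hf, fun t => by rw [hconst]⟩

namespace IsDoubleCosetReduced

variable {f : GenSym S.A} {Z u a c : List (GenSym S.A × Bool)} {p : ℕ} {n : ℤ}

theorem eq_nil_of_suffix (hZ : IsDoubleCosetReduced S p₁ p₂ f Z) (hu : u <:+ Z)
    (hf : ∀ x ∈ u, x.1 = f) : u = [] := by
  by_contra hne
  obtain ⟨x, hx, hxu⟩ := exists_mem_getLast? hne
  rw [getLast?_eq_of_suffix hu hne] at hx
  exact hZ.last_ne x hx (hf x hxu)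

theorem eq_nil_of_prefix (hZ : IsDoubleCosetReduced S p₁ p₂ f Z) (hu : u <+: Z)
    (hf : ∀ x ∈ u, x.1 = f) : u = [] := by
  by_contra hne
  obtain ⟨x, hx, hxu⟩ := exists_mem_head? hne
  rw [head?_eq_of_prefix hu hne] at hx
  exact hZ.head_ne x hx (hf x hxu)

variable (h₁ : 10 ^ 10 < p₁) (h₂ : 10 ^ 10 < p₂)
include h₁ h₂

/-- A long subword across the power is read along a chain relator, because `n` is at most half the
order of `f`, and the power itself takes up only a hundredth of it. -/
theorem exists_eq_append_powWord_append (hZ : IsDoubleCosetReduced S p₁ p₂ f Z)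
    (hf : IsTorsionLetter p₁ p₂ f p) (ha : a <:+ Z) (hc : c <+: Z) (hn : n ≠ 0)
    (hnp : 2 * n.natAbs ≤ p) (hσ : IsRelatorLabel S p₁ p₂ σ N) (hr : ReadsAt σ t w)
    (hw : w <:+: a ++ powWord f n ++ c) (hl : 85 * N ≤ 100 * w.length) :
    IsChainRelatorLabel σ N ∧ ∃ u u', w = u ++ powWord f n ++ u' ∧ u <:+ a ∧ u' <+: c ∧
      34 * N ≤ 100 * u.length ∧ 34 * N ≤ 100 * u'.length := by
  have hN := hσ.hundred_le h₁ h₂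
  have hp := hf.lt h₁ h₂
  have hshort {v} (hv : v <:+: w) (hvZ : v <:+: Z) : 2 * v.length ≤ N := by
    obtain ⟨s, hs⟩ := hr.exists_of_isInfix hv
    exact hZ.two_mul_length_le _ _ hσ _ _ hs hvZ
  rcases infix_append_append_cases hw with h | h | ⟨u, b, u', rfl, hu, hu', hb, hor, hb_nil⟩
  · have := hshort List.infix_rfl (h.trans ha.isInfix)
    omega
  · have := hshort List.infix_rfl (h.trans hc.isInfix)
    omega
  obtain ⟨x, hx⟩ := List.exists_mem_of_ne_nil b fun h => powWord_ne_nil hn (hb_nil h)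
  rcases hf.torsion_or_chain hσ hr (a := x) (by simp [hx])
    (by rw [eq_of_mem_powWord (hb.subset hx)]) with ⟨rfl, hconst⟩ | hchain
  · have hmem : ∀ y ∈ u ++ b ++ u', y.1 = f := fun y hy => by
      obtain ⟨s, hs⟩ := hr.exists_apply_eq hy
      rw [← hs, hconst]
    obtain rfl := hZ.eq_nil_of_suffix (hu.trans ha) fun y hy => hmem y (by simp [hy])
    obtain rfl := hZ.eq_nil_of_prefix (hu'.trans hc) fun y hy => hmem y (by simp [hy])
    have := hb.length_le
    rw [length_powWord] at this
    simp only [List.nil_append, List.append_nil] at hl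
    omega
  · have hb_short : 100 * b.length < N := by
      obtain ⟨s, hs⟩ := hr.exists_of_isInfix (u := b) ⟨u, u', rfl⟩
      exact hchain.length_lt_of_isInfix_powWord hs hb
    have hu_short := hshort ⟨[], b ++ u', by simp⟩ (hu.trans ha).isInfix
    have hu'_short := hshort ⟨u ++ b, [], by simp⟩ (hu'.trans hc).isInfix
    simp only [List.length_append] at hl
    rcases hor with rfl | rfl | rfl
    · exact ⟨hchain, u, u', rfl, hu, hu', by omega, by omega⟩
    all_goals
      rw [List.length_nil] at hl
      omega

theorem length_lt_of_prefix_of_invRev_suffix (hZ : IsDoubleCosetReduced S p₁ p₂ f Z)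
    (hf : IsTorsionLetter p₁ p₂ f p) (ha : a <:+ Z) (hc : c <+: Z) (hn : n ≠ 0)
    (hnp : 2 * n.natAbs ≤ p) (hσ : IsRelatorLabel S p₁ p₂ σ N) (hr : ReadsAt σ t w)
    (hw : w <:+: a ++ powWord f n ++ c) (hl : 85 * N ≤ 100 * w.length)
    {g : List (GenSym S.A × Bool)} (hg : g <+: Z) (hg' : invRev g <:+ Z) :
    100 * g.length < N := by
  obtain ⟨hchain, u, u', rfl, hu, hu', hul, hul'⟩ :=
    hZ.exists_eq_append_powWord_append h₁ h₂ hf ha hc hn hnp hσ hr hw hl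
  set l := min g.length (min u.length u'.length)
  have hlen : (g.take l).length = l := by
    rw [List.length_take]
    omega
  obtain ⟨r', hr'⟩ : g.take l <+: u' :=
    List.prefix_of_prefix_length_le ((List.take_prefix _ _).trans hg) (hu'.trans hc) (by omega)
  obtain ⟨r, hr_u⟩ : invRev (g.take l) <:+ u := by
    have hsuffix : invRev (g.take l) <:+ invRev g :=
      ⟨invRev (g.drop l), by rw [← invRev_append, List.take_append_drop]⟩
    exact List.suffix_of_suffix_length_le (hsuffix.trans hg') (hu.trans ha)
      (by rw [invRev_length]; omega)
  obtain ⟨s, hs⟩ := hr.exists_of_isInfix (u := invRev (g.take l) ++ powWord f n ++ g.take l)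
    ⟨r, r', by rw [← hr_u, ← hr']; simp⟩
  have := hchain.length_lt_of_readsAt_conj h₁ h₂ hn hs
  omega

end IsDoubleCosetReduced

end RelatorLine

/-! ### Interleaved words -/

section Interleave

variable {β : Type*}

/-- The product of the words `ζ ++ J k`, for `k` in `ks`. -/
def interleaveLeft (ζ : List β) (J : ℕ → List β) (ks : List ℕ) : List β :=
  ks.flatMap fun k => ζ ++ J k

/-- The product of the words `J k ++ ζ`, for `k` in `ks`. -/
def interleaveRight (ζ : List β) (J : ℕ → List β) (ks : List ℕ) : List β :=
  ks.flatMap fun k => J k ++ ζ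

variable {ζ s : List β} {J : ℕ → List β} {ks : List ℕ} {last : ℕ}

theorem interleaveLeft_cons (k : ℕ) :
    interleaveLeft ζ J (k :: ks) = ζ ++ J k ++ interleaveLeft ζ J ks :=
  List.flatMap_cons

theorem interleaveRight_cons (k : ℕ) :
    interleaveRight ζ J (k :: ks) = J k ++ ζ ++ interleaveRight ζ J ks :=
  List.flatMap_cons

theorem interleaveRight_append (l l' : List ℕ) :
    interleaveRight ζ J (l ++ l') = interleaveRight ζ J l ++ interleaveRight ζ J l' :=
  List.flatMap_append

theorem interleaveLeft_singleton : interleaveLeft ζ J [last] = ζ ++ J last :=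
  List.flatMap_singleton _ _

theorem prefix_interleaveLeft_concat_cases (h : s <+: interleaveLeft ζ J (ks ++ [last])) :
    s <+: ζ ∨ ∃ mids s₂, s = ζ ++ interleaveRight ζ J mids ++ s₂ ∧ mids <+: ks ∧
      ((∃ k ∈ ks, s₂ <+: J k ++ ζ) ∨ s₂ <+: J last) := by
  induction ks generalizing s with
  | nil =>
    rw [List.nil_append, interleaveLeft_singleton] at h
    refine (prefix_append_cases h).imp_right ?_
    rintro ⟨q, rfl, hq⟩
    exact ⟨[], q, by simp [interleaveRight], List.prefix_rfl, .inr hq⟩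
  | cons k ks ih =>
    rw [List.cons_append, interleaveLeft_cons, List.append_assoc] at h
    refine (prefix_append_cases h).imp_right ?_
    rintro ⟨q, rfl, hq⟩
    rcases prefix_append_cases hq with hqJ | ⟨q', rfl, hq'⟩
    · exact ⟨[], q, by simp [interleaveRight], List.nil_prefix,
        .inl ⟨k, List.mem_cons_self, hqJ.trans (List.prefix_append _ _)⟩⟩
    rcases ih hq' with hζ | ⟨mids, s₂, rfl, hmids, hs₂⟩
    · exact ⟨[], J k ++ q', by simp [interleaveRight], List.nil_prefix,
        .inl ⟨k, List.mem_cons_self, (List.prefix_append_right_inj _).2 hζ⟩⟩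
    · exact ⟨k :: mids, s₂, by simp [interleaveRight_cons], by simpa using hmids,
        hs₂.imp_left fun ⟨k', hk', h'⟩ => ⟨k', List.mem_cons_of_mem _ hk', h'⟩⟩

theorem infix_interleaveLeft_concat_cases (h : s <:+: interleaveLeft ζ J (ks ++ [last])) :
    (∃ k ∈ ks, s <:+: ζ ++ J k ++ ζ) ∨ s <:+: ζ ++ J last ∨
    ∃ s₁ mids s₂, s = s₁ ++ ζ ++ interleaveRight ζ J mids ++ s₂ ∧ mids <:+: ks ∧
      (∃ k ∈ ks, s₁ <:+ ζ ++ J k) ∧ ((∃ k ∈ ks, s₂ <+: J k ++ ζ) ∨ s₂ <+: J last) := by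
  induction ks generalizing s with
  | nil =>
    rw [List.nil_append, interleaveLeft_singleton] at h
    exact .inr (.inl h)
  | cons k ks ih =>
    have hks : ks <:+: k :: ks := (List.suffix_cons _ _).isInfix
    rw [List.cons_append, interleaveLeft_cons] at h
    rcases List.infix_append_iff.1 h with h | h | ⟨l₁, l₂, rfl, hl₁, hl₂⟩
    · exact .inl ⟨k, List.mem_cons_self, h.trans (List.prefix_append _ _).isInfix⟩
    · rcases ih h with ⟨k', hk', h'⟩ | h | ⟨s₁, mids, s₂, rfl, hmids, ⟨k', hk', hs₁⟩, hs₂⟩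
      · exact .inl ⟨k', List.mem_cons_of_mem _ hk', h'⟩
      · exact .inr (.inl h)
      · exact .inr (.inr ⟨s₁, mids, s₂, rfl, hmids.trans hks,
          ⟨k', List.mem_cons_of_mem _ hk', hs₁⟩,
          hs₂.imp_left fun ⟨k', hk', h'⟩ => ⟨k', List.mem_cons_of_mem _ hk', h'⟩⟩)
    · rcases prefix_interleaveLeft_concat_cases hl₂ with ⟨r', hr'⟩ | ⟨mids, s₂, rfl, hmids, hs₂⟩
      · obtain ⟨r, hr⟩ := hl₁
        refine .inl ⟨k, List.mem_cons_self, r, r', ?_⟩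
        calc r ++ (l₁ ++ l₂) ++ r' = (r ++ l₁) ++ (l₂ ++ r') := by simp only [List.append_assoc]
          _ = ζ ++ J k ++ ζ := by rw [hr, hr']
      · exact .inr (.inr ⟨l₁, mids, s₂, by simp only [List.append_assoc],
          hmids.isInfix.trans hks, ⟨k, List.mem_cons_self, hl₁⟩,
          hs₂.imp_left fun ⟨k', hk', h'⟩ => ⟨k', List.mem_cons_of_mem _ hk', h'⟩⟩)

theorem isReduced_interleaveLeft_concat {α : Type*} {ζ : List (α × Bool)}
    {J : ℕ → List (α × Bool)} (hζ : ζ ≠ []) (h : ∀ k ∈ ks, IsReduced (ζ ++ J k ++ ζ))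
    (hlast : IsReduced (ζ ++ J last)) : IsReduced (interleaveLeft ζ J (ks ++ [last])) := by
  induction ks with
  | nil => rwa [List.nil_append, interleaveLeft_singleton]
  | cons k ks ih =>
    have htail := ih fun k hk => h k (List.mem_cons_of_mem _ hk)
    obtain ⟨r, hr⟩ : ζ <+: interleaveLeft ζ J (ks ++ [last]) := by
      cases ks with
      | nil => exact ⟨J last, interleaveLeft_singleton.symm⟩
      | cons k' ks => exact ⟨_, by rw [List.cons_append, interleaveLeft_cons, List.append_assoc]⟩
    rw [List.cons_append, interleaveLeft_cons, ← hr, ← List.append_assoc]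
    exact (h k List.mem_cons_self).append_overlap (hr ▸ htail) hζ

theorem exists_common_suffix_min {u v : List β} (hu : u <:+ ζ) (hv : v <:+ ζ) :
    ∃ w, w <:+ u ∧ w <:+ v ∧ (w = u ∨ w = v) := by
  rcases le_total u.length v.length with h | h
  · exact ⟨u, List.suffix_rfl, List.suffix_of_suffix_length_le hu hv h, .inl rfl⟩
  · exact ⟨v, List.suffix_of_suffix_length_le hv hu h, List.suffix_rfl, .inr rfl⟩

theorem exists_common_prefix_min {u v : List β} (hu : u <+: ζ) (hv : v <+: ζ) :
    ∃ w, w <+: u ∧ w <+: v ∧ (w = u ∨ w = v) := by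
  rcases le_total u.length v.length with h | h
  · exact ⟨u, List.prefix_rfl, List.prefix_of_prefix_length_le hu hv h, .inl rfl⟩
  · exact ⟨v, List.prefix_of_prefix_length_le hv hu h, List.prefix_rfl, .inr rfl⟩

end Interleave

/-! ### Repetitions along chain relators -/

section RelatorLine

variable {S : IndexedStructure} {p₁ p₂ : ℕ} {σ σ' : ℤ → GenSym S.A × Bool} {N N' : ℕ}
  {t t' : ℤ} (h₁ : 10 ^ 10 < p₁) (h₂ : 10 ^ 10 < p₂)
include h₁ h₂

namespace IsChainRelatorLabel

theorem le_length_of_readsAt_append (hσ : IsChainRelatorLabel σ N)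
    {u v : List (GenSym S.A × Bool)} (hr : ReadsAt σ t (v ++ u ++ v)) (hl : N ≤ 100 * v.length) :
    N ≤ (v ++ u).length := by
  have hN := hσ.three_hundred_le
  obtain ⟨hvu, hv⟩ := readsAt_append.1 hr
  have hdvd := hσ.dvd_sub_of_readsAt h₁ h₂ (readsAt_append.1 hvu).1 hv hl
  rw [add_sub_cancel_left] at hdvd
  refine Nat.le_of_dvd ?_ (Int.natCast_dvd_natCast.1 hdvd)
  rw [List.length_append]
  omega

variable {f : GenSym S.A} {g ζ : List (GenSym S.A × Bool)} {n : ℤ}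

theorem length_lt_of_prefix_conjWord_append (hσ : IsChainRelatorLabel σ N)
    (hg : 100 * g.length < N) (hζ : 2 * ζ.length ≤ N) {s : List (GenSym S.A × Bool)}
    (hr : ReadsAt σ t (ζ ++ s)) (hs : s <+: conjWord f g n ++ ζ) : 100 * s.length < 4 * N := by
  obtain ⟨-, hrs⟩ := readsAt_append.1 hr
  rcases prefix_append_cases hs with hs | ⟨q, rfl, r, rfl⟩
  · have := hσ.length_lt_of_isInfix_conjWord hrs hs.isInfix hg
    omega
  · have hJ := hσ.length_lt_of_isInfix_conjWord (readsAt_append.1 hrs).1 List.infix_rfl hg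
    by_contra! hl
    obtain ⟨t', hr'⟩ := hr.exists_of_isInfix (u := q ++ (r ++ conjWord f g n) ++ q)
      ⟨[], [], by simp⟩
    have := hσ.le_length_of_readsAt_append h₁ h₂ hr'
    simp only [List.length_append] at *
    omega

theorem length_lt_of_suffix_append_conjWord (hσ : IsChainRelatorLabel σ N)
    (hg : 100 * g.length < N) (hζ : 2 * ζ.length ≤ N) {s : List (GenSym S.A × Bool)}
    (hr : ReadsAt σ t (s ++ ζ)) (hs : s <:+ ζ ++ conjWord f g n) : 100 * s.length < 4 * N := by
  obtain ⟨hrs, -⟩ := readsAt_append.1 hr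
  rcases suffix_append_cases hs with hs | ⟨q, rfl, r, rfl⟩
  · have := hσ.length_lt_of_isInfix_conjWord hrs hs.isInfix hg
    omega
  · have hJ := hσ.length_lt_of_isInfix_conjWord (readsAt_append.1 hrs).2 List.infix_rfl hg
    by_contra! hl
    obtain ⟨t', hr'⟩ := hr.exists_of_isInfix (u := q ++ (conjWord f g n ++ r) ++ q)
      ⟨[], [], by simp⟩
    have := hσ.le_length_of_readsAt_append h₁ h₂ hr'
    simp only [List.length_append] at *
    omega

theorem length_lt_of_readsAt_interleave (hσ : IsChainRelatorLabel σ N) {n : ℕ → ℤ}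
    {mids : List ℕ} {s₁ s₂ : List (GenSym S.A × Bool)} {k k' : ℕ} (hg : 100 * g.length < N)
    (hζ : 2 * ζ.length ≤ N)
    (hr : ReadsAt σ t (s₁ ++ ζ ++ interleaveRight ζ (fun k => conjWord f g (n k)) mids ++ s₂))
    (hs₁ : s₁ <:+ ζ ++ conjWord f g (n k)) (hs₂ : s₂ <+: conjWord f g (n k') ++ ζ)
    (hl : 85 * N ≤
      100 * (s₁ ++ ζ ++ interleaveRight ζ (fun k => conjWord f g (n k)) mids ++ s₂).length) :
    100 * ζ.length < N := by
  have hN := hσ.three_hundred_le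
  rcases mids with _ | ⟨i, mids⟩
  · rw [interleaveRight, List.flatMap_nil, List.append_nil] at hr hl
    have hl₁ := hσ.length_lt_of_suffix_append_conjWord h₁ h₂ hg hζ (readsAt_append.1 hr).1 hs₁
    rw [List.append_assoc] at hr
    have hl₂ := hσ.length_lt_of_prefix_conjWord_append h₁ h₂ hg hζ (readsAt_append.1 hr).2 hs₂
    simp only [List.length_append] at hl
    omega
  · by_contra! hlong
    obtain ⟨t', hr'⟩ := hr.exists_of_isInfix (u := ζ ++ conjWord f g (n i) ++ ζ)
      ⟨s₁, interleaveRight ζ (fun k => conjWord f g (n k)) mids ++ s₂, by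
        simp [interleaveRight_cons]⟩
    have hJ := hσ.length_lt_of_isInfix_conjWord
      (readsAt_append.1 (readsAt_append.1 hr').1).2 List.infix_rfl hg
    have := hσ.le_length_of_readsAt_append h₁ h₂ hr' hlong
    rw [List.length_append] at this
    omega

/-- Both lines read the same words around `J` and `J'`, so they coincide up to a translation by a
multiple of the period, which is too small to be nonzero. -/
theorem eq_of_readsAt_append_append (hσ : IsChainRelatorLabel σ N)
    (hσ' : IsRelatorLabel S p₁ p₂ σ' N') {u u' v v' J J' : List (GenSym S.A × Bool)}
    (hr : ReadsAt σ t (u ++ J ++ v)) (hr' : ReadsAt σ' t' (u' ++ J' ++ v'))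
    (hu : u <:+ ζ) (hu' : u' <:+ ζ) (hv : v <+: ζ) (hv' : v' <+: ζ)
    (hul : 32 * N ≤ 100 * u.length) (hul' : 32 * N' ≤ 100 * u'.length)
    (hvl : 32 * N ≤ 100 * v.length) (hvl' : 32 * N' ≤ 100 * v'.length)
    (hJ : 100 * J.length < 10 * N) (hJ' : 100 * J'.length < 10 * N') : J = J' := by
  obtain ⟨a, ⟨r, rfl⟩, ⟨r', rfl⟩, ha⟩ := exists_common_suffix_min hu hu'
  obtain ⟨b, ⟨q, rfl⟩, ⟨q', rfl⟩, hb⟩ := exists_common_prefix_min hv hv'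
  have hal : N ≤ 20 * a.length ∨ N' ≤ 20 * a.length :=
    ha.imp (fun h => by rw [← h] at hul; omega) fun h => by rw [← h] at hul'; omega
  have hbl : N ≤ 20 * b.length ∨ N' ≤ 20 * b.length :=
    hb.imp (fun h => by rw [← h] at hvl; omega) fun h => by rw [← h] at hvl'; omega
  obtain ⟨s, hs⟩ := hr.exists_of_isInfix (u := a ++ J ++ b) ⟨r, q, by simp⟩
  obtain ⟨s', hs'⟩ := hr'.exists_of_isInfix (u := a ++ J' ++ b) ⟨r', q', by simp⟩
  rw [List.append_assoc, readsAt_append] at hs hs'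
  obtain ⟨hsame, rfl⟩ : (∀ i, σ (s + i) = σ' (s' + i)) ∧ N = N' := by
    rcases hal with hal | hal
    · exact hσ.isRelatorLabel.eq_of_readsAt h₁ h₂ hσ' hs.1 hs'.1 hal
    · exact (hσ'.eq_of_readsAt h₁ h₂ hσ.isRelatorLabel hs'.1 hs.1 hal).imp
        (fun h i => (h i).symm) Eq.symm
  have hs'_congr := hs'.2.congr (σ' := σ) (t' := s + a.length) fun i => by
    rw [add_assoc, add_assoc, hsame]
  obtain ⟨hrJ, hrb⟩ := readsAt_append.1 hs.2
  obtain ⟨hrJ', hrb'⟩ := readsAt_append.1 hs'_congr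
  have hdvd := hσ.dvd_sub_of_readsAt h₁ h₂ hrb hrb' (by omega)
  have hzero := Int.eq_zero_of_abs_lt_dvd hdvd (abs_lt.2 ⟨by omega, by omega⟩)
  exact hrJ.eq hrJ' (by omega)

end IsChainRelatorLabel

end RelatorLine

/-! ### Cyclic rotation of interleaved words -/

section CyclicIndices

/-- The indices `last + 1, last + 2, …, last - 1` modulo `M + 1`. -/
def cyclicIndices (M last : ℕ) : List ℕ :=
  (List.range M).map fun i => (last + 1 + i) % (M + 1)

variable {M last k : ℕ}

theorem cyclicIndices_concat (h : last ≤ M) :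
    cyclicIndices M last ++ [last] = (List.range (M + 1)).rotate (last + 1) := by
  apply List.ext_getElem (by simp [cyclicIndices])
  intro i hi _
  rw [List.getElem_rotate, List.getElem_range, List.length_range]
  simp only [cyclicIndices, List.length_append, List.length_map, List.length_range,
    List.length_singleton] at hi
  rcases Nat.lt_succ_iff_lt_or_eq.1 hi with hlt | rfl
  · rw [List.getElem_append_left (by simpa [cyclicIndices] using hlt)]
    simp only [cyclicIndices, List.getElem_map, List.getElem_range, Nat.add_comm i]
  · rw [List.getElem_append_right (by simp [cyclicIndices]), List.getElem_singleton,
      show i + (last + 1) = last + (i + 1) by ring, Nat.add_mod_right, Nat.mod_eq_of_lt (by omega)]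

theorem le_of_mem_cyclicIndices (h : k ∈ cyclicIndices M last) : k ≤ M := by
  obtain ⟨i, -, rfl⟩ := List.mem_map.1 h
  exact Nat.lt_succ_iff.1 (Nat.mod_lt _ M.succ_pos)

theorem ne_of_mem_cyclicIndices (h : k ∈ cyclicIndices M last) (hlast : last ≤ M) : k ≠ last := by
  have hnodup : (cyclicIndices M last ++ [last]).Nodup := by
    rw [cyclicIndices_concat hlast, List.nodup_rotate]
    exact List.nodup_range
  rintro rfl
  exact (List.nodup_append.1 hnodup).2.2 _ h _ (List.mem_singleton_self _) rfl

theorem exists_getElem_eq_of_isInfix_cyclicIndices {mids : List ℕ}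
    (h : mids <:+: cyclicIndices M last) :
    ∃ c, ∀ i (hi : i < mids.length), mids[i] = (c + i) % (M + 1) := by
  obtain ⟨a, b, hab⟩ := h
  refine ⟨last + 1 + a.length, fun i hi => ?_⟩
  have hget : (a ++ mids ++ b)[a.length + i]'(by simp; omega) = mids[i] := by
    rw [List.getElem_append_left (by simp; omega), List.getElem_append_right (by omega)]
    simp
  rw [← hget]
  simp only [hab, cyclicIndices, List.getElem_map, List.getElem_range, Nat.add_assoc]

variable {α : Type*} {ζ : List (α × Bool)} {J : ℕ → List (α × Bool)}

theorem mk_interleaveLeft_cyclicIndices_mem {H : Subgroup (FreeGroup α)} [H.Normal]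
    (hlast : last ≤ M) (h : mk (interleaveLeft ζ J (List.range (M + 1))) ∈ H) :
    mk (interleaveLeft ζ J (cyclicIndices M last ++ [last])) ∈ H := by
  rw [cyclicIndices_concat hlast, List.rotate_eq_drop_append_take (by simpa using hlast),
    interleaveLeft, List.flatMap_append, ← mul_mk]
  apply Subgroup.Normal.mem_comm inferInstance
  rwa [mul_mk, ← List.flatMap_append, List.take_append_drop]

theorem mk_interleaveLeft_conjWord {g : List (α × Bool)} {f : α} (n : ℕ → ℤ) (ks : List ℕ) :
    mk (interleaveLeft ζ (fun k => conjWord f g (n k)) ks) = (mk g)⁻¹ *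
      mk (interleaveLeft (g ++ ζ ++ invRev g) (fun k => powWord f (n k)) ks) * mk g := by
  induction ks with
  | nil =>
    simp only [interleaveLeft, List.flatMap_nil, ← one_eq_mk]
    group
  | cons k ks ih =>
    rw [interleaveLeft_cons, interleaveLeft_cons]
    simp only [← mul_mk]
    rw [ih, mk_conjWord, mk_powWord, ← inv_mk]
    group

end CyclicIndices

/-! ### Trivial products of conjugates of powers -/

section PowerProduct

variable {S : IndexedStructure} {p₁ p₂ : ℕ} {f : GenSym S.A} {p : ℕ}
  {Z : List (GenSym S.A × Bool)} {σ : ℤ → GenSym S.A × Bool} {N : ℕ} {t : ℤ}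
  {s : List (GenSym S.A × Bool)} {m : ℤ} {n : ℕ → ℤ} {mids : List ℕ}

/-- A chain relator line runs through `f ^ n` with long pieces of `Z` on both sides, while `Z` has
no long prefix whose inverse is a suffix. -/
def HasCentralPower (f : GenSym S.A) (Z : List (GenSym S.A × Bool)) (n : ℤ) : Prop :=
  ∃ σ N t u u', IsChainRelatorLabel σ N ∧ ReadsAt σ t (u ++ powWord f n ++ u') ∧
    u <:+ Z ∧ u' <+: Z ∧ 34 * N ≤ 100 * u.length ∧ 34 * N ≤ 100 * u'.length ∧
    ∀ g, g <+: Z → invRev g <:+ Z → 100 * g.length < N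

/-- A chain relator line contains ten consecutive copies of a short word `Z`, separated by the
powers of `f` with exponents `n k`, for consecutive `k` modulo `1000`. -/
def HasManyCopies (f : GenSym S.A) (Z : List (GenSym S.A × Bool)) (n : ℕ → ℤ) : Prop :=
  ∃ σ N t mids c, IsChainRelatorLabel σ N ∧ 100 * Z.length < N ∧
    ReadsAt σ t (Z ++ interleaveRight Z (fun k => powWord f (n k)) mids) ∧ 9 ≤ mids.length ∧
    (∀ k ∈ mids, n k ≠ 0) ∧ ∀ i (hi : i < mids.length), mids[i] = (c + i) % 1000

theorem exists_mem_of_suffix_append_powWord (hm : m ≠ 0) (hs : s <:+ Z ++ powWord f m)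
    (hne : s ≠ []) : ∃ a ∈ s, a.1 = f := by
  obtain ⟨a, ha, has⟩ := exists_mem_getLast? hne
  rw [getLast?_eq_of_suffix hs hne, List.getLast?_append_of_ne_nil _ (powWord_ne_nil hm)] at ha
  exact ⟨a, has, by rw [eq_of_mem_powWord (List.mem_of_mem_getLast? ha)]⟩

theorem exists_mem_of_prefix_powWord_append (hm : m ≠ 0) (hs : s <+: powWord f m ++ Z)
    (hne : s ≠ []) : ∃ a ∈ s, a.1 = f := by
  obtain ⟨a, ha, has⟩ := exists_mem_head? hne
  rw [head?_eq_of_prefix hs hne, List.head?_append_of_ne_nil _ (powWord_ne_nil hm)] at ha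
  exact ⟨a, has, by rw [eq_of_mem_powWord (List.mem_of_mem_head? ha)]⟩

namespace IsChainRelatorLabel

theorem length_interleaveRight_le (hσ : IsChainRelatorLabel σ N) (hZ : 100 * Z.length < N)
    (hr : ReadsAt σ t (interleaveRight Z (fun k => powWord f (n k)) mids)) :
    100 * (interleaveRight Z (fun k => powWord f (n k)) mids).length ≤ 2 * N * mids.length := by
  induction mids generalizing t with
  | nil => simp [interleaveRight]
  | cons k mids ih =>
    rw [interleaveRight_cons] at hr ⊢
    obtain ⟨hk, htail⟩ := readsAt_append.1 hr
    have htail_le := ih htail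
    have hpow := hσ.length_lt_of_isInfix_powWord (readsAt_append.1 hk).1 List.infix_rfl
    simp only [List.length_append, List.length_cons, mul_add, mul_one] at *
    omega

theorem length_lt_of_suffix_append_powWord (hσ : IsChainRelatorLabel σ N)
    (hZ : 100 * Z.length < N) (hr : ReadsAt σ t s) (hs : s <:+ Z ++ powWord f m) :
    100 * s.length < 2 * N := by
  rcases suffix_append_cases hs with hs | ⟨q, rfl, hq⟩
  · have := hσ.length_lt_of_isInfix_powWord hr hs.isInfix
    omega
  · have := hσ.length_lt_of_isInfix_powWord (readsAt_append.1 hr).2 List.infix_rfl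
    have := hq.length_le
    rw [List.length_append]
    omega

theorem length_lt_of_prefix_powWord_append (hσ : IsChainRelatorLabel σ N)
    (hZ : 100 * Z.length < N) (hr : ReadsAt σ t s) (hs : s <+: powWord f m ++ Z) :
    100 * s.length < 2 * N := by
  rcases prefix_append_cases hs with hs | ⟨q, rfl, hq⟩
  · have := hσ.length_lt_of_isInfix_powWord hr hs.isInfix
    omega
  · have := hσ.length_lt_of_isInfix_powWord (readsAt_append.1 hr).1 List.infix_rfl
    have := hq.length_le
    rw [List.length_append]
    omega

end IsChainRelatorLabel

theorem IsDoubleCosetReduced.isReduced_append_powWord_append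
    (hZ : IsDoubleCosetReduced S p₁ p₂ f Z) (hm : m ≠ 0) : IsReduced (Z ++ powWord f m ++ Z) :=
  SmallCancellation.isReduced_append_powWord_append hm hZ.isReduced hZ.isReduced hZ.last_ne
    hZ.head_ne

theorem IsDoubleCosetReduced.isReduced_append_powWord
    (hZ : IsDoubleCosetReduced S p₁ p₂ f Z) : IsReduced (Z ++ powWord f m) := by
  rcases eq_or_ne m 0 with rfl | hm
  · rw [powWord_zero, List.append_nil]
    exact hZ.isReduced
  · exact (hZ.isReduced_append_powWord_append hm).infix (List.prefix_append _ _).isInfix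

variable (h₁ : 10 ^ 10 < p₁) (h₂ : 10 ^ 10 < p₂)
include h₁ h₂

theorem exists_readsAt_of_mk_mem_normalClosure {w : List (GenSym S.A × Bool)} (hw : IsReduced w)
    (hne : w ≠ []) (hmem : mk w ∈ Subgroup.normalClosure (grpRels S p₁ p₂)) :
    ∃ σ N t s, IsRelatorLabel S p₁ p₂ σ N ∧ ReadsAt σ t s ∧ s <:+: w ∧ 85 * N ≤ 100 * s.length := by
  have hword : (mk w).toWord = w := by rw [toWord_mk, hw.reduce_eq]
  obtain ⟨σ, N, hσ, m, hm, hs⟩ := (isLabelSystem_isRelatorLabel h₁ h₂).exists_window_isInfix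
    (normalClosure_grpRels_le hmem) fun h => hne (by rw [← hword, h, toWord_one])
  rw [hword] at hs
  exact ⟨σ, N, 0, _, hσ, readsAt_window m, hs, by rw [length_window]; omega⟩

namespace IsDoubleCosetReduced

theorem hasCentralPower (hZ : IsDoubleCosetReduced S p₁ p₂ f Z) (hf : IsTorsionLetter p₁ p₂ f p)
    (hm : m ≠ 0) (hmp : 2 * m.natAbs ≤ p) (hσ : IsRelatorLabel S p₁ p₂ σ N) (hr : ReadsAt σ t s)
    (hs : s <:+: Z ++ powWord f m ++ Z) (hl : 85 * N ≤ 100 * s.length) :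
    HasCentralPower f Z m := by
  obtain ⟨hchain, u, u', rfl, hu, hu', hul, hul'⟩ := hZ.exists_eq_append_powWord_append h₁ h₂ hf
    List.suffix_rfl List.prefix_rfl hm hmp hσ hr hs hl
  exact ⟨σ, N, t, u, u', hchain, hr, hu, hu', hul, hul', fun g hg hg' =>
    hZ.length_lt_of_prefix_of_invRev_suffix h₁ h₂ hf List.suffix_rfl List.prefix_rfl hm hmp hσ hr
      hs hl hg hg'⟩

theorem length_lt_of_isInfix_append_powWord (hZ : IsDoubleCosetReduced S p₁ p₂ f Z)
    (hf : IsTorsionLetter p₁ p₂ f p) (hmp : 2 * m.natAbs ≤ p) (hσ : IsRelatorLabel S p₁ p₂ σ N)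
    (hr : ReadsAt σ t s) (hs : s <:+: Z ++ powWord f m) : 100 * s.length < 85 * N := by
  have hN := hσ.hundred_le h₁ h₂
  rcases eq_or_ne m 0 with rfl | hm
  · rw [powWord_zero, List.append_nil] at hs
    have := hZ.two_mul_length_le _ _ hσ _ _ hr hs
    omega
  · by_contra! hl
    obtain ⟨-, u, u', rfl, -, hu', -, hul'⟩ := hZ.exists_eq_append_powWord_append (c := []) h₁ h₂
      hf List.suffix_rfl List.nil_prefix hm hmp hσ hr (by rwa [List.append_nil]) hl
    have := hu'.length_le
    rw [List.length_nil] at this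
    omega

theorem isChainRelatorLabel_of_readsAt (hZ : IsDoubleCosetReduced S p₁ p₂ f Z)
    (hf : IsTorsionLetter p₁ p₂ f p) (hσ : IsRelatorLabel S p₁ p₂ σ N)
    {s₁ s₂ : List (GenSym S.A × Bool)} {m' : ℤ}
    (hr : ReadsAt σ t (s₁ ++ Z ++ interleaveRight Z (fun k => powWord f (n k)) mids ++ s₂))
    (hmids : ∀ k ∈ mids, n k ≠ 0) (hs₁ : s₁ <:+ Z ++ powWord f m) (hm : m ≠ 0)
    (hs₂ : s₂ <+: powWord f m' ++ Z) (hm' : s₂ ≠ [] → m' ≠ 0)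
    (hl : 85 * N ≤
      100 * (s₁ ++ Z ++ interleaveRight Z (fun k => powWord f (n k)) mids ++ s₂).length) :
    IsChainRelatorLabel σ N := by
  have hN := hσ.hundred_le h₁ h₂
  obtain ⟨a, ha, haf⟩ : ∃ a ∈ s₁ ++ Z ++ interleaveRight Z (fun k => powWord f (n k)) mids ++ s₂,
      a.1 = f := by
    rcases eq_or_ne s₁ [] with rfl | hne
    · rcases eq_or_ne s₂ [] with rfl | hne
      · rcases mids with _ | ⟨k, mids⟩
        · simp only [interleaveRight, List.flatMap_nil, List.append_nil, List.nil_append] at hr hl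
          have := hZ.two_mul_length_le _ _ hσ _ _ hr List.infix_rfl
          omega
        · obtain ⟨a, ha⟩ := List.exists_mem_of_ne_nil _
            (powWord_ne_nil (f := f) (hmids k List.mem_cons_self))
          exact ⟨a, by simp [interleaveRight_cons, ha], by rw [eq_of_mem_powWord ha]⟩
      · obtain ⟨a, ha, haf⟩ := exists_mem_of_prefix_powWord_append (hm' hne) hs₂ hne
        exact ⟨a, by simp [ha], haf⟩
    · obtain ⟨a, ha, haf⟩ := exists_mem_of_suffix_append_powWord hm hs₁ hne
      exact ⟨a, by simp [ha], haf⟩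
  refine (hf.torsion_or_chain hσ hr ha haf).resolve_left fun ⟨_, hconst⟩ => ?_
  obtain ⟨b, hb, hbZ⟩ := exists_mem_head? hZ.ne_nil
  obtain ⟨t', ht'⟩ := hr.exists_apply_eq (a := b) (by simp [hbZ])
  exact hZ.head_ne b hb (by rw [← ht', hconst])

theorem hasManyCopies (hZ : IsDoubleCosetReduced S p₁ p₂ f Z) (hf : IsTorsionLetter p₁ p₂ f p)
    (hσ : IsRelatorLabel S p₁ p₂ σ N) {s₁ s₂ : List (GenSym S.A × Bool)} {last k k' : ℕ}
    (hr : ReadsAt σ t (s₁ ++ Z ++ interleaveRight Z (fun k => powWord f (n k)) mids ++ s₂))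
    (hindices : mids <:+: cyclicIndices 999 last) (hmids : ∀ k ∈ mids, n k ≠ 0)
    (hs₁ : s₁ <:+ Z ++ powWord f (n k)) (hk : n k ≠ 0)
    (hs₂ : s₂ <+: powWord f (n k') ++ Z) (hk' : s₂ ≠ [] → n k' ≠ 0)
    (hl : 85 * N ≤
      100 * (s₁ ++ Z ++ interleaveRight Z (fun k => powWord f (n k)) mids ++ s₂).length) :
    HasManyCopies f Z n := by
  have hchain := hZ.isChainRelatorLabel_of_readsAt h₁ h₂ hf hσ hr hmids hs₁ hk hs₂ hk' hl
  have hN := hchain.three_hundred_le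
  obtain ⟨hr', hr₂⟩ := readsAt_append.1 hr
  obtain ⟨hr', hrmids⟩ := readsAt_append.1 hr'
  obtain ⟨hr₁, hrZ⟩ := readsAt_append.1 hr'
  have hZN : 100 * Z.length < N := by
    refine hchain.length_lt_of_readsAt_interleave (f := f) (g := []) (n := n) (t := t) (s₁ := s₁)
      (s₂ := s₂) (mids := mids) (k := k) (k' := k') h₁ h₂ (by rw [List.length_nil]; omega)
      (hZ.two_mul_length_le _ _ hσ _ _ hrZ List.infix_rfl) ?_ ?_ ?_ ?_ <;>
    simpa only [conjWord_nil]
  have hl₁ := hchain.length_lt_of_suffix_append_powWord hZN hr₁ hs₁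
  have hl₂ := hchain.length_lt_of_prefix_powWord_append hZN hr₂ hs₂
  have hlmids := hchain.length_interleaveRight_le hZN hrmids
  obtain ⟨c, hc⟩ := exists_getElem_eq_of_isInfix_cyclicIndices hindices
  obtain ⟨t', hr''⟩ := hr.exists_of_isInfix
    (u := Z ++ interleaveRight Z (fun k => powWord f (n k)) mids) ⟨s₁, s₂, by simp⟩
  refine ⟨σ, N, t', mids, c, hchain, hZN, hr'', ?_, hmids, hc⟩
  by_contra! hlt
  have := Nat.mul_le_mul_left (2 * N) (Nat.le_of_lt_succ hlt)
  simp only [List.length_append] at hl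
  omega

theorem hasManyCopies_or_hasCentralPower (hZ : IsDoubleCosetReduced S p₁ p₂ f Z)
    (hf : IsTorsionLetter p₁ p₂ f p) (hnp : ∀ k ≤ 999, 2 * (n k).natAbs ≤ p)
    (hinj : Set.InjOn n (Set.Iic 999))
    (hmem : FreeGroup.mk (interleaveLeft Z (fun k => powWord f (n k)) (List.range 1000)) ∈
      Subgroup.normalClosure (grpRels S p₁ p₂)) :
    HasManyCopies f Z n ∨ ∃ j ≤ 999, n j ≠ 0 ∧ HasCentralPower f Z (n j) := by
  obtain ⟨last, hlast, hne_zero⟩ : ∃ last ≤ 999, ∀ k ≤ 999, k ≠ last → n k ≠ 0 := by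
    by_cases h : ∃ l ≤ 999, n l = 0
    · obtain ⟨l, hl, hzero⟩ := h
      exact ⟨l, hl, fun k hk hne h0 => hne (hinj hk hl (h0.trans hzero.symm))⟩
    · push Not at h
      exact ⟨0, Nat.zero_le _, fun k hk _ => h k hk⟩
  have hindices : ∀ k ∈ cyclicIndices 999 last, k ≤ 999 ∧ n k ≠ 0 := fun k hk =>
    ⟨le_of_mem_cyclicIndices hk,
      hne_zero k (le_of_mem_cyclicIndices hk) (ne_of_mem_cyclicIndices hk hlast)⟩
  have hred : IsReduced (interleaveLeft Z (fun k => powWord f (n k))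
      (cyclicIndices 999 last ++ [last])) :=
    isReduced_interleaveLeft_concat hZ.ne_nil
      (fun k hk => hZ.isReduced_append_powWord_append (hindices k hk).2)
      hZ.isReduced_append_powWord
  obtain ⟨σ, N, t, s, hσ, hs, hsW, hl⟩ := exists_readsAt_of_mk_mem_normalClosure h₁ h₂ hred
    (by simp [interleaveLeft, hZ.ne_nil]) (mk_interleaveLeft_cyclicIndices_mem hlast hmem)
  rcases infix_interleaveLeft_concat_cases hsW with
    ⟨k, hk, hsk⟩ | hsl | ⟨s₁, mids, s₂, rfl, hmids, ⟨k, hk, hs₁⟩, hs₂⟩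
  · have ⟨hk_le, hk_ne⟩ := hindices k hk
    exact .inr ⟨k, hk_le, hk_ne, hZ.hasCentralPower h₁ h₂ hf hk_ne (hnp k hk_le) hσ hs hsk hl⟩
  · have := hZ.length_lt_of_isInfix_append_powWord h₁ h₂ hf (hnp last hlast) hσ hs hsl
    omega
  · obtain ⟨k', hs₂, hk'⟩ : ∃ k', s₂ <+: powWord f (n k') ++ Z ∧ (s₂ ≠ [] → n k' ≠ 0) := by
      rcases hs₂ with ⟨k', hk', hs₂⟩ | hs₂
      · exact ⟨k', hs₂, fun _ => (hindices k' hk').2⟩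
      · refine ⟨last, hs₂.trans (List.prefix_append _ _), fun hne h => hne ?_⟩
        rwa [h, powWord_zero, List.prefix_nil] at hs₂
    exact .inl (hZ.hasManyCopies h₁ h₂ hf hσ hs hmids (fun k hk => (hindices k (hmids.subset hk)).2)
      hs₁ (hindices k hk).2 hs₂ hk' hl)

end IsDoubleCosetReduced

end PowerProduct

/-! ### Cyclically reduced cores -/

section CyclicCore

variable {S : IndexedStructure} {p₁ p₂ : ℕ} {f : GenSym S.A} {p : ℕ}
  {Z g ζ s u u' : List (GenSym S.A × Bool)} {σ : ℤ → GenSym S.A × Bool} {N : ℕ} {t : ℤ} {m : ℤ}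
  {n : ℕ → ℤ}

theorem exists_append_invRev_suffix (hu : u <:+ g ++ ζ ++ invRev g) (hl : 34 * N ≤ 100 * u.length)
    (hg : 100 * g.length < N) : ∃ v, v <:+ ζ ∧ v ++ invRev g <:+ u ∧ 32 * N ≤ 100 * v.length := by
  rcases suffix_append_cases hu with hu | ⟨q, rfl, hq⟩
  · have := hu.length_le
    rw [invRev_length] at this
    omega
  rcases suffix_append_cases hq with hq | ⟨q', rfl, hq'⟩
  · rw [List.length_append, invRev_length] at hl
    exact ⟨q, hq, List.suffix_rfl, by omega⟩
  · have := hq'.length_le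
    rw [List.length_append, List.length_append, invRev_length] at hl
    exact ⟨ζ, List.suffix_rfl, ⟨q', (List.append_assoc _ _ _).symm⟩, by omega⟩

theorem exists_append_prefix (hu : u <+: g ++ ζ ++ invRev g) (hl : 34 * N ≤ 100 * u.length)
    (hg : 100 * g.length < N) : ∃ v, v <+: ζ ∧ g ++ v <+: u ∧ 32 * N ≤ 100 * v.length := by
  rw [List.append_assoc] at hu
  rcases prefix_append_cases hu with hu | ⟨q, rfl, hq⟩
  · have := hu.length_le
    omega
  rcases prefix_append_cases hq with hq | ⟨q', rfl, hq'⟩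
  · rw [List.length_append] at hl
    exact ⟨q, hq, List.prefix_rfl, by omega⟩
  · have := hq'.length_le
    rw [invRev_length] at this
    rw [List.length_append, List.length_append] at hl
    exact ⟨ζ, List.prefix_rfl, ⟨q', List.append_assoc _ _ _⟩, by omega⟩

theorem exists_readsAt_append_conjWord_append (hm : m ≠ 0)
    (hr : ReadsAt σ t (u ++ powWord f m ++ u')) (hu : u <:+ g ++ ζ ++ invRev g)
    (hu' : u' <+: g ++ ζ ++ invRev g) (hul : 34 * N ≤ 100 * u.length)
    (hul' : 34 * N ≤ 100 * u'.length) (hg : 100 * g.length < N) :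
    ∃ t' v v', ReadsAt σ t' (v ++ conjWord f g m ++ v') ∧ v <:+ ζ ∧ v' <+: ζ ∧
      32 * N ≤ 100 * v.length ∧ 32 * N ≤ 100 * v'.length := by
  obtain ⟨v, hv, ⟨r, rfl⟩, hvl⟩ := exists_append_invRev_suffix hu hul hg
  obtain ⟨v', hv', ⟨r', rfl⟩, hvl'⟩ := exists_append_prefix hu' hul' hg
  obtain ⟨t', ht'⟩ := hr.exists_of_isInfix (u := v ++ conjWord f g m ++ v')
    ⟨r, r', by rw [conjWord, if_neg hm]; simp⟩
  exact ⟨t', v, v', ht', hv, hv', hvl, hvl'⟩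

theorem append_conjWord_append (hm : m ≠ 0) :
    ζ ++ conjWord f g m ++ ζ = ζ ++ invRev g ++ powWord f m ++ (g ++ ζ) := by
  rw [conjWord, if_neg hm]
  simp only [List.append_assoc]

theorem IsChainRelatorLabel.length_lt_of_readsAt_of_readsAt_interleave {σ' : ℤ → GenSym S.A × Bool}
    {N' : ℕ} {t' : ℤ} {v s₁ s₂ : List (GenSym S.A × Bool)} {mids : List ℕ} {k k' : ℕ}
    (h₁ : 10 ^ 10 < p₁) (h₂ : 10 ^ 10 < p₂) (hσ' : IsChainRelatorLabel σ' N')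
    (hσ : IsRelatorLabel S p₁ p₂ σ N) (hv : v <:+ ζ) (hr' : ReadsAt σ' t' v)
    (hvl : N' ≤ 100 * v.length) (hg : 100 * g.length < N') (hζ : 2 * ζ.length ≤ N)
    (hr : ReadsAt σ t (s₁ ++ ζ ++ interleaveRight ζ (fun k => conjWord f g (n k)) mids ++ s₂))
    (hs₁ : s₁ <:+ ζ ++ conjWord f g (n k)) (hs₂ : s₂ <+: conjWord f g (n k') ++ ζ) :
    100 * (s₁ ++ ζ ++ interleaveRight ζ (fun k => conjWord f g (n k)) mids ++ s₂).length <
      85 * N := by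
  obtain ⟨r, rfl⟩ := hv
  obtain ⟨t₁, hr₁⟩ := hr.exists_of_isInfix (u := v) ⟨s₁ ++ r,
    interleaveRight (r ++ v) (fun k => conjWord f g (n k)) mids ++ s₂, by
      simp only [List.append_assoc]⟩
  obtain ⟨hsame, rfl⟩ := hσ'.eq_of_readsAt h₁ h₂ hσ hr' hr₁ hvl
  have hσ_eq : σ = fun i => σ' (t' - t₁ + i) := by
    funext i
    rw [← add_sub_cancel t₁ i, ← hsame]
    congr 1
    ring
  have hchain : IsChainRelatorLabel σ N' := hσ_eq ▸ hσ'.shift _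
  by_contra! hl
  have := hchain.length_lt_of_readsAt_interleave h₁ h₂ hg hζ hr hs₁ hs₂ hl
  rw [List.length_append] at this
  omega

namespace IsDoubleCosetReduced

theorem isReduced_append_conjWord_append (hZ : IsDoubleCosetReduced S p₁ p₂ f Z)
    (hgζ : g ++ ζ ++ invRev g = Z) (hζ : IsCyclicallyReduced ζ) :
    IsReduced (ζ ++ conjWord f g m ++ ζ) := by
  rcases eq_or_ne m 0 with rfl | hm
  · simpa [conjWord, List.replicate] using (hζ.flatten_replicate 2).isReduced
  · rw [append_conjWord_append hm]
    refine (hZ.isReduced_append_powWord_append hm).infix ⟨g, invRev g, ?_⟩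
    conv_rhs => rw [← hgζ]
    simp only [List.append_assoc]

theorem exists_isCyclicallyReduced (hZ : IsDoubleCosetReduced S p₁ p₂ f Z) :
    ∃ g ζ, g ++ ζ ++ invRev g = Z ∧ IsCyclicallyReduced ζ ∧ ζ ≠ [] := by
  refine ⟨_, _, reduceCyclically.conj_conjugator_reduceCyclically Z,
    reduceCyclically.isCyclicallyReduced hZ.isReduced, fun hnil => hZ.ne_nil ?_⟩
  have hZ_eq := reduceCyclically.conj_conjugator_reduceCyclically Z
  have hword : (FreeGroup.mk Z).toWord = Z := by rw [toWord_mk, hZ.isReduced.reduce_eq]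
  rw [hnil, List.append_nil] at hZ_eq
  rw [← hword, ← hZ_eq, ← mul_mk, ← inv_mk, mul_inv_cancel, toWord_one]

variable (h₁ : 10 ^ 10 < p₁) (h₂ : 10 ^ 10 < p₂)
include h₁ h₂

theorem exists_readsAt_of_isInfix_append_conjWord_append (hZ : IsDoubleCosetReduced S p₁ p₂ f Z)
    (hgζ : g ++ ζ ++ invRev g = Z) (hf : IsTorsionLetter p₁ p₂ f p) (hmp : 2 * m.natAbs ≤ p)
    (hσ : IsRelatorLabel S p₁ p₂ σ N) (hr : ReadsAt σ t s) (hs : s <:+: ζ ++ conjWord f g m ++ ζ)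
    (hl : 85 * N ≤ 100 * s.length) :
    ∃ t' v v', ReadsAt σ t' (v ++ conjWord f g m ++ v') ∧ v <:+ ζ ∧ v' <+: ζ ∧
      32 * N ≤ 100 * v.length ∧ 32 * N ≤ 100 * v'.length ∧
      100 * (conjWord f g m).length < 10 * N := by
  have hN := hσ.hundred_le h₁ h₂
  rcases eq_or_ne m 0 with rfl | hm
  · have hshort {w} (hw : w <:+: s) (hwζ : w <:+: ζ) : 2 * w.length ≤ N := by
      obtain ⟨t', hr'⟩ := hr.exists_of_isInfix hw
      exact hZ.two_mul_length_le _ _ hσ _ _ hr' (hwζ.trans ⟨g, invRev g, hgζ⟩)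
    rw [conjWord, if_pos rfl] at hs ⊢
    rw [List.append_nil] at hs
    rcases List.infix_append_iff.1 hs with hs | hs | ⟨v, v', rfl, hv, hv'⟩
    · have := hshort List.infix_rfl hs
      omega
    · have := hshort List.infix_rfl hs
      omega
    · have := hshort (List.prefix_append _ _).isInfix hv.isInfix
      have := hshort (List.suffix_append _ _).isInfix hv'.isInfix
      rw [List.length_append] at hl
      refine ⟨t, v, v', by rwa [List.append_nil], hv, hv', by omega, by omega, ?_⟩
      rw [List.length_nil]
      omega
  · rw [append_conjWord_append hm] at hs
    have hsuffix : ζ ++ invRev g <:+ Z := ⟨g, by rw [← hgζ, List.append_assoc]⟩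
    have hprefix : g ++ ζ <+: Z := ⟨invRev g, hgζ⟩
    obtain ⟨hchain, w, w', rfl, hw, hw', hwl, hwl'⟩ := hZ.exists_eq_append_powWord_append h₁ h₂ hf
      hsuffix hprefix hm hmp hσ hr hs hl
    have hgl := hZ.length_lt_of_prefix_of_invRev_suffix h₁ h₂ hf hsuffix hprefix hm hmp hσ hr hs
      hl ((List.prefix_append _ _).trans hprefix) ((List.suffix_append _ _).trans hsuffix)
    obtain ⟨t', v, v', hr', hv, hv', hvl, hvl'⟩ := exists_readsAt_append_conjWord_append hm hr
      (hgζ ▸ hw.trans hsuffix) (hgζ ▸ hw'.trans hprefix) hwl hwl' hgl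
    have := hchain.length_lt_of_isInfix_conjWord
      (readsAt_append.1 (readsAt_append.1 hr').1).2 List.infix_rfl hgl
    exact ⟨t', v, v', hr', hv, hv', hvl, hvl', by omega⟩

theorem length_lt_of_isInfix_append_conjWord (hZ : IsDoubleCosetReduced S p₁ p₂ f Z)
    (hgζ : g ++ ζ ++ invRev g = Z) (hf : IsTorsionLetter p₁ p₂ f p) (hm : m ≠ 0)
    (hmp : 2 * m.natAbs ≤ p) (hσ : IsRelatorLabel S p₁ p₂ σ N) (hr : ReadsAt σ t s)
    (hs : s <:+: ζ ++ conjWord f g m) : 100 * s.length < 85 * N := by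
  have hN := hσ.hundred_le h₁ h₂
  have hsuffix : ζ ++ invRev g <:+ Z := ⟨g, by rw [← hgζ, List.append_assoc]⟩
  have hprefix : g <+: Z := ⟨ζ ++ invRev g, by rw [← hgζ, List.append_assoc]⟩
  rw [conjWord, if_neg hm, ← List.append_assoc, ← List.append_assoc] at hs
  by_contra! hl
  obtain ⟨-, w, w', rfl, -, hw', -, hwl'⟩ := hZ.exists_eq_append_powWord_append h₁ h₂ hf
    hsuffix hprefix hm hmp hσ hr hs hl
  have := hZ.length_lt_of_prefix_of_invRev_suffix h₁ h₂ hf hsuffix hprefix hm hmp hσ hr hs hl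
    hprefix ((List.suffix_append _ _).trans hsuffix)
  have := hw'.length_le
  omega

/-- Conjugating `Z` to its cyclically reduced core `ζ` turns the powers of `f` into their
conjugates `J k`. Any long relator subword of the new product meets the chain relator around
`J j`, which forces `J j = J k` for some `k ≠ j`, or a short period of that relator. -/
theorem not_hasCentralPower (hZ : IsDoubleCosetReduced S p₁ p₂ f Z)
    (hf : IsTorsionLetter p₁ p₂ f p) (hnp : ∀ k ≤ 999, 2 * (n k).natAbs ≤ p)
    (hinj : Set.InjOn n (Set.Iic 999))
    (hmem : FreeGroup.mk (interleaveLeft Z (fun k => powWord f (n k)) (List.range 1000)) ∈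
      Subgroup.normalClosure (grpRels S p₁ p₂))
    {j : ℕ} (hj : j ≤ 999) (hnj : n j ≠ 0) : ¬ HasCentralPower f Z (n j) := by
  rintro ⟨σ', N', t', u, u', hσ', hr', hu, hu', hul, hul', hg⟩
  obtain ⟨g, ζ, hgζ, hcyc, hζ⟩ := hZ.exists_isCyclicallyReduced
  have hgl := hg g ⟨ζ ++ invRev g, by rw [← hgζ, List.append_assoc]⟩ ⟨g ++ ζ, hgζ⟩
  obtain ⟨t₁, v, v', hr₁, hv, hv', hvl, hvl'⟩ :=
    exists_readsAt_append_conjWord_append hnj hr' (hgζ ▸ hu) (hgζ ▸ hu') hul hul' hgl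
  have hred (m) := hZ.isReduced_append_conjWord_append (m := m) hgζ hcyc
  obtain ⟨σ, N, t, s, hσ, hr, hsW, hl⟩ := exists_readsAt_of_mk_mem_normalClosure h₁ h₂
    (isReduced_interleaveLeft_concat (J := fun k => conjWord f g (n k))
      (ks := cyclicIndices 999 j) (last := j) hζ (fun k _ => hred (n k))
      ((hred (n j)).infix (List.prefix_append _ _).isInfix))
    (by simp [interleaveLeft, hζ])
    (mk_interleaveLeft_cyclicIndices_mem hj (by
      rw [mk_interleaveLeft_conjWord, hgζ]
      simpa only [inv_inv] using Subgroup.Normal.conj_mem inferInstance _ hmem (FreeGroup.mk g)⁻¹))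
  rcases infix_interleaveLeft_concat_cases hsW with
    ⟨k, hk, hsk⟩ | hsj | ⟨s₁, mids, s₂, rfl, -, ⟨k, -, hs₁⟩, hs₂⟩
  · have hk_le := le_of_mem_cyclicIndices hk
    obtain ⟨t₂, w, w', hr₂, hw, hw', hwl, hwl', hJ⟩ :=
      hZ.exists_readsAt_of_isInfix_append_conjWord_append h₁ h₂ hgζ hf (hnp k hk_le) hσ hr hsk hl
    have hJ' := hσ'.length_lt_of_isInfix_conjWord
      (readsAt_append.1 (readsAt_append.1 hr₁).1).2 List.infix_rfl hgl
    have hJJ' := hσ'.eq_of_readsAt_append_append h₁ h₂ hσ hr₁ hr₂ hv hw hv' hw' hvl hwl hvl' hwl'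
      (by omega) hJ
    exact ne_of_mem_cyclicIndices hk hj (hinj hk_le hj (conjWord_injective f g hJJ').symm)
  · have := hZ.length_lt_of_isInfix_append_conjWord h₁ h₂ hgζ hf hnj (hnp j hj) hσ hr hsj
    omega
  · obtain ⟨k', hs₂⟩ : ∃ k', s₂ <+: conjWord f g (n k') ++ ζ :=
      hs₂.elim (fun ⟨k', _, h⟩ => ⟨k', h⟩) fun h => ⟨j, h.trans (List.prefix_append _ _)⟩
    obtain ⟨t₂, hrζ⟩ := hr.exists_of_isInfix (u := ζ)
      ⟨s₁, interleaveRight ζ (fun k => conjWord f g (n k)) mids ++ s₂, by simp⟩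
    have hζN := hZ.two_mul_length_le _ _ hσ _ _ hrζ ⟨g, invRev g, hgζ⟩
    have := hσ'.length_lt_of_readsAt_of_readsAt_interleave h₁ h₂ hσ hv
      (readsAt_append.1 (readsAt_append.1 hr₁).1).1 (by omega) hgl hζN hr hs₁ hs₂
    omega

theorem hasManyCopies_of_mk_mem_normalClosure (hZ : IsDoubleCosetReduced S p₁ p₂ f Z)
    (hf : IsTorsionLetter p₁ p₂ f p) (hnp : ∀ k ≤ 999, 2 * (n k).natAbs ≤ p)
    (hinj : Set.InjOn n (Set.Iic 999))
    (hmem : FreeGroup.mk (interleaveLeft Z (fun k => powWord f (n k)) (List.range 1000)) ∈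
      Subgroup.normalClosure (grpRels S p₁ p₂)) : HasManyCopies f Z n :=
  (hZ.hasManyCopies_or_hasCentralPower h₁ h₂ hf hnp hinj hmem).resolve_right
    fun ⟨_, hj, hnj, hcentral⟩ =>
      hZ.not_hasCentralPower h₁ h₂ hf hnp hinj hmem hj hnj hcentral

end IsDoubleCosetReduced

end CyclicCore

/-! ### Words read along a chain label -/

section ReadsAtChainLabel

variable {A : Type} {x y f : GenSym A} {lo : ℕ} {k k' K t : ℤ}

theorem ReadsAt.apply_powWord {α : Type*} {σ : ℤ → α × Bool} {f : α} {n : ℤ}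
    (h : ReadsAt σ t (powWord f n)) {i : ℕ} (hi : i < n.natAbs) :
    σ (t + i) = (f, decide (0 < n)) := by
  rw [readsAt_iff.1 h i (by rwa [length_powWord])]
  exact eq_of_mem_powWord (List.getElem_mem _)

theorem blockStart_chainBlock_add_one (k : ℤ) : blockStart (chainBlock x y lo) (k + 1) =
    blockStart (chainBlock x y lo) k + 1 + chainExponent lo k := by
  rw [blockStart_add_one, chainBlock, List.length_append, List.length_replicate, Nat.cast_add,
    List.length_singleton, Nat.cast_one, add_assoc]

theorem strictMono_blockStart_chainBlock : StrictMono (blockStart (chainBlock x y lo)) :=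
  strictMono_int_of_lt_succ (blockStart_lt_add_one chainBlock_ne_nil)

theorem exists_blockStart_eq_of_chainLabel_ne (h : x ≠ y) (ht : (chainLabel x y lo t).1 ≠ y) :
    ∃ k, blockStart (chainBlock x y lo) k = t := by
  have hdecomp := isBlockDecomposition_chainLabel (lo := lo) h
  obtain ⟨k, ⟨i, hi, rfl⟩ | ⟨i, hi, rfl⟩⟩ := hdecomp.exists_eq_start_add t
  · obtain rfl := Nat.lt_one_iff.1 hi
    exact ⟨k, by simp⟩
  · exact absurd (congrArg Prod.fst (hdecomp.apply_run k i hi)) ht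

theorem chainExponent_eq_of_overlap (h : x ≠ y)
    (hoverlap : ∀ i : ℕ, i ≤ 1 + chainExponent lo k →
      chainLabel x y lo (blockStart (chainBlock x y lo) k + i) =
        chainLabel x y lo (blockStart (chainBlock x y lo) k' + i)) :
    chainExponent lo k = chainExponent lo k' := by
  have hdecomp := isBlockDecomposition_chainLabel (lo := lo) h
  exact (hdecomp.run_eq_of_overlap hdecomp rfl hoverlap (List.cons_ne_nil _ _)).resolve_right
    fun h => List.cons_ne_nil _ _ h.1

theorem blockStart_add_chainLength_le (hk : k < k')
    (hexp : chainExponent lo k = chainExponent lo k') :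
    blockStart (chainBlock x y lo) k + chainLength lo ≤ blockStart (chainBlock x y lo) k' := by
  have hmod := emod_eq_of_chainExponent_eq hexp
  have hperiod := blockStart_chainBlock_mul_add (x := x) (y := y) (lo := lo) 1 k
  have := strictMono_blockStart_chainBlock.monotone (f := blockStart (chainBlock x y lo))
    (show 1 * 1000 + k ≤ k' by omega)
  linarith

theorem eq_or_eq_and_pos_of_readsAt_powWord (h : x ≠ y) {n : ℤ} (hn : n ≠ 0)
    (hread : ReadsAt (chainLabel x y lo) t (powWord f n)) : (f = x ∨ f = y) ∧ 0 < n := by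
  have happly := hread.apply_powWord (i := 0) (by omega)
  rcases chainLabel_eq_or_eq (lo := lo) h (t + (0 : ℕ)) with heq | heq <;>
    rw [heq, Prod.mk.injEq, eq_comm (a := true), decide_eq_true_eq] at happly
  exacts [⟨.inl happly.1.symm, happly.2⟩, ⟨.inr happly.1.symm, happly.2⟩]

theorem eq_one_of_readsAt_powWord_left (h : x ≠ y) {n : ℤ} (hn : n ≠ 0)
    (hread : ReadsAt (chainLabel x y lo) t (powWord x n)) : n = 1 := by
  have hpos := (eq_or_eq_and_pos_of_readsAt_powWord h hn hread).2
  by_contra hne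
  have hfst := hread.apply_powWord (i := 0) (by omega)
  have hsnd := hread.apply_powWord (i := 1) (by omega)
  rw [Nat.cast_zero, add_zero, decide_eq_true hpos] at hfst
  rw [Nat.cast_one, chainLabel_add_one_of_eq_left h hfst] at hsnd
  exact h (congrArg Prod.fst hsnd).symm

theorem eq_chainExponent_of_readsAt (h : x ≠ y) {n : ℤ} (hn : n ≠ 0) {v : List (GenSym A × Bool)}
    (hv : v ≠ []) (hhead : ∀ a ∈ v.head?, a.1 ≠ y)
    (hread : ReadsAt (chainLabel x y lo) (blockStart (chainBlock x y lo) K + 1)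
      (powWord y n ++ v)) :
    n = chainExponent lo K := by
  obtain ⟨hpow, hv'⟩ := readsAt_append.1 hread
  have hpos := (eq_or_eq_and_pos_of_readsAt_powWord h hn hpow).2
  obtain ⟨a, v, rfl⟩ := List.exists_cons_of_ne_nil hv
  have hend := hv'.apply_of_cons
  rw [length_powWord] at hend
  rcases lt_trichotomy n.natAbs (chainExponent lo K) with hlt | heq | hgt
  · rw [chainLabel_blockStart_add_one_add h hlt] at hend
    exact (hhead a rfl (congrArg Prod.fst hend).symm).elim
  · omega
  · have hstart := hpow.apply_powWord hgt
    rw [← blockStart_chainBlock_add_one, chainLabel_blockStart h] at hstart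
    exact (h (congrArg Prod.fst hstart)).elim

theorem chainLength_le_of_readsAt (h : x ≠ y) {Z : List (GenSym A × Bool)}
    (hhead : ∀ a ∈ Z.head?, a.1 ≠ y) {n : ℤ} (hn : n ≠ 0) (hk : k < k')
    (hlen : blockStart (chainBlock x y lo) k + Z.length = blockStart (chainBlock x y lo) k' + 1)
    (hread : ReadsAt (chainLabel x y lo) (blockStart (chainBlock x y lo) k)
      (Z ++ (powWord y n ++ Z))) :
    chainLength lo ≤ Z.length + chainExponent lo k' := by
  have hle := strictMono_blockStart_chainBlock.monotone (f := blockStart (chainBlock x y lo))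
    (show k + 1 ≤ k' from hk)
  rw [blockStart_chainBlock_add_one] at hle
  obtain ⟨hfst, hrest⟩ := readsAt_append.1 hread
  rw [hlen] at hrest
  have hsnd := (readsAt_append.1 hrest).2
  have hZ : Z ≠ [] := List.length_pos_iff.1 (by omega)
  rw [length_powWord, eq_chainExponent_of_readsAt h hn hZ hhead hrest, Int.natAbs_natCast,
    ← blockStart_chainBlock_add_one] at hsnd
  have hexp := chainExponent_eq_of_overlap h (lo := lo) (k := k) (k' := k' + 1) fun i hi => by
    rw [readsAt_iff.1 hfst i (by omega), readsAt_iff.1 hsnd i (by omega)]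
  have hperiod := blockStart_add_chainLength_le (x := x) (y := y) (by omega) hexp
  rw [blockStart_chainBlock_add_one] at hperiod
  omega

theorem eq_singleton_of_readsAt (h : x ≠ y) {Z : List (GenSym A × Bool)} (hZ : Z ≠ [])
    (hhead : ∀ a ∈ Z.head?, a.1 ≠ y) (hlast : ∀ a ∈ Z.getLast?, a.1 ≠ y)
    (hlen : 100 * Z.length < chainLength lo) {n : ℤ} (hn : n ≠ 0)
    (hread : ReadsAt (chainLabel x y lo) t (Z ++ (powWord y n ++ Z))) :
    Z = [(x, true)] ∧ ∃ K, blockStart (chainBlock x y lo) K = t := by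
  have hfst := (readsAt_append.1 hread).1
  have hpos := List.length_pos_iff.2 hZ
  obtain ⟨K, rfl⟩ : ∃ K, blockStart (chainBlock x y lo) K = t := by
    refine exists_blockStart_eq_of_chainLabel_ne h (hhead _ ?_)
    rw [← add_zero t, ← Nat.cast_zero, readsAt_iff.1 hfst 0 hpos, List.head?_eq_getElem?]
    simp [hpos]
  obtain ⟨K', hK'⟩ : ∃ K', blockStart (chainBlock x y lo) K' =
      blockStart (chainBlock x y lo) K + (Z.length - 1 : ℕ) := by
    refine exists_blockStart_eq_of_chainLabel_ne h (hlast _ ?_)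
    rw [readsAt_iff.1 hfst _ (by omega), List.getLast?_eq_getElem?]
    simp [hpos]
  refine ⟨?_, K, rfl⟩
  rcases eq_or_ne Z.length 1 with hone | hone
  · obtain ⟨a, rfl⟩ := List.length_eq_one_iff.1 hone
    rw [← hfst.apply_of_cons, chainLabel_blockStart h]
  have hlt : K < K' := (strictMono_blockStart_chainBlock (x := x) (y := y) (lo := lo)).lt_iff_lt.1
    (by omega)
  have hle := chainLength_le_of_readsAt h hhead hn hlt (by omega) hread
  have := chainExponent_le lo K'
  have : 2 * (lo + 1000) ^ 2 ≤ chainLength lo := by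
    unfold chainLength
    nlinarith
  omega

theorem eq_chainExponent_of_readsAt_interleaveRight (h : x ≠ y) {n : ℕ → ℤ} {mids : List ℕ}
    (hmids : ∀ k ∈ mids, n k ≠ 0)
    (hread : ReadsAt (chainLabel x y lo) (blockStart (chainBlock x y lo) K)
      ([(x, true)] ++ interleaveRight [(x, true)] (fun k => powWord y (n k)) mids))
    (i : ℕ) (hi : i < mids.length) : n mids[i] = chainExponent lo (K + i) := by
  induction mids generalizing K i with
  | nil => exact absurd hi i.not_lt_zero
  | cons m mids ih =>
    rw [interleaveRight_cons, List.append_assoc, readsAt_append] at hread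
    have hexp := eq_chainExponent_of_readsAt h (hmids m List.mem_cons_self)
      (List.append_ne_nil_of_left_ne_nil (List.cons_ne_nil _ _) _) (by simp [h]) hread.2
    have hrest := (readsAt_append.1 hread.2).2
    rw [length_powWord, hexp, Int.natAbs_natCast, List.length_singleton, Nat.cast_one,
      ← blockStart_chainBlock_add_one] at hrest
    cases i with
    | zero => simpa using hexp
    | succ i =>
      rw [List.getElem_cons_succ, ih (fun k hk => hmids k (List.mem_cons_of_mem _ hk)) hrest i
        (Nat.lt_of_succ_lt_succ hi), add_right_comm, Nat.cast_succ, add_assoc]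

end ReadsAtChainLabel

/-! ### Ten copies of a word along a chain relator -/

section ManyCopies

theorem head?_invRev {α : Type*} (w : List (α × Bool)) :
    (invRev w).head? = w.getLast?.map invLetter := by
  rw [invRev, List.head?_reverse, List.getLast?_map]
  rfl

theorem getLast?_invRev {α : Type*} (w : List (α × Bool)) :
    (invRev w).getLast? = w.head?.map invLetter := by
  rw [invRev, List.getLast?_reverse, List.head?_map]
  rfl

theorem invRev_append_interleaveRight {α : Type*} (Z : List (α × Bool)) (f : α) (n : ℕ → ℤ)
    (mids : List ℕ) :
    invRev (Z ++ interleaveRight Z (fun k => powWord f (n k)) mids) =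
      invRev Z ++ interleaveRight (invRev Z) (fun k => powWord f (-n k)) mids.reverse := by
  induction mids with
  | nil => simp [interleaveRight]
  | cons m mids ih =>
    rw [interleaveRight_cons, List.reverse_cons, interleaveRight_append, ← List.append_assoc,
      ← List.append_assoc, List.append_assoc, invRev_append, ih, invRev_append, invRev_powWord]
    simp [interleaveRight]

section ChainLabel

variable {A : Type} {x y f : GenSym A} {lo : ℕ} {n : ℕ → ℤ}

theorem eq_right_of_readsAt_interleaveRight (h : x ≠ y) {Z : List (GenSym A × Bool)} (hZ : Z ≠ [])
    (hhead : ∀ a ∈ Z.head?, a.1 ≠ f) (hlast : ∀ a ∈ Z.getLast?, a.1 ≠ f)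
    (hlen : 100 * Z.length < chainLength lo) {mids : List ℕ} (hmids : ∀ k ∈ mids, n k ≠ 0)
    (hone : 1 < mids.length) (hne : n mids[0] ≠ n mids[1]) {t : ℤ}
    (hread : ReadsAt (chainLabel x y lo) t
      (Z ++ interleaveRight Z (fun k => powWord f (n k)) mids)) :
    f = y ∧ Z = [(x, true)] ∧
      ∃ K : ℤ, ∀ i (hi : i < mids.length), n mids[i] = chainExponent lo (K + i) := by
  obtain ⟨m₀, m₁, rest, rfl⟩ : ∃ m₀ m₁ rest, mids = m₀ :: m₁ :: rest := by
    match mids, hone with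
    | m₀ :: m₁ :: rest, _ => exact ⟨m₀, m₁, rest, rfl⟩
  have hm₀ := hmids m₀ List.mem_cons_self
  have hm₁ := hmids m₁ (List.mem_cons_of_mem _ List.mem_cons_self)
  have hread' := hread
  rw [interleaveRight_cons, interleaveRight_cons] at hread'
  obtain ⟨t₀, hread₀⟩ := hread'.exists_of_isInfix (u := powWord f (n m₀))
    ⟨Z, Z ++ (powWord f (n m₁) ++ Z ++ interleaveRight Z (fun k => powWord f (n k)) rest), by simp⟩
  obtain ⟨t₁, hread₁⟩ := hread'.exists_of_isInfix (u := powWord f (n m₁))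
    ⟨Z ++ powWord f (n m₀) ++ Z, Z ++ interleaveRight Z (fun k => powWord f (n k)) rest, by simp⟩
  rcases (eq_or_eq_and_pos_of_readsAt_powWord h hm₀ hread₀).1 with rfl | rfl
  · exact (hne ((eq_one_of_readsAt_powWord_left h hm₀ hread₀).trans
      (eq_one_of_readsAt_powWord_left h hm₁ hread₁).symm)).elim
  rw [← List.append_assoc] at hread'
  obtain ⟨rfl, K, rfl⟩ :=
    eq_singleton_of_readsAt h hZ hhead hlast hlen hm₀ (readsAt_append.1 hread').1
  exact ⟨rfl, rfl, K, fun i hi => eq_chainExponent_of_readsAt_interleaveRight h hmids hread i hi⟩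

end ChainLabel

section Congruence

variable {p lo c : ℕ} {K s r : ℤ}

theorem natCast_chainExponent (h : K % 1000 = r) : (chainExponent lo K : ℤ) = (lo + r + 1) ^ 2 := by
  unfold chainExponent
  push_cast
  rw [h, Int.toNat_of_nonneg (by omega)]

-- Two consecutive residues not straddling a multiple of `1000` on either side suffice: the
-- difference of the two congruences is linear in `lo`.
theorem eq_1000_and_dvd_of_forall_dvd (hp : 10 ^ 10 < p) (hlo : lo ≤ 4000) (hdvd_lo : 1000 ∣ lo)
    (hdvd : ∀ i : ℕ, i ≤ 5 →
      (p : ℤ) ∣ chainExponent lo (K + i) - ((1001 + ((c + i) % 1000 : ℕ)) ^ 2 + s)) :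
    lo = 1000 ∧ (p : ℤ) ∣ s := by
  obtain ⟨i, hi, hci, hKi⟩ :
      ∃ i : ℕ, i ≤ 4 ∧ (c + i) % 1000 ≤ 998 ∧ (K + i) % 1000 ≤ 998 := by
    by_contra! hwrap
    have h₀ := hwrap 0 (by omega)
    have h₂ := hwrap 2 (by omega)
    have h₄ := hwrap 4 (by omega)
    omega
  have hdvd₀ := hdvd i (by omega)
  have hdvd₁ := hdvd (i + 1) (by omega)
  obtain ⟨a, ha⟩ : ∃ a, (c + i) % 1000 = a := ⟨_, rfl⟩
  obtain ⟨r, hr⟩ : ∃ r, (K + i) % 1000 = r := ⟨_, rfl⟩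
  rw [ha, natCast_chainExponent hr] at hdvd₀
  rw [show (c + (i + 1)) % 1000 = a + 1 by omega,
    natCast_chainExponent (r := r + 1) (by push_cast; omega)] at hdvd₁
  have hdiff : (p : ℤ) ∣ 2 * (lo + r - 1000 - a) := by
    have := dvd_sub hdvd₁ hdvd₀
    push_cast at this
    rwa [show (lo + (r + 1) + 1) ^ 2 - ((1001 + (a + 1)) ^ 2 + s) -
      ((lo + r + 1) ^ 2 - ((1001 + a) ^ 2 + s)) = 2 * (lo + r - 1000 - a) by ring] at this
  have hzero := Int.eq_zero_of_abs_lt_dvd hdiff (abs_lt.2 ⟨by omega, by omega⟩)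
  obtain rfl : lo = 1000 := by omega
  obtain rfl : r = a := by push_cast at hzero; omega
  refine ⟨rfl, ?_⟩
  rwa [show ((1000 : ℕ) + (a : ℤ) + 1) ^ 2 - ((1001 + a) ^ 2 + s) = -s by push_cast; ring,
    dvd_neg] at hdvd₀

-- The second differences of the two quadratic sequences are `2` and `-2`.
theorem not_forall_dvd_neg_chainExponent_sub (hp : 10 ^ 10 < p) :
    ¬ ∀ i : ℕ, i ≤ 8 →
      (p : ℤ) ∣ -chainExponent lo (K + i) - ((1001 + ((c + (8 - i)) % 1000 : ℕ)) ^ 2 + s) := by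
  intro hdvd
  obtain ⟨i, hi, hci, hKi⟩ :
      ∃ i : ℕ, i ≤ 6 ∧ 2 ≤ (c + (8 - i)) % 1000 ∧ (K + i) % 1000 ≤ 997 := by
    by_contra! hwrap
    have h₀ := hwrap 0 (by omega)
    have h₃ := hwrap 3 (by omega)
    have h₆ := hwrap 6 (by omega)
    omega
  have hdvd₀ := hdvd i (by omega)
  have hdvd₁ := hdvd (i + 1) (by omega)
  have hdvd₂ := hdvd (i + 2) (by omega)
  obtain ⟨a, ha⟩ : ∃ a, (c + (8 - i)) % 1000 = a + 2 := ⟨_, (Nat.sub_add_cancel hci).symm⟩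
  obtain ⟨r, hr⟩ : ∃ r, (K + i) % 1000 = r := ⟨_, rfl⟩
  rw [ha, natCast_chainExponent hr] at hdvd₀
  rw [show (c + (8 - (i + 1))) % 1000 = a + 1 by omega,
    natCast_chainExponent (r := r + 1) (by push_cast; omega)] at hdvd₁
  rw [show (c + (8 - (i + 2))) % 1000 = a by omega,
    natCast_chainExponent (r := r + 2) (by push_cast; omega)] at hdvd₂
  have hfour : (p : ℤ) ∣ 4 := by
    rw [← dvd_neg]
    convert dvd_sub (dvd_sub hdvd₂ hdvd₁) (dvd_sub hdvd₁ hdvd₀) using 1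
    push_cast
    ring
  have := Int.le_of_dvd four_pos hfour
  omega

end Congruence

variable {S : IndexedStructure} {p₁ p₂ p : ℕ} {f : GenSym S.A} {Z : List (GenSym S.A × Bool)}
  {n : ℕ → ℤ} {s : ℤ}

theorem IsChainPair.dvd_1000 {x y : GenSym S.A} {lo : ℕ} (h : IsChainPair x y lo) : 1000 ∣ lo := by
  cases h <;> norm_num

theorem IsChainPair.left_eq_b {x y : GenSym S.A} (h : IsChainPair x y 1000) : x = .b := by
  cases h <;> rfl

section Exponents

variable {x y : GenSym S.A} {lo : ℕ} {mids : List ℕ} {c : ℕ} {t : ℤ}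

theorem apply_getElem_ne_of_add_one_eq (hinj : Set.InjOn n (Set.Iic 999))
    (hmids : ∀ i (hi : i < mids.length), mids[i] = (c + i) % 1000) {i j : ℕ}
    (hi : i < mids.length) (hj : j < mids.length) (hij : i + 1 = j) : n mids[i] ≠ n mids[j] := by
  rw [hmids, hmids]
  intro heq
  have := hinj (Set.mem_Iic.2 (by omega)) (Set.mem_Iic.2 (by omega)) heq
  omega

theorem IsDoubleCosetReduced.eq_b_and_dvd_of_readsAt (hZ : IsDoubleCosetReduced S p₁ p₂ f Z)
    (hp : 10 ^ 10 < p) (hn : ∀ k : ℕ, (p : ℤ) ∣ n k - ((1001 + k) ^ 2 + s))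
    (hinj : Set.InjOn n (Set.Iic 999)) (hxy : IsChainPair x y lo)
    (hlen : 100 * Z.length < chainLength lo) (hnine : 9 ≤ mids.length)
    (hne : ∀ k ∈ mids, n k ≠ 0)
    (hmids : ∀ i (hi : i < mids.length), mids[i] = (c + i) % 1000)
    (hread : ReadsAt (chainLabel x y lo) t
      (Z ++ interleaveRight Z (fun k => powWord f (n k)) mids)) :
    Z = [(GenSym.b, true)] ∧ (p : ℤ) ∣ s := by
  obtain ⟨-, rfl, K, hK⟩ := eq_right_of_readsAt_interleaveRight hxy.ne hZ.ne_nil hZ.head_ne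
    hZ.last_ne hlen hne (by omega)
    (apply_getElem_ne_of_add_one_eq hinj hmids (by omega) (by omega) rfl) hread
  obtain ⟨rfl, hdvd⟩ := eq_1000_and_dvd_of_forall_dvd hp hxy.le_4000 hxy.dvd_1000 (K := K)
    (c := c) (s := s) fun i hi => by
      have := hn (mids[i]'(by omega))
      rwa [hK, hmids] at this
  rw [hxy.left_eq_b]
  exact ⟨rfl, hdvd⟩

theorem IsDoubleCosetReduced.not_readsAt_invRev (hZ : IsDoubleCosetReduced S p₁ p₂ f Z)
    (hp : 10 ^ 10 < p) (hn : ∀ k : ℕ, (p : ℤ) ∣ n k - ((1001 + k) ^ 2 + s))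
    (hinj : Set.InjOn n (Set.Iic 999)) (hxy : x ≠ y)
    (hlen : 100 * Z.length < chainLength lo) (hnine : 9 ≤ mids.length)
    (hne : ∀ k ∈ mids, n k ≠ 0)
    (hmids : ∀ i (hi : i < mids.length), mids[i] = (c + i) % 1000) :
    ¬ ReadsAt (chainLabel x y lo) t
      (invRev (Z ++ interleaveRight Z (fun k => powWord f (n k)) mids)) := by
  intro hread
  rw [invRev_append_interleaveRight] at hread
  obtain ⟨-, -, K, hK⟩ := eq_right_of_readsAt_interleaveRight (n := fun k => -n k) hxy
    (by simpa [invRev] using hZ.ne_nil)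
    (by rw [head?_invRev]; exact Option.forall_mem_map.2 hZ.last_ne)
    (by rw [getLast?_invRev]; exact Option.forall_mem_map.2 hZ.head_ne) (by rwa [invRev_length])
    (by simpa using hne) (by rw [List.length_reverse]; omega)
    (by
      rw [List.getElem_reverse, List.getElem_reverse, ne_eq, neg_inj]
      exact (apply_getElem_ne_of_add_one_eq hinj hmids (by omega) (by omega) (by omega)).symm)
    hread
  refine not_forall_dvd_neg_chainExponent_sub hp (lo := lo) (K := K) (s := s)
    (c := c + (mids.length - 9)) fun i hi => ?_
  have hKi := hK i (by rw [List.length_reverse]; omega)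
  have := hn (mids[mids.length - 1 - i]'(by omega))
  rw [List.getElem_reverse, neg_eq_iff_eq_neg] at hKi
  rwa [hKi, hmids, show c + (mids.length - 1 - i) = c + (mids.length - 9) + (8 - i) by omega]
    at this

end Exponents

theorem IsDoubleCosetReduced.eq_b_and_dvd (hZ : IsDoubleCosetReduced S p₁ p₂ f Z)
    (hp : 10 ^ 10 < p) (hn : ∀ k : ℕ, (p : ℤ) ∣ n k - ((1001 + k) ^ 2 + s))
    (hinj : Set.InjOn n (Set.Iic 999)) (hcopies : HasManyCopies f Z n) :
    Z = [(GenSym.b, true)] ∧ (p : ℤ) ∣ s := by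
  obtain ⟨σ, N, t, mids, c, ⟨x, y, lo, hxy, ⟨s₀, hs | hs⟩, rfl⟩, hlen, hread, hnine, hne, hmids⟩ :=
    hcopies
  · exact hZ.eq_b_and_dvd_of_readsAt hp hn hinj hxy hlen hnine hne hmids
      (hread.congr (t' := s₀ + t) fun i => by rw [hs, add_assoc])
  · exact (hZ.not_readsAt_invRev hp hn hinj hxy.ne hlen hnine hne hmids
      (hread.invRev (c := s₀) fun i => by rw [hs, invLetter_invLetter, sub_sub_cancel])).elim

end ManyCopies

/-! ### Representatives of double cosets -/

section DoubleCoset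

variable {S : IndexedStructure} {p₁ p₂ p : ℕ} {f : GenSym S.A} {Z w : List (GenSym S.A × Bool)}

/-- The element of `G(𝒜)` spelled by a word in the generators. -/
def wordElt (S : IndexedStructure) (p₁ p₂ : ℕ) (w : List (GenSym S.A × Bool)) : GA S p₁ p₂ :=
  PresentedGroup.mk (grpRels S p₁ p₂) (mk w)

theorem wordElt_nil : wordElt S p₁ p₂ [] = 1 := rfl

theorem wordElt_append (u v : List (GenSym S.A × Bool)) :
    wordElt S p₁ p₂ (u ++ v) = wordElt S p₁ p₂ u * wordElt S p₁ p₂ v := by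
  simp only [wordElt, ← mul_mk, _root_.map_mul]

theorem wordElt_powWord (g : GenSym S.A) (n : ℤ) :
    wordElt S p₁ p₂ (powWord g n) = gen S p₁ p₂ g ^ n := by
  rw [wordElt, mk_powWord, _root_.map_zpow]
  rfl

theorem wordElt_singleton (a : GenSym S.A × Bool) :
    wordElt S p₁ p₂ [a] = gen S p₁ p₂ a.1 ^ (if a.2 then 1 else -1 : ℤ) := by
  obtain ⟨g, _ | _⟩ := a
  · exact (zpow_neg_one (gen S p₁ p₂ g)).symm
  · exact (zpow_one (gen S p₁ p₂ g)).symm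

theorem wordElt_eq_one_iff :
    wordElt S p₁ p₂ w = 1 ↔ mk w ∈ Subgroup.normalClosure (grpRels S p₁ p₂) :=
  PresentedGroup.mk_eq_one_iff

theorem IsTorsionLetter.gen_pow_eq_one (hf : IsTorsionLetter p₁ p₂ f p) :
    gen S p₁ p₂ f ^ p = 1 := by
  have hmem : FreeGroup.of f ^ p ∈ grpRels S p₁ p₂ := by cases hf <;> simp [grpRels]
  exact PresentedGroup.one_of_mem hmem

theorem IsTorsionLetter.gen_zpow_eq_of_dvd_sub (hf : IsTorsionLetter p₁ p₂ f p) {i j : ℤ}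
    (h : (p : ℤ) ∣ i - j) : gen S p₁ p₂ f ^ i = gen S p₁ p₂ f ^ j := by
  obtain ⟨k, hk⟩ := h
  rw [sub_eq_iff_eq_add.1 hk, zpow_add, zpow_mul, zpow_natCast, hf.gen_pow_eq_one, one_zpow,
    one_mul]

section Replacement

variable {σ : ℤ → GenSym S.A × Bool} {n : ℕ} {t : ℤ}

theorem IsRelatorLabel.mk_window_mem (h : IsRelatorLabel S p₁ p₂ σ n) (t : ℤ) :
    mk (window σ t n) ∈ Subgroup.normalClosure (grpRels S p₁ p₂) := by
  have hmem := h.pathPoint_mem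
  obtain ⟨_, hbase, hσ⟩ := h
  have hadd := pathPoint_natCast_add (hσ.periodic hbase.apply_add) t
  rw [add_comm, pathPoint_add_natCast] at hadd
  rw [eq_inv_mul_of_mul_eq hadd, ← mul_assoc]
  exact Subgroup.normalClosure_normal.conj_mem' _ hmem _

theorem IsRelatorLabel.exists_wordElt_eq (hσ : IsRelatorLabel S p₁ p₂ σ n) (hr : ReadsAt σ t w)
    (hw : w.length ≤ n) :
    ∃ w', w'.length = n - w.length ∧ wordElt S p₁ p₂ w = wordElt S p₁ p₂ w' := by
  refine ⟨invRev (window σ (t + w.length) (n - w.length)), by rw [invRev_length, length_window], ?_⟩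
  have hone := wordElt_eq_one_iff.2 (hσ.mk_window_mem t)
  rw [← Nat.add_sub_cancel' hw, window_add, wordElt_append, show window σ t w.length = w from hr]
    at hone
  rw [eq_inv_of_mul_eq_one_left hone, wordElt, wordElt, ← inv_mk, _root_.map_inv]

end Replacement

/-- `w` spells an element of the double coset of `x` modulo the powers of the generator `f`. -/
def IsDoubleCosetRep (f : GenSym S.A) (x : GA S p₁ p₂) (w : List (GenSym S.A × Bool)) : Prop :=
  ∃ i j : ℤ, x = gen S p₁ p₂ f ^ i * wordElt S p₁ p₂ w * gen S p₁ p₂ f ^ j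

namespace IsDoubleCosetRep

variable {x : GA S p₁ p₂}

theorem congr (h : IsDoubleCosetRep f x w)
    {w' : List (GenSym S.A × Bool)} (hw : wordElt S p₁ p₂ w = wordElt S p₁ p₂ w') :
    IsDoubleCosetRep f x w' := by
  obtain ⟨i, j, rfl⟩ := h
  exact ⟨i, j, by rw [hw]⟩

theorem of_cons {a : GenSym S.A × Bool} (h : IsDoubleCosetRep f x (a :: w)) (ha : a.1 = f) :
    IsDoubleCosetRep f x w := by
  obtain ⟨i, j, rfl⟩ := h
  refine ⟨i + (if a.2 then 1 else -1), j, ?_⟩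
  rw [← List.singleton_append, wordElt_append, wordElt_singleton, ha, zpow_add]
  simp only [mul_assoc]

theorem of_concat {a : GenSym S.A × Bool} (h : IsDoubleCosetRep f x (w ++ [a])) (ha : a.1 = f) :
    IsDoubleCosetRep f x w := by
  obtain ⟨i, j, rfl⟩ := h
  refine ⟨i, (if a.2 then 1 else -1) + j, ?_⟩
  rw [wordElt_append, wordElt_singleton, ha, zpow_add]
  simp only [mul_assoc]

variable (f x) in
theorem exists_isReduced_and_forall_length_le :
    ∃ Z, IsReduced Z ∧ IsDoubleCosetRep f x Z ∧
      ∀ w, IsDoubleCosetRep f x w → Z.length ≤ w.length := by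
  classical
  have hex : ∃ w, IsDoubleCosetRep f x w := by
    obtain ⟨z, rfl⟩ := PresentedGroup.mk_surjective (grpRels S p₁ p₂) x
    exact ⟨z.toWord, 0, 0, by rw [wordElt, mk_toWord, zpow_zero, one_mul, mul_one]⟩
  obtain ⟨w, hw, hmin⟩ := exists_minimalFor_of_wellFoundedLT (IsDoubleCosetRep f x) List.length hex
  refine ⟨(mk w).toWord, isReduced_toWord, hw.congr (by rw [wordElt, wordElt, mk_toWord]),
    fun w' hw' => norm_mk_le.trans ?_⟩
  exact (le_total w.length w'.length).elim id (hmin hw')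

end IsDoubleCosetRep

theorem isDoubleCosetReduced_of_forall_length_le (h₁ : 10 ^ 10 < p₁) (h₂ : 10 ^ 10 < p₂)
    (hf : IsTorsionLetter p₁ p₂ f p) {x : GA S p₁ p₂} (hx : x ^ p ≠ 1) (hred : IsReduced Z)
    (hZ : IsDoubleCosetRep f x Z) (hmin : ∀ w, IsDoubleCosetRep f x w → Z.length ≤ w.length) :
    IsDoubleCosetReduced S p₁ p₂ f Z where
  isReduced := hred
  ne_nil := by
    rintro rfl
    obtain ⟨i, j, rfl⟩ := hZ
    rw [wordElt_nil, mul_one, ← zpow_add, ← zpow_natCast, zpow_comm, zpow_natCast,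
      hf.gen_pow_eq_one, one_zpow] at hx
    exact hx rfl
  two_mul_length_le σ n hσ t w hr hwZ := by
    by_contra! hlong
    have hn := (isLabelSystem_isRelatorLabel h₁ h₂).period_pos σ n hσ
    have hprefix := (List.take_prefix n w).isInfix
    obtain ⟨t', hr'⟩ := hr.exists_of_isInfix hprefix
    obtain ⟨w', hw', heq⟩ := hσ.exists_wordElt_eq hr' (List.length_take_le n w)
    obtain ⟨a, c, rfl⟩ := hprefix.trans hwZ
    have hle := hmin (a ++ w' ++ c) (hZ.congr (by simp only [wordElt_append, heq]))
    simp only [List.length_append, hw', List.length_take] at hle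
    omega
  head_ne a ha haf := by
    obtain ⟨w, rfl⟩ := List.head?_eq_some_iff.1 ha
    have := hmin w (hZ.of_cons haf)
    simp at this
  last_ne a ha haf := by
    obtain ⟨w, rfl⟩ := List.getLast?_eq_some_iff.1 ha
    have := hmin w (hZ.of_concat haf)
    simp at this

theorem exists_isDoubleCosetReduced (h₁ : 10 ^ 10 < p₁) (h₂ : 10 ^ 10 < p₂)
    (hf : IsTorsionLetter p₁ p₂ f p) {x : GA S p₁ p₂} (hx : x ^ p ≠ 1) :
    ∃ Z, IsDoubleCosetReduced S p₁ p₂ f Z ∧ IsDoubleCosetRep f x Z :=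
  let ⟨Z, hred, hZ, hmin⟩ := IsDoubleCosetRep.exists_isReduced_and_forall_length_le f x
  ⟨Z, isDoubleCosetReduced_of_forall_length_le h₁ h₂ hf hx hred hZ hmin, hZ⟩

theorem wordElt_interleaveLeft (Z : List (GenSym S.A × Bool)) (f : GenSym S.A) (n : ℕ → ℤ)
    (ks : List ℕ) : wordElt S p₁ p₂ (interleaveLeft Z (fun k => powWord f (n k)) ks) =
      (ks.map fun k => wordElt S p₁ p₂ Z * gen S p₁ p₂ f ^ n k).prod := by
  induction ks with
  | nil => rfl
  | cons k ks ih =>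
    rw [interleaveLeft_cons, wordElt_append, wordElt_append, wordElt_powWord, ih, List.map_cons,
      List.prod_cons]

theorem chainProd_zpow_mul_mul_zpow {G : Type*} [Group G] (lo : ℕ) (z φ : G) (i j : ℤ) :
    chainProd lo (φ ^ i * z * φ ^ j) φ = MulAut.conj (φ ^ i)
      ((List.range 1000).map fun k : ℕ => z * φ ^ (((lo + k + 1) ^ 2 : ℤ) + (j + i))).prod := by
  rw [chainProd, map_list_prod, List.map_map]
  congr 2
  ext k
  rw [Function.comp_apply, MulAut.conj_apply, ← zpow_natCast]
  push_cast
  group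

theorem injOn_Iic_of_forall_dvd_sub {n : ℕ → ℤ} {s : ℤ} (hp : 10 ^ 10 < p)
    (hn : ∀ k : ℕ, (p : ℤ) ∣ n k - ((1001 + k) ^ 2 + s)) : Set.InjOn n (Set.Iic 999) := by
  intro k hk l hl heq
  rw [Set.mem_Iic] at hk hl
  have hdvd := dvd_sub (hn k) (hn l)
  rw [heq, sub_sub_sub_cancel_left] at hdvd
  have hzero := Int.eq_zero_of_abs_lt_dvd hdvd (abs_lt.2 ⟨by nlinarith, by nlinarith⟩)
  have : ((1001 + k : ℤ) - (1001 + l)) * (2002 + k + l) = 0 := by linarith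
  rcases mul_eq_zero.1 this with h | h <;> omega

theorem two_mul_natAbs_bmod_le (hp : 0 < p) (i : ℤ) : 2 * (i.bmod p).natAbs ≤ p := by
  have := Int.le_bmod (x := i) hp
  have := Int.bmod_le (x := i) hp
  omega

theorem exists_eq_zpow_mul_gen_b_mul_zpow_neg (h₁ : 10 ^ 10 < p₁) (h₂ : 10 ^ 10 < p₂)
    (hf : IsTorsionLetter p₁ p₂ f p) {x : GA S p₁ p₂} (hx : x ^ p ≠ 1)
    (hchain : chainProd 1000 x (gen S p₁ p₂ f) = 1) :
    ∃ i : ℤ, 2 * i.natAbs ≤ p ∧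
      x = gen S p₁ p₂ f ^ i * gen S p₁ p₂ .b * gen S p₁ p₂ f ^ (-i) := by
  obtain ⟨Z, hZ, i, j, rfl⟩ := exists_isDoubleCosetReduced h₁ h₂ hf hx
  have hp := hf.lt h₁ h₂
  let n (k : ℕ) : ℤ := ((1001 + k) ^ 2 + (j + i)).bmod p
  have hn (k : ℕ) : (p : ℤ) ∣ n k - ((1001 + k) ^ 2 + (j + i)) := Int.dvd_bmod_sub_self
  have hinj := injOn_Iic_of_forall_dvd_sub hp hn
  have hmem : mk (interleaveLeft Z (fun k => powWord f (n k)) (List.range 1000)) ∈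
      Subgroup.normalClosure (grpRels S p₁ p₂) := by
    rw [chainProd_zpow_mul_mul_zpow, MulEquiv.map_eq_one_iff] at hchain
    rw [← wordElt_eq_one_iff, wordElt_interleaveLeft, ← hchain]
    refine congrArg List.prod (List.map_congr_left fun k _ => ?_)
    rw [hf.gen_zpow_eq_of_dvd_sub (hn k)]
    push_cast
    ring_nf
  obtain ⟨rfl, hdvd⟩ := hZ.eq_b_and_dvd hp hn hinj <| hZ.hasManyCopies_of_mk_mem_normalClosure
    h₁ h₂ hf (fun k _ => two_mul_natAbs_bmod_le (by omega) _) hinj hmem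
  refine ⟨i.bmod p, two_mul_natAbs_bmod_le (by omega) i, ?_⟩
  rw [zpow_neg, hf.gen_zpow_eq_of_dvd_sub (Int.dvd_bmod_sub_self (x := i)), ← zpow_neg,
    hf.gen_zpow_eq_of_dvd_sub (i := j) (j := -i) (by rwa [sub_neg_eq_add])]
  rfl

end DoubleCoset

/-! ### Words with few syllables -/

section Syllables

theorem exists_eq_append_of_isInfix_append {α : Type*} {s a b : List α} (h : s <:+: a ++ b) :
    ∃ u v, s = u ++ v ∧ u <:+: a ∧ v <:+: b := by
  rcases List.infix_append_iff.1 h with h | h | ⟨u, v, rfl, hu, hv⟩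
  · exact ⟨s, [], by simp, h, List.nil_infix⟩
  · exact ⟨[], s, by simp, List.nil_infix, h⟩
  · exact ⟨u, v, rfl, hu.isInfix, hv.isInfix⟩

theorem length_le_of_isInfix_flatten {α : Type*} {s : List α} {Ls : List (List α)} {B : ℕ}
    (hs : s <:+: Ls.flatten) (hB : ∀ l ∈ Ls, ∀ u, u <:+: s → u <:+: l → u.length ≤ B) :
    s.length ≤ Ls.length * B := by
  induction Ls generalizing s with
  | nil => simp_all
  | cons l Ls ih =>
    rw [List.flatten_cons] at hs
    obtain ⟨u, v, rfl, hu, hv⟩ := exists_eq_append_of_isInfix_append hs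
    have hlen_u := hB l List.mem_cons_self u (List.prefix_append u v).isInfix hu
    have hlen_v := ih hv fun l hl u hu =>
      hB l (List.mem_cons_of_mem _ hl) u (hu.trans (List.suffix_append _ v).isInfix)
    rw [List.length_append, List.length_cons, add_one_mul]
    omega

/-- The word of the product of the syllables `g ^ n`, for `(g, n)` in a list. -/
def syllableWord {α : Type*} (L : List (α × ℤ)) : List (α × Bool) :=
  (L.map fun a => powWord a.1 a.2).flatten

theorem isReduced_syllableWord {α : Type*} {L : List (α × ℤ)} (hzero : ∀ a ∈ L, a.2 ≠ 0)
    (hchain : L.IsChain fun a b => a.1 ≠ b.1) : IsReduced (syllableWord L) := by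
  refine (List.isChain_flatten fun hnil => ?_).2 ⟨fun l hl => ?_, (List.isChain_map _).2 ?_⟩
  · obtain ⟨a, ha, hnil⟩ := List.mem_map.1 hnil
    exact powWord_ne_nil (hzero a ha) hnil
  · obtain ⟨a, -, rfl⟩ := List.mem_map.1 hl
    exact isReduced_powWord _ _
  · refine hchain.imp fun a b hab x hx y hy hxy => (hab ?_).elim
    rwa [eq_of_mem_powWord (List.mem_of_mem_getLast? hx),
      eq_of_mem_powWord (List.mem_of_mem_head? hy)] at hxy

variable {S : IndexedStructure} {p₁ p₂ : ℕ}

theorem wordElt_syllableWord (L : List (GenSym S.A × ℤ)) :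
    wordElt S p₁ p₂ (syllableWord L) = (L.map fun a => gen S p₁ p₂ a.1 ^ a.2).prod := by
  induction L with
  | nil => rfl
  | cons a L ih =>
    rw [List.map_cons, List.prod_cons, ← ih, ← wordElt_powWord, ← wordElt_append]
    rfl

theorem length_le_one_of_isInfix_powWord {u : List (GenSym S.A × Bool)} {g : GenSym S.A} {n : ℤ}
    (hu : u <:+: powWord g n) (hu_ne : ∀ a ∈ u, a.1 ≠ .f1 ∧ a.1 ≠ .f2)
    (hg : n.natAbs = 1 ∨ g = .f1 ∨ g = .f2) : u.length ≤ 1 := by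
  rcases hg with hn | hg
  · rw [← hn, ← length_powWord g n]
    exact hu.length_le
  · obtain rfl : u = [] := List.eq_nil_iff_forall_not_mem.2 fun a ha => by
      have := hu_ne a ha
      rw [eq_of_mem_powWord (hu.subset ha)] at this
      tauto
    exact zero_le_one

theorem wordElt_syllableWord_ne_one (h₁ : 10 ^ 10 < p₁) (h₂ : 10 ^ 10 < p₂)
    {L : List (GenSym S.A × ℤ)} (hne : L ≠ []) (hlen : L.length ≤ 80)
    (hzero : ∀ a ∈ L, a.2 ≠ 0) (hchain : L.IsChain fun a b => a.1 ≠ b.1)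
    (hexp : ∀ a ∈ L, a.2.natAbs = 1 ∨ a.1 = .f1 ∨ a.1 = .f2)
    (hcount : ∀ f p, IsTorsionLetter p₁ p₂ f p →
      ∀ e, 2 * (syllableWord L).countP (· = (f, e)) ≤ p) :
    wordElt S p₁ p₂ (syllableWord L) ≠ 1 := by
  intro hone
  have hnil : syllableWord L ≠ [] := by
    obtain ⟨a, L, rfl⟩ := List.exists_cons_of_ne_nil hne
    simp [syllableWord, powWord_ne_nil (hzero a List.mem_cons_self)]
  obtain ⟨σ, N, t, s, hσ, hread, hs, hl⟩ := exists_readsAt_of_mk_mem_normalClosure h₁ h₂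
    (isReduced_syllableWord hzero hchain) hnil (wordElt_eq_one_iff.1 hone)
  have hN := hσ.hundred_le h₁ h₂
  have hlen_le (B : ℕ) (hB : ∀ a ∈ L, ∀ u, u <:+: s → u <:+: powWord a.1 a.2 → u.length ≤ B) :
      s.length ≤ 80 * B := by
    refine (length_le_of_isInfix_flatten hs (List.forall_mem_map.2 hB)).trans ?_
    rw [List.length_map]
    gcongr
  by_cases htorsion : ∃ a ∈ s, a.1 = .f1 ∨ a.1 = .f2
  · obtain ⟨a, ha, haf⟩ := htorsion
    obtain ⟨r, hr⟩ := hread.exists_apply_eq ha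
    rcases hσ.torsion_or_chain (t := r) (by rwa [hr]) with ⟨f, e, hf, hconst⟩ | hσ
    · have hall : s.countP (· = (f, e)) = s.length := List.countP_eq_length.2 fun a ha => by
        obtain ⟨r, hr⟩ := hread.exists_apply_eq ha
        simp [← hr, hconst]
      have := hs.sublist.countP_le (p := (· = (f, e)))
      have := hcount f N hf e
      omega
    · have := hlen_le (N / 100) fun a _ u hu ha => by
        obtain ⟨r, hr⟩ := hread.exists_of_isInfix hu
        have := hσ.length_lt_of_isInfix_powWord hr ha
        omega
      omega
  · push Not at htorsion
    have := hlen_le 1 fun a ha u hu hua =>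
      length_le_one_of_isInfix_powWord hua (fun x hx => htorsion x (hu.subset hx)) (hexp a ha)
    omega

theorem f1_conj_b_ne_f2_conj_b (h₁ : 10 ^ 10 < p₁) (h₂ : 10 ^ 10 < p₂) {i j : ℤ} (hi : i ≠ 0)
    (hj : j ≠ 0) (hip : 2 * i.natAbs ≤ p₁) (hjp : 2 * j.natAbs ≤ p₂) :
    gen S p₁ p₂ .f1 ^ i * gen S p₁ p₂ .b * gen S p₁ p₂ .f1 ^ (-i) ≠
      gen S p₁ p₂ .f2 ^ j * gen S p₁ p₂ .b * gen S p₁ p₂ .f2 ^ (-j) := by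
  intro heq
  refine wordElt_syllableWord_ne_one (S := S) h₁ h₂
    (L := [(.f2, -j), (.f1, i), (.b, 1), (.f1, -i), (.f2, j), (.b, -1)])
    (by simp) (by simp) (by simp [hi, hj]) (by simp) (by simp) ?_ ?_
  · have hcount {g h : GenSym S.A} {n : ℤ} {e : Bool} :
        (powWord g n).countP (· = (h, e)) = if g = h ∧ decide (0 < n) = e then n.natAbs else 0 := by
      simp [powWord, List.countP_replicate]
    rintro f p (_ | _) (_ | _) <;>
      simp only [syllableWord, List.map_cons, List.map_nil, List.flatten_cons, List.flatten_nil,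
        List.countP_append, List.countP_nil, hcount] <;>
      grind
  · rw [wordElt_syllableWord]
    simp only [List.map_cons, List.map_nil, List.prod_cons, List.prod_nil]
    calc
      _ = gen S p₁ p₂ .f2 ^ (-j) * (gen S p₁ p₂ .f1 ^ i * gen S p₁ p₂ .b * gen S p₁ p₂ .f1 ^ (-i)) *
          gen S p₁ p₂ .f2 ^ j * (gen S p₁ p₂ .b)⁻¹ := by group
      _ = 1 := by rw [heq]; group

end Syllables

end SmallCancellation

open SmallCancellation in
theorem stmt_1_general (S : IndexedStructure) (p₁ p₂ : ℕ)
    (hbig₁ : 10 ^ 10 < p₁) (hbig₂ : 10 ^ 10 < p₂) (x : GA S p₁ p₂)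
    (h1 : chainProd 1000 x (gen S p₁ p₂ GenSym.f1) = 1)
    (h2 : chainProd 1000 x (gen S p₁ p₂ GenSym.f2) = 1)
    (hx1 : x ^ p₁ ≠ 1) (hx2 : x ^ p₂ ≠ 1) : x = gen S p₁ p₂ GenSym.b := by
  obtain ⟨i, hip, hi⟩ := exists_eq_zpow_mul_gen_b_mul_zpow_neg hbig₁ hbig₂ .f1 hx1 h1
  obtain ⟨j, hjp, hj⟩ := exists_eq_zpow_mul_gen_b_mul_zpow_neg hbig₁ hbig₂ .f2 hx2 h2
  rcases eq_or_ne i 0 with rfl | hi₀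
  · simpa using hi
  rcases eq_or_ne j 0 with rfl | hj₀
  · simpa using hj
  exact (f1_conj_b_ne_f2_conj_b hbig₁ hbig₂ hi₀ hj₀ hip hjp (hi.symm.trans hj)).elim

/-- Lemma `lem:uu`(2): in `G(𝒜)`, if `u_b(x,f₁) = e` and `u_b(x,f₂) = e`,
but `x^{p₁} ≠ e` and `x^{p₂} ≠ e`, then `x = b`. -/
theorem stmt_1 (S : IndexedStructure) (p₁ p₂ : ℕ)
    (hp₁ : p₁.Prime) (hp₂ : p₂.Prime) (hne : p₁ ≠ p₂)
    (hbig₁ : 10 ^ 10 < p₁) (hbig₂ : 10 ^ 10 < p₂)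
    (x : GA S p₁ p₂)
    (h1 : chainProd 1000 x (gen S p₁ p₂ GenSym.f1) = 1)
    (h2 : chainProd 1000 x (gen S p₁ p₂ GenSym.f2) = 1)
    (hx1 : x ^ p₁ ≠ 1) (hx2 : x ^ p₂ ≠ 1) :
    x = gen S p₁ p₂ GenSym.b :=
  stmt_1_general S p₁ p₂ hbig₁ hbig₂ x h1 h2 hx1 hx2
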